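/- arXiv:0811.4230 — 2 statements merged into one kernel-verified Lean document; each statement's English description precedes it below -/
import Mathlib

section
/- Let π : (X',T') → (X,T) be a principal factor map between topological dynamical systems, and assume h_top(T,X) < ∞. Then: (1) (X',T') is asymptotically h-expansive if and only if (X,T) is asymptotically h-expansive; (2) (X',T') is lowerable (respectively hereditarily lowerable, respectively HUL) if and only if (X,T) is lowerable (respectively hereditarily lowerable, respectively HUL). -/
open Filter Set Metric MeasureTheory
open scoped ENNReal Topology

noncomputable section

variable {X Y : Type*}

def IsSep [PseudoMetricSpace X] (T : X → X) (n : ℕ) (ε : ℝ) (E : Set X) : Prop :=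
  E.Pairwise fun x y => ∃ i < n, ε < dist (T^[i] x) (T^[i] y)

def sepMaxCard [PseudoMetricSpace X] (T : X → X) (n : ℕ) (ε : ℝ) (K : Set X) : ℝ≥0∞ :=
  ⨆ (E : Finset X) (_ : ↑E ⊆ K ∧ IsSep T n ε (↑E : Set X)), (E.card : ℝ≥0∞)

def sepEnt [PseudoMetricSpace X] (T : X → X) (ε : ℝ) (K : Set X) : EReal :=
  Filter.atTop.limsup fun n : ℕ => ENNReal.log (sepMaxCard T n ε K) / (n : EReal)

def subEnt [PseudoMetricSpace X] (T : X → X) (K : Set X) : EReal :=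
  ⨆ (ε : ℝ) (_ : 0 < ε), sepEnt T ε K

/-- `(X,T)` is lowerable. -/
def Lowerable [PseudoMetricSpace X] (T : X → X) : Prop :=
  ∀ h : EReal, 0 ≤ h → h ≤ subEnt T (univ : Set X) →
    ∃ K : Set X, K.Nonempty ∧ IsCompact K ∧ subEnt T K = h

/-- `(X,T)` is hereditarily lowerable. -/
def HerLowerable [PseudoMetricSpace X] (T : X → X) : Prop :=
  ∀ K : Set X, K.Nonempty → IsCompact K → ∀ h : EReal, 0 ≤ h → h ≤ subEnt T K →
    ∃ K' : Set X, K' ⊆ K ∧ K'.Nonempty ∧ IsCompact K' ∧ subEnt T K' = h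

/-- `(X,T)` is hereditarily uniformly lowerable: the lowering subset can moreover be chosen
with at most one limit (accumulation) point. -/
def HUL [PseudoMetricSpace X] (T : X → X) : Prop :=
  ∀ K : Set X, K.Nonempty → IsCompact K → ∀ h : EReal, 0 ≤ h → h ≤ subEnt T K →
    ∃ K' : Set X, K' ⊆ K ∧ K'.Nonempty ∧ IsCompact K' ∧ subEnt T K' = h ∧
      {x | AccPt x (𝓟 K')}.Subsingleton

/-- `Φ_ε(x) = {y : d(T^n x, T^n y) ≤ ε for all n ≥ 0}`. -/
def Phi [PseudoMetricSpace X] (T : X → X) (ε : ℝ) (x : X) : Set X :=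
  {y | ∀ n : ℕ, dist (T^[n] x) (T^[n] y) ≤ ε}

/-- `h*_T(ε) = sup_x h(T, Φ_ε(x))`. -/
def hStar [PseudoMetricSpace X] (T : X → X) (ε : ℝ) : EReal :=
  ⨆ x : X, subEnt T (Phi T ε x)

/-- `(X,T)` is asymptotically `h`-expansive: `h*_T(ε) → 0` as `ε → 0+`. -/
def AsympHExpansive [PseudoMetricSpace X] (T : X → X) : Prop :=
  Tendsto (fun ε : ℝ => hStar T ε) (𝓝[>] 0) (𝓝 (0 : EReal))

/-- `T^n` for `n : ℤ`, for a homeomorphism `T`. -/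
def iterZ [TopologicalSpace X] (T : X ≃ₜ X) : ℤ → X → X
  | Int.ofNat n => (⇑T)^[n]
  | Int.negSucc n => (⇑T.symm)^[n + 1]

/-- `T` is expansive with expansive constant `δ`. -/
def ExpansiveWith [MetricSpace X] (T : X ≃ₜ X) (δ : ℝ) : Prop :=
  ∀ x y : X, x ≠ y → ∃ n : ℤ, δ < dist (iterZ T n x) (iterZ T n y)

/-- `K ⪰ 𝒲` : `K` is contained in some member of the family `𝒲`. -/
def Refines (K : Set X) (W : Finset (Set X)) : Prop := ∃ A ∈ W, K ⊆ A

/-- The join `U ∨ V` of two finite covers. -/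
def covJoin (U V : Finset (Set X)) : Finset (Set X) :=
  letI := Classical.decEq (Set X)
  (U ×ˢ V).image fun p => p.1 ∩ p.2

/-- `dynCov T U n = U_0^{n-1} = ⋁_{i=0}^{n-1} T^{-i} U` (with `U_0^{-1} = {univ}`). -/
def dynCov (T : X → X) (U : Finset (Set X)) : ℕ → Finset (Set X)
  | 0 => {(univ : Set X)}
  | n + 1 =>
      letI := Classical.decEq (Set X)
      covJoin (dynCov T U n) (U.image fun A => T^[n] ⁻¹' A)

/-- `n_{T,U}(K)`: `0` if `K ⋠ U`; `+∞` if `T^i K ⪰ U` for all `i`; otherwise the largest `j`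
with `T^i K ⪰ U` for all `0 ≤ i ≤ j-1`. -/
def nTU (T : X → X) (U : Finset (Set X)) (K : Set X) : ℕ∞ :=
  ⨆ (j : ℕ) (_ : ∀ i < j, Refines (T^[i] '' K) U), (j : ℕ∞)

/-- `e^{-λ n}` for `n : ℕ∞`, valued in `ℝ≥0∞` (with the conventions `e^{-λ·∞} = 0` for `λ > 0`,
`= 1` for `λ = 0` and `= ∞` for `λ < 0`). -/
def expWeight (lam : ℝ) (n : ℕ∞) : ℝ≥0∞ :=
  if n = ⊤ then (if 0 < lam then 0 else if lam = 0 then 1 else ⊤)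
  else ENNReal.ofReal (Real.exp (-(lam * (n.toNat : ℝ))))

/-- `m_{T,U}(K,λ,k)`: the infimum of `∑_{E ∈ 𝓔} e^{-λ n_{T,U}(E)}` over all countable families
`𝓔` of subsets of `X` with `∪𝓔 ⊇ K` and `E ⪰ U_0^{k-1}` for every `E ∈ 𝓔`. -/
def mTU (T : X → X) (U : Finset (Set X)) (K : Set X) (lam : ℝ) (k : ℕ) : ℝ≥0∞ :=
  ⨅ (ℰ : Set (Set X)) (_ : ℰ.Countable ∧ K ⊆ ⋃₀ ℰ ∧ ∀ E ∈ ℰ, Refines E (dynCov T U k)),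
    ∑' E : ℰ, expWeight lam (nTU T U (E : Set X))

/-- `m_{T,U}(K,λ) = lim_{k→∞} m_{T,U}(K,λ,k)`; since `m_{T,U}(K,λ,k)` is nondecreasing in `k`,
the limit is the supremum. -/
def mTUlim (T : X → X) (U : Finset (Set X)) (K : Set X) (lam : ℝ) : ℝ≥0∞ :=
  ⨆ k : ℕ, mTU T U K lam k

/-- `h^B_U(T,K) = inf {λ : m_{T,U}(K,λ) = 0}`. -/
def hBU (T : X → X) (U : Finset (Set X)) (K : Set X) : EReal :=
  ⨅ (lam : ℝ) (_ : mTUlim T U K lam = 0), (lam : EReal)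

/-- The dimensional entropy `h^B(T,K) = sup_U h^B_U(T,K)`, supremum over finite open covers. -/
def hB [TopologicalSpace X] (T : X → X) (K : Set X) : EReal :=
  ⨆ (U : Finset (Set X)) (_ : (∀ A ∈ U, IsOpen A) ∧ ⋃₀ (↑U : Set (Set X)) = univ),
    hBU T U K

/-- `N(U,K)`: the minimal cardinality of a subfamily of `U` covering `K` (`0` for `K = ∅`,
`∞` if no subfamily covers `K`). -/
def covCard (U : Finset (Set X)) (K : Set X) : ℝ≥0∞ :=
  ⨅ (V : Finset (Set X)) (_ : V ⊆ U ∧ K ⊆ ⋃₀ (↑V : Set (Set X))), (V.card : ℝ≥0∞)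

/-- `h_U(T,K) = limsup_{n→∞} (1/n) log N(U_0^{n-1},K)`. -/
def hCov (T : X → X) (U : Finset (Set X)) (K : Set X) : EReal :=
  Filter.atTop.limsup fun n : ℕ => ENNReal.log (covCard (dynCov T U n) K) / (n : EReal)

/-- Topological entropy of a subset via open covers: `h(T,K) = sup_U h_U(T,K)`. -/
def hCovSup [TopologicalSpace X] (T : X → X) (K : Set X) : EReal :=
  ⨆ (U : Finset (Set X)) (_ : (∀ A ∈ U, IsOpen A) ∧ ⋃₀ (↑U : Set (Set X)) = univ),
    hCov T U K

/-- The atom of the (finite) partition `P` containing `x`. -/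
def atomAt (P : Finset (Set X)) (x : X) : Set X := ⋃₀ {A | A ∈ P ∧ x ∈ A}

/-- `P` is a finite Borel partition. -/
def IsFinPartition [MeasurableSpace X] (P : Finset (Set X)) : Prop :=
  (∀ A ∈ P, MeasurableSet A) ∧ ⋃₀ (↑P : Set (Set X)) = univ ∧
    (↑P : Set (Set X)).Pairwise fun A B => Disjoint A B

/-- The Shannon entropy `H_μ(P) = ∑_{A ∈ P} -μ(A) log μ(A)` of a finite partition. -/
def partEnt [MeasurableSpace X] (μ : Measure X) (P : Finset (Set X)) : ℝ :=
  ∑ A ∈ P, -((μ A).toReal * Real.log (μ A).toReal)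

/-- The measure-theoretic (Kolmogorov–Sinai) entropy `h_μ(T)`: the supremum over finite Borel
partitions `P` of `lim_n (1/n) H_μ(P_0^{n-1})`; by subadditivity this limit is the infimum. -/
def ksEntropy [MeasurableSpace X] (T : X → X) (μ : Measure X) : EReal :=
  ⨆ (P : Finset (Set X)) (_ : IsFinPartition P),
    ⨅ n : ℕ, ((partEnt μ (dynCov T P (n + 1)) / (n + 1) : ℝ) : EReal)

/-- `π` is a principal factor map from `(X,T)` to `(Y,S)` : `h_μ(T) = h_{πμ}(S)` for every
`T`-invariant Borel probability measure `μ`. -/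
def IsPrincipal [MeasurableSpace X] [MeasurableSpace Y] (T : X → X) (S : Y → Y)
    (π : X → Y) : Prop :=
  ∀ μ : Measure X, IsProbabilityMeasure μ → Measure.map T μ = μ →
    ksEntropy T μ = ksEntropy S (Measure.map π μ)

/-- The relative topological entropy `h_top(T,X|π) = sup_{y ∈ Y} h(T, π^{-1}(y))`. -/
def relEnt [PseudoMetricSpace X] (T : X → X) (π : X → Y) : EReal :=
  ⨆ y : Y, subEnt T (π ⁻¹' {y})

/-- The canonical conversion `EReal → ℝ≥0∞` (`⊥` and negative reals go to `0`). -/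
def erealToENNReal (x : EReal) : ℝ≥0∞ := if x = ⊤ then ⊤ else ENNReal.ofReal x.toReal


/-- growth bound -/
def GB [PseudoMetricSpace X] (T : X → X) (ε : ℝ) (K : Set X) (b : ℝ) : Prop :=
  ∃ C : ℝ, ∀ (n : ℕ) (E : Finset X), (↑E : Set X) ⊆ K → IsSep T n ε (↑E : Set X) →
    (E.card : ℝ) ≤ C * Real.exp (b * n)

theorem IsSep.mono_n [PseudoMetricSpace X] {T : X → X} {n m : ℕ} {ε : ℝ} {E : Set X}
    (h : IsSep T n ε E) (hnm : n ≤ m) : IsSep T m ε E := by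
  intro x hx y hy hxy
  obtain ⟨i, hi, h'⟩ := h hx hy hxy
  exact ⟨i, by omega, h'⟩

theorem IsSep.subset [PseudoMetricSpace X] {T : X → X} {n : ℕ} {ε : ℝ} {E F : Set X}
    (h : IsSep T n ε E) (hF : F ⊆ E) : IsSep T n ε F :=
  Set.Pairwise.mono hF h

/-- counting: a separated set covered by `N` non-separated pieces has at most `N` points -/
theorem sep_card_le [PseudoMetricSpace X] {T : X → X} {n : ℕ} {ε : ℝ} {E : Finset X}
    (h : IsSep T n ε (↑E : Set X)) {κ : Type*} (s : Finset κ) (f : X → κ)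
    (hf : ∀ x ∈ E, f x ∈ s)
    (hs : ∀ x ∈ E, ∀ y ∈ E, f x = f y → ∀ i < n, dist (T^[i] x) (T^[i] y) ≤ ε) :
    E.card ≤ s.card := by
  refine Finset.card_le_card_of_injOn f hf ?_
  intro x hx y hy hxy
  by_contra hne
  obtain ⟨i, hi, h'⟩ := h hx hy hne
  exact absurd (hs x hx y hy hxy i hi) (not_le.2 h')

theorem sep_bdd [PseudoMetricSpace X] [CompactSpace X] {T : X → X} (hT : Continuous T)
    (n : ℕ) {ε : ℝ} (hε : 0 < ε) :
    ∃ N : ℕ, ∀ E : Finset X, IsSep T n ε (↑E : Set X) → E.card ≤ N := by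
  classical
  have hop : ∀ x : X, {y : X | ∀ i < n, dist (T^[i] x) (T^[i] y) < ε / 2} ∈ 𝓝 x := by
    intro x
    have : ∀ i ∈ Finset.range n, ∀ᶠ y in 𝓝 x, dist (T^[i] x) (T^[i] y) < ε / 2 := by
      intro i _
      have hc : Continuous fun y => dist (T^[i] x) (T^[i] y) :=
        continuous_const.dist (hT.iterate i)
      have := hc.tendsto x
      simp only [dist_self] at this
      exact this.eventually (gt_mem_nhds (by positivity))
    have h2 := (Finset.eventually_all (Finset.range n)).2 this
    filter_upwards [h2] with y hy i hi
    exact hy i (Finset.mem_range.2 hi)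
  obtain ⟨t, -, ht⟩ := isCompact_univ.elim_nhds_subcover _ (fun x _ => hop x)
  refine ⟨t.card, fun E hE => ?_⟩
  have : ∀ x : X, ∃ c ∈ t, ∀ i < n, dist (T^[i] c) (T^[i] x) < ε / 2 := by
    intro x
    have := ht (mem_univ x)
    simpa using this
  choose f hf hf' using this
  refine sep_card_le hE t f (fun x _ => hf x) ?_
  intro x _ y _ hxy i hi
  have h1 := hf' x i hi
  have h2 := hf' y i hi
  rw [← hxy] at h2
  have := dist_triangle_left (T^[i] x) (T^[i] y) (T^[i] (f x))
  linarith

/-- maximal separated sets are spanning -/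
theorem exists_span [PseudoMetricSpace X] {T : X → X} {n : ℕ} {ε : ℝ} (hε : 0 ≤ ε) {K : Set X} {N : ℝ}
    (hN : ∀ E : Finset X, (↑E : Set X) ⊆ K → IsSep T n ε (↑E : Set X) → (E.card : ℝ) ≤ N) :
    ∃ E : Finset X, (↑E : Set X) ⊆ K ∧ (E.card : ℝ) ≤ N ∧
      ∀ x ∈ K, ∃ e ∈ E, ∀ i < n, dist (T^[i] x) (T^[i] e) ≤ ε := by
  classical
  let P : ℕ → Prop := fun k => ∃ E : Finset X, (↑E : Set X) ⊆ K ∧ IsSep T n ε (↑E : Set X) ∧ E.card = k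
  have h0 : P 0 := ⟨∅, by simp, by simp [IsSep], rfl⟩
  have hb : ∀ k, P k → k ≤ ⌊N⌋₊ := by
    rintro k ⟨E, h1, h2, rfl⟩
    exact Nat.le_floor (hN E h1 h2)
  obtain ⟨E, hEK, hE, hEc⟩ := Nat.findGreatest_spec (P := P) (Nat.zero_le ⌊N⌋₊) h0
  refine ⟨E, hEK, hN E hEK hE, ?_⟩
  intro x hx
  by_contra hcon
  push Not at hcon
  have hxE : x ∉ E := by
    intro hxE
    obtain ⟨i, _, h⟩ := hcon x hxE
    simp at h
    linarith
  have hsep : IsSep T n ε (↑(insert x E) : Set X) := by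
    rw [Finset.coe_insert]
    refine (Set.pairwise_insert_of_notMem (by simpa using hxE)).2 ⟨hE, ?_⟩
    intro e he
    obtain ⟨i, hi, h⟩ := hcon e he
    exact ⟨⟨i, hi, h⟩, ⟨i, hi, by rwa [dist_comm]⟩⟩
  have hP : P (E.card + 1) := ⟨insert x E, by
    rw [Finset.coe_insert]; exact Set.insert_subset hx hEK, hsep, by
    rw [Finset.card_insert_of_notMem hxE]⟩
  have := Nat.le_findGreatest (hb _ hP) hP
  omega

theorem exp_eventually {b b' C : ℝ} (h : b < b') :
    ∀ᶠ n : ℕ in atTop, C * Real.exp (b * n) ≤ Real.exp (b' * n) := by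
  have h1 : Tendsto (fun n : ℕ => Real.exp ((b' - b) * n)) atTop atTop :=
    Real.tendsto_exp_atTop.comp
      (tendsto_natCast_atTop_atTop.const_mul_atTop (sub_pos.2 h))
  filter_upwards [h1.eventually_ge_atTop C] with n hn
  have : Real.exp (b' * n) = Real.exp ((b' - b) * n) * Real.exp (b * n) := by
    rw [← Real.exp_add]; ring_nf
  rw [this]
  exact mul_le_mul_of_nonneg_right hn (Real.exp_pos _).le

theorem sepMaxCard_le [PseudoMetricSpace X] {T : X → X} {n : ℕ} {ε : ℝ} {K : Set X} {N : ℝ}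
    (hN : ∀ E : Finset X, (↑E : Set X) ⊆ K → IsSep T n ε (↑E : Set X) → (E.card : ℝ) ≤ N) :
    sepMaxCard T n ε K ≤ ENNReal.ofReal N := by
  refine iSup₂_le fun E hE => ?_
  rw [← ENNReal.ofReal_natCast]
  exact ENNReal.ofReal_le_ofReal (hN E hE.1 hE.2)

theorem le_sepMaxCard [PseudoMetricSpace X] {T : X → X} {n : ℕ} {ε : ℝ} {K : Set X} {N : ℝ}
    (hN0 : 0 ≤ N) (hN : sepMaxCard T n ε K ≤ ENNReal.ofReal N)
    (E : Finset X) (h1 : (↑E : Set X) ⊆ K) (h2 : IsSep T n ε (↑E : Set X)) : (E.card : ℝ) ≤ N := by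
  have h3 : (E.card : ℝ≥0∞) ≤ sepMaxCard T n ε K :=
    le_iSup₂ (f := fun (E : Finset X) (_ : ↑E ⊆ K ∧ IsSep T n ε (↑E : Set X)) => (E.card : ℝ≥0∞))
      E ⟨h1, h2⟩
  have h4 := h3.trans hN
  rw [← ENNReal.ofReal_natCast] at h4
  exact (ENNReal.ofReal_le_ofReal_iff hN0).1 h4

theorem log_ofReal_exp (x : ℝ) : ENNReal.log (ENNReal.ofReal (Real.exp x)) = (x : EReal) := by
  rw [ENNReal.log_ofReal, if_neg (not_le.2 (Real.exp_pos x)), Real.log_exp]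

theorem sepEnt_le_of_GB [PseudoMetricSpace X] {T : X → X} {ε : ℝ} {K : Set X} {b : ℝ}
    (h : GB T ε K b) : sepEnt T ε K ≤ (b : EReal) := by
  rw [← EReal.le_of_forall_lt_iff_le]
  intro b' hb'
  have hb' : b < b' := by exact_mod_cast hb'
  obtain ⟨C, hC⟩ := h
  refine limsup_le_of_le (by isBoundedDefault) ?_
  filter_upwards [exp_eventually (C := C) hb', eventually_gt_atTop 0] with n hn hn0
  have h1 : sepMaxCard T n ε K ≤ ENNReal.ofReal (Real.exp (b' * n)) :=
    sepMaxCard_le fun E h1 h2 => (hC n E h1 h2).trans hn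
  have h2 := ENNReal.log_le_log h1
  rw [log_ofReal_exp] at h2
  rw [EReal.div_le_iff_le_mul (by exact_mod_cast hn0) (EReal.natCast_ne_top n)]
  refine h2.trans (le_of_eq ?_)
  rw [mul_comm]
  push_cast
  rfl

theorem GB_of_sepEnt_lt [PseudoMetricSpace X] [CompactSpace X] {T : X → X} (hT : Continuous T)
    {ε : ℝ} (hε : 0 < ε) {K : Set X} {b : ℝ}
    (h : sepEnt T ε K < (b : EReal)) : GB T ε K b := by
  have h1 := eventually_lt_of_limsup_lt h (by isBoundedDefault)
  obtain ⟨n0, hn0⟩ := eventually_atTop.1 h1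
  obtain ⟨N, hN⟩ := sep_bdd hT (n0 + 1) hε
  refine ⟨1 + N * Real.exp (|b| * (n0 + 1)), fun n E hEK hE => ?_⟩
  have hpos : 0 ≤ N * Real.exp (|b| * (n0 + 1)) := by positivity
  by_cases hn : n ≤ n0 + 1
  · have h2 := hN E (hE.mono_n hn)
    have h3 : (1 : ℝ) ≤ Real.exp (|b| * (n0 + 1)) * Real.exp (b * n) := by
      rw [← Real.exp_add]
      apply Real.one_le_exp
      have : |b| * n ≤ |b| * (n0 + 1) := by
        apply mul_le_mul_of_nonneg_left _ (abs_nonneg _)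
        exact_mod_cast hn
      have h5 : -|b| * n ≤ b * n :=
        mul_le_mul_of_nonneg_right (neg_abs_le b) (Nat.cast_nonneg _)
      linarith
    have h4 : (E.card : ℝ) ≤ N := by exact_mod_cast h2
    have h6 : (N : ℝ) * 1 ≤ N * (Real.exp (|b| * (n0 + 1)) * Real.exp (b * n)) :=
      mul_le_mul_of_nonneg_left h3 (Nat.cast_nonneg _)
    have := Real.exp_pos (b * n)
    nlinarith
  · push Not at hn
    have h2 := (hn0 n (by omega)).le
    rw [EReal.div_le_iff_le_mul (by exact_mod_cast (by omega : 0 < n)) (EReal.natCast_ne_top n)] at h2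
    have h3 : (n : EReal) * (b : EReal) = ((b * n : ℝ) : EReal) := by
      rw [mul_comm]; push_cast; rfl
    rw [h3, ← log_ofReal_exp] at h2
    have h4 := ENNReal.log_strictMono.le_iff_le.1 h2
    have h5 := le_sepMaxCard (Real.exp_pos _).le h4 E hEK hE
    have := Real.exp_pos (b * n)
    nlinarith

theorem GB.mono_b [PseudoMetricSpace X] {T : X → X} {ε : ℝ} {K : Set X} {b b' : ℝ}
    (h : GB T ε K b) (hb : b ≤ b') : GB T ε K b' := by
  obtain ⟨C, hC⟩ := h
  refine ⟨max C 0, fun n E h1 h2 => (hC n E h1 h2).trans ?_⟩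
  have : Real.exp (b * n) ≤ Real.exp (b' * n) :=
    Real.exp_le_exp.2 (mul_le_mul_of_nonneg_right hb (Nat.cast_nonneg _))
  exact mul_le_mul (le_max_left _ _) this (Real.exp_pos _).le (le_max_right _ _)

theorem GB.mono [PseudoMetricSpace X] {T : X → X} {ε ε' : ℝ} {K K' : Set X} {b : ℝ}
    (h : GB T ε K b) (hε : ε ≤ ε') (hK : K' ⊆ K) : GB T ε' K' b := by
  obtain ⟨C, hC⟩ := h
  refine ⟨C, fun n E h1 h2 => hC n E (h1.trans hK) ?_⟩
  intro x hx y hy hxy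
  obtain ⟨i, hi, h⟩ := h2 hx hy hxy
  exact ⟨i, hi, hε.trans_lt h⟩

theorem GB.union [PseudoMetricSpace X] {T : X → X} {ε : ℝ} {K K' : Set X} {b : ℝ}
    (h : GB T ε K b) (h' : GB T ε K' b) : GB T ε (K ∪ K') b := by
  classical
  obtain ⟨C, hC⟩ := h
  obtain ⟨C', hC'⟩ := h'
  refine ⟨C + C', fun n E h1 h2 => ?_⟩
  have e1 := hC n (E.filter (· ∈ K)) (by intro x; simp) (h2.subset (by exact_mod_cast Finset.filter_subset _ _))
  have e2 := hC' n (E.filter (· ∉ K)) (by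
    intro x hx
    simp only [Finset.coe_filter, mem_ofPred_eq] at hx
    exact (h1 hx.1).resolve_left hx.2) (h2.subset (by exact_mod_cast Finset.filter_subset _ _))
  have := Finset.card_filter_add_card_filter_not (s := E) (· ∈ K)
  rw [← this]
  push_cast
  linarith

theorem GB_finite [PseudoMetricSpace X] {T : X → X} {ε : ℝ} {K : Set X} (hK : K.Finite) {b : ℝ}
    (hb : 0 ≤ b) : GB T ε K b := by
  refine ⟨hK.toFinset.card, fun n E h1 _ => ?_⟩
  have h2 : E.card ≤ hK.toFinset.card := Finset.card_le_card (by
    intro x hx; simpa using h1 hx)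
  have h3 : (1 : ℝ) ≤ Real.exp (b * n) := Real.one_le_exp (by positivity)
  calc (E.card : ℝ) ≤ hK.toFinset.card := by exact_mod_cast h2
    _ = hK.toFinset.card * 1 := by ring
    _ ≤ _ := mul_le_mul_of_nonneg_left h3 (Nat.cast_nonneg _)

theorem GB_empty [PseudoMetricSpace X] {T : X → X} {ε : ℝ} {b : ℝ} : GB T ε (∅ : Set X) b := by
  refine ⟨0, fun n E h1 _ => ?_⟩
  have : E = ∅ := by
    apply Finset.eq_empty_of_forall_notMem
    intro x hx; exact h1 hx
  simp [this]

theorem subEnt_le_iff [PseudoMetricSpace X] [CompactSpace X] {T : X → X} (hT : Continuous T)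
    {K : Set X} {a : ℝ} :
    subEnt T K ≤ (a : EReal) ↔ ∀ ε : ℝ, 0 < ε → ∀ b : ℝ, a < b → GB T ε K b := by
  constructor
  · intro h ε hε b hb
    apply GB_of_sepEnt_lt hT hε
    refine lt_of_le_of_lt ?_ (EReal.coe_lt_coe hb)
    exact (le_iSup₂ (f := fun (ε : ℝ) (_ : 0 < ε) => sepEnt T ε K) ε hε).trans h
  · intro h
    refine iSup₂_le fun ε hε => ?_
    rw [← EReal.le_of_forall_lt_iff_le]
    intro b hb
    exact sepEnt_le_of_GB (h ε hε b (by exact_mod_cast hb))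

theorem ereal_le_of_real {x y : EReal} (h : ∀ a : ℝ, y ≤ (a : EReal) → x ≤ (a : EReal)) : x ≤ y := by
  rw [← EReal.le_of_forall_lt_iff_le]
  intro z hz
  exact h z hz.le

theorem subEnt_mono [PseudoMetricSpace X] [CompactSpace X] {T : X → X} (hT : Continuous T)
    {K K' : Set X} (h : K ⊆ K') : subEnt T K ≤ subEnt T K' := by
  refine ereal_le_of_real fun a ha => ?_
  rw [subEnt_le_iff hT] at ha ⊢
  intro ε hε b hb
  exact (ha ε hε b hb).mono le_rfl h

theorem subEnt_union_le [PseudoMetricSpace X] [CompactSpace X] {T : X → X} (hT : Continuous T)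
    {K K' : Set X} : subEnt T (K ∪ K') ≤ max (subEnt T K) (subEnt T K') := by
  refine ereal_le_of_real fun a ha => ?_
  obtain ⟨h1, h2⟩ := max_le_iff.1 ha
  rw [subEnt_le_iff hT] at h1 h2 ⊢
  intro ε hε b hb
  exact (h1 ε hε b hb).union (h2 ε hε b hb)

theorem subEnt_finite_le [PseudoMetricSpace X] [CompactSpace X] {T : X → X} (hT : Continuous T)
    {K : Set X} (hK : K.Finite) : subEnt T K ≤ 0 := by
  have := (subEnt_le_iff hT (K := K) (a := 0)).2 fun ε _ b hb => GB_finite hK hb.le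
  simpa using this

theorem subEnt_empty [PseudoMetricSpace X] [CompactSpace X] {T : X → X} (hT : Continuous T) :
    subEnt T (∅ : Set X) = ⊥ := by
  rw [← le_bot_iff]
  refine ereal_le_of_real fun a _ => ?_
  rw [subEnt_le_iff hT]
  intro ε _ b _
  exact GB_empty

theorem GB_nonneg [PseudoMetricSpace X] {T : X → X} {ε : ℝ} {K : Set X} (hK : K.Nonempty) {b : ℝ}
    (h : GB T ε K b) : 0 ≤ b := by
  by_contra hb
  push Not at hb
  obtain ⟨C, hC⟩ := h
  obtain ⟨x, hx⟩ := hK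
  have h1 : ∀ n : ℕ, (1 : ℝ) ≤ C * Real.exp (b * n) := by
    intro n
    have := hC n {x} (by simpa using hx) (by simp [IsSep])
    simpa using this
  have h2 : Tendsto (fun n : ℕ => C * Real.exp (b * n)) atTop (𝓝 (C * 0)) := by
    refine Tendsto.const_mul C (Real.tendsto_exp_atBot.comp ?_)
    exact tendsto_natCast_atTop_atTop.const_mul_atTop_of_neg hb
  have := ge_of_tendsto' h2 h1
  simp at this
  linarith

theorem subEnt_nonneg [PseudoMetricSpace X] [CompactSpace X] {T : X → X} (hT : Continuous T)
    {K : Set X} (hK : K.Nonempty) : 0 ≤ subEnt T K := by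
  refine ereal_le_of_real fun a ha => ?_
  rw [subEnt_le_iff hT] at ha
  have : 0 ≤ a := le_of_forall_gt_imp_ge_of_dense fun b hb => GB_nonneg hK (ha 1 one_pos b hb)
  exact_mod_cast this

theorem subEnt_singleton [PseudoMetricSpace X] [CompactSpace X] {T : X → X} (hT : Continuous T)
    (x : X) : subEnt T ({x} : Set X) = 0 :=
  le_antisymm (subEnt_finite_le hT (finite_singleton x)) (subEnt_nonneg hT (singleton_nonempty x))

theorem sep_shift [PseudoMetricSpace X] {T : X → X} {n w : ℕ} {ε : ℝ} (hε : 0 ≤ ε) [DecidableEq X]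
    {A : Finset X} (hA : IsSep T n ε (↑A : Set X))
    (h : ∀ x ∈ A, ∀ x' ∈ A, ∀ t < w, dist (T^[t] x) (T^[t] x') ≤ ε) :
    IsSep T (n - w) ε (↑(A.image T^[w]) : Set X) ∧ (A.image T^[w]).card = A.card := by
  have key : ∀ x ∈ A, ∀ x' ∈ A, x ≠ x' →
      ∃ i < n - w, ε < dist (T^[i] (T^[w] x)) (T^[i] (T^[w] x')) := by
    intro x hx x' hx' hne
    obtain ⟨i, hi, hd⟩ := hA hx hx' hne
    have hiw : w ≤ i := by
      by_contra hlt
      push Not at hlt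
      exact absurd (h x hx x' hx' i hlt) (not_le.2 hd)
    refine ⟨i - w, by omega, ?_⟩
    rw [← Function.iterate_add_apply, ← Function.iterate_add_apply, Nat.sub_add_cancel hiw]
    exact hd
  constructor
  · intro u hu v hv huv
    simp only [Finset.coe_image, Set.mem_image, Finset.mem_coe] at hu hv
    obtain ⟨x, hx, rfl⟩ := hu
    obtain ⟨x', hx', rfl⟩ := hv
    exact key x hx x' hx' (fun h => huv (by rw [h]))
  · apply Finset.card_image_of_injOn
    intro x hx x' hx' hxx
    by_contra hne
    obtain ⟨i, _, hd⟩ := key x hx x' hx' hne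
    rw [hxx, dist_self] at hd
    linarith

theorem bowen_local [TopologicalSpace Y] [CompactSpace Y] [PseudoMetricSpace X] [CompactSpace X]
    {T : X → X} (hT : Continuous T) (F : ℕ → Set (Y × X)) (hFc : ∀ k, IsClosed (F k))
    (hFa : Antitone F) {b b' δ κ : ℝ} (hδ : 0 < δ) (hκ : 0 < κ) (hb' : b' < b)
    (y : Y) (hyp : GB T δ {x | ∀ k, (y, x) ∈ F k} b') :
    ∃ (m k : ℕ) (E : Finset X) (W : Set Y), 1 ≤ m ∧ W ∈ 𝓝 y ∧
      (E.card : ℝ) ≤ κ * Real.exp (b * m) ∧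
      ∀ y' ∈ W, ∀ x, (y', x) ∈ F k → ∃ e ∈ E, ∀ i < m, dist (T^[i] x) (T^[i] e) < 2 * δ := by
  obtain ⟨C, hC⟩ := hyp
  obtain ⟨m, hm1, hm⟩ := ((eventually_ge_atTop 1).and
    (exp_eventually (C := C / κ) hb')).exists
  have hm' : C * Real.exp (b' * m) ≤ κ * Real.exp (b * m) := by
    have := mul_le_mul_of_nonneg_left hm hκ.le
    have e : κ * (C / κ * Real.exp (b' * m)) = C * Real.exp (b' * m) := by field_simp
    rwa [e] at this
  obtain ⟨E, hEK, hEc, hEs⟩ := exists_span hδ.le (hC m)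
  set O : Set X := ⋃ e ∈ E, ⋂ i ∈ Finset.range m, {x | dist (T^[i] x) (T^[i] e) < 2 * δ} with hO
  have hOo : IsOpen O := by
    refine isOpen_biUnion fun e _ => ?_
    refine isOpen_biInter_finset fun i _ => ?_
    exact isOpen_lt ((hT.iterate i).dist continuous_const) continuous_const
  have hOm : ∀ x, x ∈ O ↔ ∃ e ∈ E, ∀ i < m, dist (T^[i] x) (T^[i] e) < 2 * δ := by
    intro x
    simp [hO]
  let Z : ℕ → Set Y := fun k => Prod.fst '' (F k ∩ (Prod.snd ⁻¹' Oᶜ))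
  have hZc : ∀ k, IsClosed (Z k) := by
    intro k
    apply isClosedMap_fst_of_compactSpace
    exact (hFc k).inter (hOo.isClosed_compl.preimage continuous_snd)
  have hZ : ∃ k, y ∉ Z k := by
    by_contra hall
    push Not at hall
    have hne : (⋂ k, {x : X | (y, x) ∈ F k ∧ x ∉ O}).Nonempty := by
      apply IsCompact.nonempty_iInter_of_sequence_nonempty_isCompact_isClosed
      · intro k x hx
        exact ⟨hFa (Nat.le_succ k) hx.1, hx.2⟩
      · intro k
        obtain ⟨⟨y', x⟩, ⟨h1, h2⟩, rfl⟩ := hall k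
        exact ⟨x, h1, h2⟩
      · apply IsClosed.isCompact
        exact ((hFc 0).preimage (by fun_prop : Continuous fun x : X => (y, x))).inter hOo.isClosed_compl
      · intro k
        exact ((hFc k).preimage (by fun_prop : Continuous fun x : X => (y, x))).inter hOo.isClosed_compl
    obtain ⟨x, hx⟩ := hne
    simp only [mem_iInter, mem_ofPred_eq] at hx
    obtain ⟨e, he, h⟩ := hEs x (fun k => (hx k).1)
    exact (hx 0).2 ((hOm x).2 ⟨e, he, fun i hi => (h i hi).trans_lt (by linarith)⟩)
  obtain ⟨k, hk⟩ := hZ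
  refine ⟨m, k, E, (Z k)ᶜ, hm1, (hZc k).isOpen_compl.mem_nhds hk, hEc.trans hm', ?_⟩
  intro y' hy' x hx
  rw [← hOm]
  by_contra hxO
  exact hy' ⟨(y', x), ⟨hx, hxO⟩, rfl⟩

theorem bowen_lemma [TopologicalSpace Y] [CompactSpace Y] [PseudoMetricSpace X] [CompactSpace X]
    {T : X → X} (hT : Continuous T) (S : Y → Y) (F : ℕ → Set (Y × X)) (hFc : ∀ k, IsClosed (F k))
    (hFa : Antitone F) (V : Set X) {b b' δ : ℝ} (hδ : 0 < δ) (hb : 0 < b) (hb' : b' < b)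
    (hyp : ∀ y, GB T δ {x | ∀ k, (y, x) ∈ F k} b') :
    ∃ (C : ℝ) (k : ℕ), ∀ (n : ℕ) (y : Y) (A : Finset X), IsSep T n (4 * δ) (↑A : Set X) →
      (∀ x ∈ A, ∀ t, t + k < n → T^[t] x ∈ V ∨ (S^[t] y, T^[t] x) ∈ F k) →
      (∀ x ∈ A, ∀ x' ∈ A, ∀ t < n, T^[t] x ∈ V → T^[t] x' ∈ V →
        dist (T^[t] x) (T^[t] x') ≤ 4 * δ) →
      (A.card : ℝ) ≤ C * Real.exp (b * n) := by
  classical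
  have hr1 : Real.exp (-b) < 1 := by rw [Real.exp_lt_one_iff]; linarith
  set r := Real.exp (-b) with hr
  have hr0 : 0 < r := Real.exp_pos _
  set κ : ℝ := (1 - r) / 2 with hκ
  have hκ0 : 0 < κ := by rw [hκ]; linarith
  have hloc := fun y => bowen_local hT F hFc hFa hδ hκ0 hb' y (hyp y)
  choose m k E W hm hW hE hcov using hloc
  obtain ⟨t, -, ht⟩ := isCompact_univ.elim_nhds_subcover W (fun y _ => hW y)
  set k0 := t.sup k with hk0
  set M := t.sup m with hM
  have hglob : ∀ y, ∃ (m : ℕ) (E : Finset X), 1 ≤ m ∧ m ≤ M ∧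
      (E.card : ℝ) ≤ κ * Real.exp (b * m) ∧
      ∀ x, (y, x) ∈ F k0 → ∃ e ∈ E, ∀ i < m, dist (T^[i] x) (T^[i] e) < 2 * δ := by
    intro y
    have := ht (mem_univ y)
    simp only [mem_iUnion] at this
    obtain ⟨c, hc, hyc⟩ := this
    exact ⟨m c, E c, hm c, Finset.le_sup hc, hE c,
      fun x hx => hcov c y hyc x (hFa (Finset.le_sup hc) hx)⟩
  choose m' E' hm1 hmM hE' hcov' using hglob
  obtain ⟨N, hN⟩ := sep_bdd hT (M + k0 + 1) (by positivity : 0 < 4 * δ)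
  refine ⟨2 * N, k0, ?_⟩
  intro n
  induction n using Nat.strong_induction_on with
  | _ n ih =>
  intro y A hA hAF hAV
  have hexp1 : (1 : ℝ) ≤ Real.exp (b * n) := Real.one_le_exp (by positivity)
  have hN0 : (0 : ℝ) ≤ N := Nat.cast_nonneg _
  by_cases hn : n ≤ M + k0 + 1
  · have h1 := hN A (hA.mono_n hn)
    have h2 : (A.card : ℝ) ≤ N := by exact_mod_cast h1
    nlinarith
  push Not at hn
  set N0 := M + k0 + 1 with hN0d
  -- waiting time
  let w : X → ℕ := fun x =>
    if h : ∃ t, T^[t] x ∉ V then min (Nat.find h) (n - N0) else n - N0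
  have hwle : ∀ x, w x ≤ n - N0 := by
    intro x
    simp only [w]
    split_ifs
    · exact min_le_right _ _
    · exact le_rfl
  have hwV : ∀ x, ∀ t < w x, T^[t] x ∈ V := by
    intro x t ht
    simp only [w] at ht
    split_ifs at ht with h
    · by_contra hh
      have := Nat.find_min' h hh
      have h3 := lt_of_lt_of_le ht (min_le_left _ _)
      omega
    · push Not at h
      exact h t
  have hwn : ∀ x, w x < n - N0 → T^[w x] x ∉ V := by
    intro x hx
    simp only [w] at hx ⊢
    split_ifs at hx ⊢ with h
    · have : Nat.find h ≤ n - N0 := by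
        by_contra hlt
        push Not at hlt
        rw [min_eq_right hlt.le] at hx
        omega
      rw [min_eq_left this]
      exact Nat.find_spec h
    · omega
  have hcard : A.card = ∑ j ∈ Finset.range (n - N0 + 1), (A.filter (fun x => w x = j)).card :=
    Finset.card_eq_sum_card_fiberwise (fun x _ => by
      simp only [Finset.coe_range, mem_Iio]
      have := hwle x
      omega)
  have hlast : ((A.filter (fun x => w x = n - N0)).card : ℝ) ≤ N := by
    have h4 : (0 : ℝ) ≤ 4 * δ := by positivity
    obtain ⟨h1, h2⟩ := sep_shift (w := n - N0) h4 (hA.subset (by exact_mod_cast Finset.filter_subset (fun x => w x = n - N0) A)) (by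
      intro x hx x' hx' t ht
      rw [Finset.mem_filter] at hx hx'
      exact hAV x hx.1 x' hx'.1 t (by omega) (hwV x t (by rw [hx.2]; exact ht))
        (hwV x' t (by rw [hx'.2]; exact ht)))
    rw [← h2]
    have := hN _ (h1.mono_n (by omega))
    exact_mod_cast this
  have hmid : ∀ j ∈ Finset.range (n - N0), ((A.filter (fun x => w x = j)).card : ℝ) ≤
      κ * (2 * N) * Real.exp (b * n) * r ^ j := by
    intro j hj
    rw [Finset.mem_range] at hj
    set y' := S^[j] y with hy'
    have hFj : ∀ x ∈ A.filter (fun x => w x = j), ∃ e ∈ E' y', ∀ i < m' y',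
        dist (T^[i] (T^[j] x)) (T^[i] e) < 2 * δ := by
      intro x hx
      rw [Finset.mem_filter] at hx
      apply hcov' y'
      have h1 := hwn x (by omega)
      rw [hx.2] at h1
      exact (hAF x hx.1 j (by omega)).resolve_left h1
    have hsub : A.filter (fun x => w x = j) ⊆ (E' y').biUnion fun e =>
        (A.filter (fun x => w x = j)).filter (fun x => ∀ i < m' y',
          dist (T^[i] (T^[j] x)) (T^[i] e) < 2 * δ) := by
      intro x hx
      obtain ⟨e, he, h⟩ := hFj x hx
      rw [Finset.mem_biUnion]
      exact ⟨e, he, Finset.mem_filter.2 ⟨hx, h⟩⟩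
    have hpiece : ∀ e ∈ E' y', (((A.filter (fun x => w x = j)).filter (fun x => ∀ i < m' y',
          dist (T^[i] (T^[j] x)) (T^[i] e) < 2 * δ)).card : ℝ) ≤
          2 * N * Real.exp (b * ((n - (j + m' y') : ℕ) : ℝ)) := by
      intro e _
      set B := (A.filter (fun x => w x = j)).filter (fun x => ∀ i < m' y',
          dist (T^[i] (T^[j] x)) (T^[i] e) < 2 * δ) with hB
      have hBA : ∀ x ∈ B, x ∈ A ∧ w x = j ∧ ∀ i < m' y',
          dist (T^[i] (T^[j] x)) (T^[i] e) < 2 * δ := by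
        intro x hx
        rw [hB, Finset.mem_filter, Finset.mem_filter] at hx
        exact ⟨hx.1.1, hx.1.2, hx.2⟩
      have h4 : (0 : ℝ) ≤ 4 * δ := by positivity
      obtain ⟨h1, h2⟩ := sep_shift (w := j + m' y') h4 (hA.subset (F := (↑B : Set X)) (fun x hx => (hBA x hx).1)) (by
        intro x hx x' hx' t ht
        obtain ⟨a1, a2, a3⟩ := hBA x hx
        obtain ⟨c1, c2, c3⟩ := hBA x' hx'
        by_cases htj : t < j
        · exact hAV x a1 x' c1 t (by omega) (hwV x t (by omega)) (hwV x' t (by omega))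
        · push Not at htj
          have d1 := a3 (t - j) (by omega)
          have d2 := c3 (t - j) (by omega)
          rw [← Function.iterate_add_apply, Nat.sub_add_cancel htj] at d1 d2
          have := dist_triangle_right (T^[t] x) (T^[t] x') (T^[t - j] e)
          linarith)
      rw [← h2]
      have hm1' := hm1 y'
      have hmM' := hmM y'
      refine ih (n - (j + m' y')) (by omega) (S^[j + m' y'] y) _ h1 ?_ ?_
      · intro u hu s hs
        rw [Finset.mem_image] at hu
        obtain ⟨x, hx, rfl⟩ := hu
        have := hAF x (hBA x hx).1 (s + (j + m' y')) (by omega)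
        rwa [Function.iterate_add_apply T s, Function.iterate_add_apply S s] at this
      · intro u hu u' hu' s hs
        rw [Finset.mem_image] at hu hu'
        obtain ⟨x, hx, rfl⟩ := hu
        obtain ⟨x', hx', rfl⟩ := hu'
        have := hAV x (hBA x hx).1 x' (hBA x' hx').1 (s + (j + m' y')) (by omega)
        rwa [Function.iterate_add_apply T s, Function.iterate_add_apply T s] at this
    have h1 : ((A.filter (fun x => w x = j)).card : ℝ) ≤ ∑ e ∈ E' y',
        2 * N * Real.exp (b * ((n - (j + m' y') : ℕ) : ℝ)) := by
      have h2 := (Finset.card_le_card hsub).trans Finset.card_biUnion_le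
      have h3 : ((A.filter (fun x => w x = j)).card : ℝ) ≤ ∑ e ∈ E' y', (((A.filter (fun x => w x = j)).filter (fun x => ∀ i < m' y',
          dist (T^[i] (T^[j] x)) (T^[i] e) < 2 * δ)).card : ℝ) := by exact_mod_cast h2
      exact h3.trans (Finset.sum_le_sum hpiece)
    rw [Finset.sum_const, nsmul_eq_mul] at h1
    have h2 := mul_le_mul_of_nonneg_right (hE' y')
      (by positivity : (0 : ℝ) ≤ 2 * N * Real.exp (b * ((n - (j + m' y') : ℕ) : ℝ)))
    refine (h1.trans h2).trans (le_of_eq ?_)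
    have hmM' := hmM y'
    have h3 : Real.exp (b * m' y') * Real.exp (b * ((n - (j + m' y') : ℕ) : ℝ)) =
        Real.exp (b * n) * r ^ j := by
      rw [hr, ← Real.exp_nat_mul, ← Real.exp_add, ← Real.exp_add]
      congr 1
      rw [Nat.cast_sub (by omega)]
      push_cast
      ring
    calc κ * Real.exp (b * m' y') * (2 * N * Real.exp (b * ((n - (j + m' y') : ℕ) : ℝ)))
        = κ * (2 * N) * (Real.exp (b * m' y') * Real.exp (b * ((n - (j + m' y') : ℕ) : ℝ))) := by ring
      _ = _ := by rw [h3]; ring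
  rw [hcard, Finset.sum_range_succ]
  push_cast
  have hsum := Finset.sum_le_sum hmid
  rw [← Finset.mul_sum] at hsum
  have hgeo : (1 - r) * ∑ i ∈ Finset.range (n - N0), r ^ i ≤ 1 := by
    rw [mul_neg_geom_sum]
    have : 0 ≤ r ^ (n - N0) := by positivity
    linarith
  have hfin : κ * (2 * N) * Real.exp (b * n) * ∑ i ∈ Finset.range (n - N0), r ^ i ≤
      N * Real.exp (b * n) := by
    have : κ * (2 * N) * Real.exp (b * n) * ∑ i ∈ Finset.range (n - N0), r ^ i =
      N * Real.exp (b * n) * ((1 - r) * ∑ i ∈ Finset.range (n - N0), r ^ i) := by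
      rw [hκ]; ring
    rw [this]
    exact mul_le_of_le_one_right (by positivity) hgeo
  nlinarith

theorem count_cover {α β : Type*} (A : Finset α) (E : Finset β) (R : α → β → Prop) {N : ℝ}
    (h1 : ∀ x ∈ A, ∃ e ∈ E, R x e)
    (h2 : ∀ e ∈ E, ∀ B : Finset α, B ⊆ A → (∀ x ∈ B, R x e) → (B.card : ℝ) ≤ N) :
    (A.card : ℝ) ≤ E.card * N := by
  classical
  have hsub : A ⊆ E.biUnion fun e => A.filter (fun x => R x e) := by
    intro x hx
    obtain ⟨e, he, h⟩ := h1 x hx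
    exact Finset.mem_biUnion.2 ⟨e, he, Finset.mem_filter.2 ⟨hx, h⟩⟩
  have h3 := (Finset.card_le_card hsub).trans Finset.card_biUnion_le
  have h4 : (A.card : ℝ) ≤ ∑ e ∈ E, ((A.filter (fun x => R x e)).card : ℝ) := by exact_mod_cast h3
  refine h4.trans ((Finset.sum_le_sum fun e he => h2 e he _ (Finset.filter_subset _ _) ?_).trans ?_)
  · intro x hx
    exact (Finset.mem_filter.1 hx).2
  · rw [Finset.sum_const, nsmul_eq_mul]

theorem star_uniform [PseudoMetricSpace X] [CompactSpace X] {T : X → X} (hT : Continuous T)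
    {V : Set X} (hV : IsOpen V) {ε b b' δ : ℝ} (hδ : 0 < δ) (hb : 0 < b) (hb' : b' < b)
    (hyp : ∀ z, GB T δ (Phi T ε z \ V) b') :
    ∃ C : ℝ, ∀ (n : ℕ) (z : X) (A : Finset X), IsSep T n (4 * δ) (↑A : Set X) →
      (∀ x ∈ A, ∀ t < n, dist (T^[t] z) (T^[t] x) ≤ ε) →
      (∀ x ∈ A, ∀ x' ∈ A, ∀ t < n, T^[t] x ∈ V → T^[t] x' ∈ V →
        dist (T^[t] x) (T^[t] x') ≤ 4 * δ) →
      (A.card : ℝ) ≤ C * Real.exp (b * n) := by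
  set F : ℕ → Set (X × X) :=
    fun k => {p : X × X | p.2 ∈ Vᶜ ∧ ∀ i ∈ Set.Iic k, dist (T^[i] p.1) (T^[i] p.2) ≤ ε} with hF
  have H1 : ∀ k, IsClosed (F k) := by
    intro k
    refine (hV.isClosed_compl.preimage continuous_snd).inter ?_
    have : {p : X × X | ∀ i ∈ Set.Iic k, dist (T^[i] p.1) (T^[i] p.2) ≤ ε} =
        ⋂ i ∈ Set.Iic k, {p : X × X | dist (T^[i] p.1) (T^[i] p.2) ≤ ε} := by
      ext p; simp
    change IsClosed {p : X × X | ∀ i ∈ Set.Iic k, dist (T^[i] p.1) (T^[i] p.2) ≤ ε}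
    rw [this]
    refine isClosed_biInter fun i _ => ?_
    exact isClosed_le (((hT.iterate i).comp continuous_fst).dist ((hT.iterate i).comp continuous_snd))
      continuous_const
  have H2 : Antitone F := by
    intro k k' hkk p hp
    exact ⟨hp.1, fun i hi => hp.2 i (le_trans hi hkk)⟩
  have H3 : ∀ y, GB T δ {x | ∀ k, (y, x) ∈ F k} b' := by
    intro y
    refine (hyp y).mono le_rfl ?_
    intro x hx
    exact ⟨fun n => (hx n).2 n (le_refl n), (hx 0).1⟩
  obtain ⟨C, k, h⟩ := bowen_lemma hT T F H1 H2 V hδ hb hb' H3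
  refine ⟨C, fun n z A hA hAz hAV => h n z A hA ?_ hAV⟩
  intro x hx t ht
  by_cases hV : T^[t] x ∈ V
  · exact Or.inl hV
  · refine Or.inr ⟨hV, fun i hi => ?_⟩
    simp only [Set.mem_Iic] at hi
    simp only
    rw [← Function.iterate_add_apply, ← Function.iterate_add_apply]
    exact hAz x hx _ (by omega)

theorem fiber_uniform {X' : Type*} [PseudoMetricSpace X'] [CompactSpace X'] [MetricSpace X] [CompactSpace X]
    {T' : X' → X'} {T : X → X} {π : X' → X} (hT' : Continuous T') (hπ : Continuous π)
    (hc : Function.Semiconj π T' T)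
    (hR : ∀ y : X, ∀ ε : ℝ, 0 < ε → ∀ b : ℝ, 0 < b → GB T' ε (π ⁻¹' {y}) b)
    {ε τ : ℝ} (hε : 0 < ε) (hτ : 0 < τ) :
    ∃ η : ℝ, 0 < η ∧ ∃ C : ℝ, ∀ (n : ℕ) (y : X) (A : Finset X'), IsSep T' n ε (↑A : Set X') →
      (∀ x ∈ A, ∀ t < n, dist (T^[t] y) (T^[t] (π x)) ≤ η) →
      (A.card : ℝ) ≤ C * Real.exp (τ * n) := by
  set F : ℕ → Set (X × X') :=
    (fun k : ℕ => {p : X × X' | dist p.1 (π p.2) ≤ 1 / ((k : ℝ) + 1)}) with hF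
  have H1 : ∀ k, IsClosed (F k) := by
    intro k
    exact isClosed_le (continuous_fst.dist (hπ.comp continuous_snd)) continuous_const
  have H2 : Antitone F := by
    intro k k' hkk p hp
    have hp' : dist p.1 (π p.2) ≤ 1 / ((k' : ℝ) + 1) := hp
    exact le_trans hp' (Nat.one_div_le_one_div hkk)
  have H3 : ∀ y, GB T' (ε / 4) {x | ∀ k, (y, x) ∈ F k} (τ / 2) := by
    intro y
    refine (hR y (ε / 4) (by positivity) (τ / 2) (by positivity)).mono le_rfl ?_
    intro x hx
    have h1 : dist y (π x) ≤ 0 := by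
      refine ge_of_tendsto' (tendsto_one_div_add_atTop_nhds_zero_nat (𝕜 := ℝ)) fun k => ?_
      exact hx k
    exact (dist_le_zero.1 h1).symm
  obtain ⟨C, k, h⟩ := bowen_lemma hT' T F H1 H2 ∅ (by positivity) hτ (by linarith) H3
  refine ⟨1 / ((k : ℝ) + 1), by positivity, C, fun n y A hA hAy => h n y A ?_ ?_ ?_⟩
  · convert hA using 1; ring
  · intro x hx t ht
    right
    have := hAy x hx t (by omega)
    rw [← (hc.iterate_right t) x] at this
    exact this
  · intro x _ x' _ t _ h; exact h.elim

theorem GB_lift {X' : Type*} [PseudoMetricSpace X'] [CompactSpace X'] [MetricSpace X] [CompactSpace X]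
    {T' : X' → X'} {T : X → X} {π : X' → X} (hT' : Continuous T') (hπ : Continuous π)
    (hc : Function.Semiconj π T' T)
    (hR : ∀ y : X, ∀ ε : ℝ, 0 < ε → ∀ b : ℝ, 0 < b → GB T' ε (π ⁻¹' {y}) b)
    {ε τ : ℝ} (hε : 0 < ε) (hτ : 0 < τ) :
    ∃ η : ℝ, 0 < η ∧ ∀ (K : Set X') (b : ℝ), GB T η (π '' K) b → GB T' ε K (b + τ) := by
  obtain ⟨η, hη, C, hC⟩ := fiber_uniform hT' hπ hc hR hε hτ
  refine ⟨η, hη, fun K b ⟨C1, hC1⟩ => ⟨C1 * max C 0, fun n A hAK hA => ?_⟩⟩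
  obtain ⟨E, hEK, hEc, hE⟩ := exists_span hη.le (hC1 n)
  have h1 := count_cover A E (fun x e => ∀ i < n, dist (T^[i] (π x)) (T^[i] e) ≤ η)
    (N := max C 0 * Real.exp (τ * n)) (fun x hx => hE (π x) ⟨x, hAK hx, rfl⟩) ?_
  · refine h1.trans ?_
    refine (mul_le_mul_of_nonneg_right hEc (by positivity)).trans (le_of_eq ?_)
    rw [add_mul, Real.exp_add]; ring
  · intro e _ B hB hBe
    refine (hC n e B (hA.subset (by exact_mod_cast hB)) ?_).trans ?_
    · intro x hx t ht
      rw [dist_comm]; exact hBe x hx t ht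
    · exact mul_le_mul_of_nonneg_right (le_max_left _ _) (Real.exp_pos _).le

theorem GB_proj {X' : Type*} [PseudoMetricSpace X'] [CompactSpace X'] [PseudoMetricSpace X]
    {T' : X' → X'} {T : X → X} {π : X' → X} (hπ : Continuous π)
    (hc : Function.Semiconj π T' T) {ε : ℝ} (hε : 0 < ε) :
    ∃ η : ℝ, 0 < η ∧ ∀ (K : Set X') (b : ℝ), GB T' η K b → GB T ε (π '' K) b := by
  classical
  rcases isEmpty_or_nonempty X' with hem | hne
  · refine ⟨1, one_pos, fun K b _ => ?_⟩
    rw [Set.eq_empty_of_isEmpty K, Set.image_empty]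
    exact GB_empty
  obtain ⟨η, hη, h⟩ := Metric.uniformContinuous_iff.1
    (CompactSpace.uniformContinuous_of_continuous hπ) ε hε
  refine ⟨η / 2, by positivity, fun K b ⟨C, hC⟩ => ⟨C, fun n E hE hsep => ?_⟩⟩
  have : ∀ y ∈ E, ∃ x ∈ K, π x = y := fun y hy => hE hy
  choose! s hs hs' using this
  have hinj : Set.InjOn s (↑E : Set X) := by
    intro y hy y' hy' hyy
    rw [← hs' y hy, ← hs' y' hy', hyy]
  rw [← Finset.card_image_of_injOn hinj]
  refine hC n _ ?_ ?_
  · intro x hx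
    simp only [Finset.coe_image, Set.mem_image, Finset.mem_coe] at hx
    obtain ⟨y, hy, rfl⟩ := hx
    exact hs y hy
  · intro x hx x' hx' hne
    simp only [Finset.coe_image, Set.mem_image, Finset.mem_coe] at hx hx'
    obtain ⟨y, hy, rfl⟩ := hx
    obtain ⟨y', hy', rfl⟩ := hx'
    obtain ⟨i, hi, hd⟩ := hsep hy hy' (fun h => hne (by rw [h]))
    refine ⟨i, hi, ?_⟩
    by_contra hcon
    push Not at hcon
    have := h (lt_of_le_of_lt hcon (by linarith))
    rw [(hc.iterate_right i) (s y), (hc.iterate_right i) (s y'), hs' y hy, hs' y' hy'] at this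
    linarith

theorem subEnt_image {X' : Type*} [PseudoMetricSpace X'] [CompactSpace X'] [MetricSpace X] [CompactSpace X]
    {T' : X' → X'} {T : X → X} {π : X' → X} (hT' : Continuous T') (hT : Continuous T) (hπ : Continuous π)
    (hc : Function.Semiconj π T' T)
    (hR : ∀ y : X, ∀ ε : ℝ, 0 < ε → ∀ b : ℝ, 0 < b → GB T' ε (π ⁻¹' {y}) b) (K : Set X') :
    subEnt T' K = subEnt T (π '' K) := by
  apply le_antisymm
  · refine ereal_le_of_real fun a ha => ?_
    rw [subEnt_le_iff hT] at ha
    rw [subEnt_le_iff hT']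
    intro ε hε b hb
    obtain ⟨η, hη, h⟩ := GB_lift hT' hπ hc hR hε (by linarith : 0 < (b - a) / 2)
    have := h K _ (ha η hη ((a + b) / 2) (by linarith))
    convert this using 1; ring
  · refine ereal_le_of_real fun a ha => ?_
    rw [subEnt_le_iff hT'] at ha
    rw [subEnt_le_iff hT]
    intro ε hε b hb
    obtain ⟨η, hη, h⟩ := GB_proj (T' := T') hπ hc hε
    exact h K b (ha η hη b hb)

theorem bowen_ineq [PseudoMetricSpace X] [CompactSpace X] {T : X → X} (hT : Continuous T)
    {ε a c δ : ℝ} (hε : 0 < ε) (hc : 0 < c) (hac : a < c) (hδ : 0 < δ)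
    (h : hStar T ε ≤ (a : EReal)) {K : Set X} {b : ℝ} (hK : GB T ε K b) : GB T δ K (b + c) := by
  obtain ⟨C, hC⟩ := star_uniform (ε := ε) (δ := δ / 4) (b' := (a + c) / 2) hT isOpen_empty (by positivity) hc
    (by linarith) (by
      intro z
      rw [Set.sdiff_empty]
      have h1 : subEnt T (Phi T ε z) ≤ (a : EReal) := (le_iSup (fun x => subEnt T (Phi T ε x)) z).trans h
      exact (subEnt_le_iff hT).1 h1 _ (by positivity) _ (by linarith))
  obtain ⟨C1, hC1⟩ := hK
  refine ⟨C1 * max C 0, fun n A hAK hA => ?_⟩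
  obtain ⟨E, hEK, hEc, hE⟩ := exists_span hε.le (hC1 n)
  have h1 := count_cover A E (fun x e => ∀ i < n, dist (T^[i] x) (T^[i] e) ≤ ε)
    (N := max C 0 * Real.exp (c * n)) (fun x hx => hE x (hAK hx)) ?_
  · refine h1.trans ?_
    refine (mul_le_mul_of_nonneg_right hEc (by positivity)).trans (le_of_eq ?_)
    rw [add_mul, Real.exp_add]; ring
  · intro e _ B hB hBe
    refine (hC n e B ?_ ?_ ?_).trans ?_
    · have := hA.subset (F := ↑B) (by exact_mod_cast hB)
      convert this using 1; ring
    · intro x hx t ht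
      rw [dist_comm]; exact hBe x hx t ht
    · intro x _ x' _ t _ h; exact h.elim
    · exact mul_le_mul_of_nonneg_right (le_max_left _ _) (Real.exp_pos _).le

theorem hStar_mono [PseudoMetricSpace X] [CompactSpace X] {T : X → X} (hT : Continuous T)
    {ε ε' : ℝ} (h : ε ≤ ε') : hStar T ε ≤ hStar T ε' :=
  iSup_mono fun x => subEnt_mono hT fun _ hy n => (hy n).trans h

theorem hStar_nonneg [PseudoMetricSpace X] [CompactSpace X] [Nonempty X] {T : X → X} (hT : Continuous T)
    {ε : ℝ} (h : 0 ≤ ε) : 0 ≤ hStar T ε := by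
  obtain ⟨x⟩ := ‹Nonempty X›
  refine le_trans (subEnt_nonneg hT (K := Phi T ε x) ⟨x, fun n => ?_⟩) (le_iSup (fun x => subEnt T (Phi T ε x)) x)
  simpa using h

theorem ahe_iff [PseudoMetricSpace X] [CompactSpace X] [Nonempty X] {T : X → X} (hT : Continuous T) :
    AsympHExpansive T ↔ ∀ τ : ℝ, 0 < τ → ∃ ε : ℝ, 0 < ε ∧ hStar T ε ≤ (τ : EReal) := by
  constructor
  · intro h τ hτ
    have h1 := h.eventually (gt_mem_nhds (by exact_mod_cast hτ : (0 : EReal) < (τ : EReal)))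
    obtain ⟨ε, h2, h3⟩ := (h1.and self_mem_nhdsWithin).exists
    exact ⟨ε, h3, h2.le⟩
  · intro h
    refine tendsto_order.2 ⟨fun a ha => ?_, fun a ha => ?_⟩
    · filter_upwards [self_mem_nhdsWithin] with ε hε
      exact ha.trans_le (hStar_nonneg hT (le_of_lt hε))
    · obtain ⟨τ, h0, hτ⟩ := EReal.lt_iff_exists_real_btwn.1 ha
      obtain ⟨ε, hε, h1⟩ := h τ (by exact_mod_cast h0)
      filter_upwards [Ioo_mem_nhdsGT hε] with ε' hε'
      exact ((hStar_mono hT hε'.2.le).trans h1).trans_lt hτ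

theorem ahe_lift {X' : Type*} [PseudoMetricSpace X'] [CompactSpace X'] [MetricSpace X] [CompactSpace X]
    [Nonempty X'] [Nonempty X]
    {T' : X' → X'} {T : X → X} {π : X' → X} (hT' : Continuous T') (hT : Continuous T) (hπ : Continuous π)
    (hc : Function.Semiconj π T' T)
    (hR : ∀ y : X, ∀ ε : ℝ, 0 < ε → ∀ b : ℝ, 0 < b → GB T' ε (π ⁻¹' {y}) b)
    (h : AsympHExpansive T) : AsympHExpansive T' := by
  rw [ahe_iff hT] at h
  rw [ahe_iff hT']
  intro τ hτ
  obtain ⟨ε, hε, h1⟩ := h τ hτ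
  obtain ⟨η, hη, hu⟩ := Metric.uniformContinuous_iff.1
    (CompactSpace.uniformContinuous_of_continuous hπ) ε hε
  refine ⟨η / 2, by positivity, iSup_le fun x => ?_⟩
  rw [subEnt_image hT' hT hπ hc hR]
  refine (subEnt_mono hT (K' := Phi T ε (π x)) ?_).trans ((le_iSup (fun x => subEnt T (Phi T ε x)) (π x)).trans h1)
  rintro _ ⟨y, hy, rfl⟩ n
  rw [← (hc.iterate_right n) x, ← (hc.iterate_right n) y]
  exact (hu (lt_of_le_of_lt (hy n) (by linarith))).le

theorem ahe_proj {X' : Type*} [PseudoMetricSpace X'] [CompactSpace X'] [MetricSpace X] [CompactSpace X]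
    [Nonempty X'] [Nonempty X]
    {T' : X' → X'} {T : X → X} {π : X' → X} (hT' : Continuous T') (hT : Continuous T) (hπ : Continuous π)
    (hπs : Function.Surjective π)
    (hc : Function.Semiconj π T' T)
    (hR : ∀ y : X, ∀ ε : ℝ, 0 < ε → ∀ b : ℝ, 0 < b → GB T' ε (π ⁻¹' {y}) b)
    (h : AsympHExpansive T') : AsympHExpansive T := by
  rw [ahe_iff hT'] at h
  rw [ahe_iff hT]
  intro τ hτ
  obtain ⟨ε, hε, h1⟩ := h (τ / 4) (by positivity)
  obtain ⟨η, hη, C, hC⟩ := fiber_uniform hT' hπ hc hR hε (by positivity : 0 < τ / 2)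
  refine ⟨η, hη, iSup_le fun x => ?_⟩
  have e1 : Phi T η x = π '' (π ⁻¹' (Phi T η x)) := (Set.image_preimage_eq _ hπs).symm
  rw [e1, ← subEnt_image hT' hT hπ hc hR, subEnt_le_iff hT']
  intro δ hδ b hb
  have h2 : GB T' ε (π ⁻¹' (Phi T η x)) (τ / 2) :=
    ⟨C, fun n A hA hs => hC n x A hs fun z hz t _ => hA hz t⟩
  exact (bowen_ineq hT' hε (by positivity : 0 < τ / 2) (by linarith) hδ h1 h2).mono_b (by linarith)

theorem hul_step [MetricSpace X] [CompactSpace X] {T : X → X} (hT : Continuous T) (hul : HUL T)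
    {τ : ℝ} (hτ : ∀ ε : ℝ, 0 < ε → (τ : EReal) < hStar T ε) (P : Finset X) {ε c : ℝ}
    (hε : 0 < ε) (hc : 0 < c) (hcτ : c < τ) :
    ∃ (S : Set X) (p : X), (∃ z, S ⊆ Phi T ε z) ∧ IsCompact S ∧ p ∈ S ∧
      subEnt T S = (c : EReal) ∧ (∀ x, AccPt x (𝓟 S) → x = p) ∧ p ∉ P := by
  obtain ⟨ε₀, ⟨h4, hεε⟩, hε₀⟩ : ∃ ε₀ : ℝ, ((∀ p ∈ P, ∀ q ∈ P, p ≠ q → 4 * ε₀ ≤ dist p q) ∧ ε₀ ≤ ε) ∧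
      0 < ε₀ := by
    have h1 : ∀ᶠ r : ℝ in 𝓝[>] 0, ∀ p ∈ P, ∀ q ∈ P, p ≠ q → 4 * r ≤ dist p q := by
      rw [Filter.eventually_all_finset]
      intro p _
      rw [Filter.eventually_all_finset]
      intro q _
      by_cases hpq : p = q
      · exact Eventually.of_forall fun r h => absurd hpq h
      · filter_upwards [Ioo_mem_nhdsGT (show (0 : ℝ) < dist p q / 4 by
          have := dist_pos.2 hpq; positivity)] with r hr _
        linarith [hr.2]
    have h2 : ∀ᶠ r : ℝ in 𝓝[>] 0, r ≤ ε := by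
      filter_upwards [Ioo_mem_nhdsGT hε] with r hr using hr.2.le
    exact ((h1.and h2).and self_mem_nhdsWithin).exists
  obtain ⟨x, hx⟩ := lt_iSup_iff.1 (hτ ε₀ hε₀)
  have hx' := not_le.2 hx
  rw [subEnt_le_iff hT] at hx'
  push Not at hx'
  obtain ⟨η, hη, b, hb, hGB⟩ := hx'
  set r := min ε₀ (η / 2) with hr
  have hr0 : 0 < r := lt_min hε₀ (by positivity)
  have hr1 : r ≤ ε₀ := min_le_left _ _
  have hr2 : r ≤ η / 2 := min_le_right _ _
  set V : Set X := ⋃ p ∈ P, ball p r with hV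
  have hVo : IsOpen V := isOpen_biUnion fun _ _ => isOpen_ball
  have hz : ∃ z, ¬ GB T (η / 4) (Phi T ε₀ z \ V) τ := by
    by_contra hall
    push Not at hall
    apply hGB
    obtain ⟨C, hC⟩ := star_uniform hT hVo (by positivity : 0 < η / 4) (by linarith : 0 < b) hb hall
    refine ⟨C, fun n E hE hsep => hC n x E ?_ (fun y hy t _ => hE hy t) ?_⟩
    · convert hsep using 1; ring
    · intro y hy y' hy' t _ h1 h2
      simp only [hV, mem_iUnion, mem_ball] at h1 h2
      obtain ⟨p, hp, h1⟩ := h1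
      obtain ⟨q, hq, h2⟩ := h2
      have e1 := hE hy t
      have e2 := hE hy' t
      have hpq : p = q := by
        by_contra hne
        have e3 := h4 p hp q hq hne
        have e5 := dist_triangle_left (T^[t] y) (T^[t] y') (T^[t] x)
        have e6 := dist_triangle4 p (T^[t] y) (T^[t] y') q
        rw [dist_comm p (T^[t] y)] at e6
        linarith
      subst hpq
      have := dist_triangle_right (T^[t] y) (T^[t] y') p
      linarith
  obtain ⟨z, hz⟩ := hz
  have hPc : IsClosed (Phi T ε₀ z) := by
    have : Phi T ε₀ z = ⋂ n, {y | dist (T^[n] z) (T^[n] y) ≤ ε₀} := by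
      ext y; simp [Phi]
    rw [this]
    exact isClosed_iInter fun n => isClosed_le (continuous_const.dist (hT.iterate n)) continuous_const
  have hKc : IsCompact (Phi T ε₀ z \ V) := (hPc.inter hVo.isClosed_compl).isCompact
  have hKne : (Phi T ε₀ z \ V).Nonempty := by
    rw [Set.nonempty_iff_ne_empty]
    intro h
    exact hz (by rw [h]; exact GB_empty)
  have hKe : (c : EReal) ≤ subEnt T (Phi T ε₀ z \ V) := by
    by_contra h
    push Not at h
    exact hz ((subEnt_le_iff hT).1 h.le _ (by positivity) _ hcτ)
  obtain ⟨S, hSK, hSne, hSc, hSe, hSa⟩ := hul _ hKne hKc c (by exact_mod_cast hc.le) hKe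
  have hinf : S.Infinite := by
    intro hfin
    have := subEnt_finite_le hT hfin
    rw [hSe] at this
    have : c ≤ 0 := by exact_mod_cast this
    linarith
  obtain ⟨p, hpS, hp⟩ := hinf.exists_accPt_of_subset_isCompact hSc (le_refl S)
  refine ⟨S, p, ⟨z, fun y hy n => ((hSK hy).1 n).trans hεε⟩, hSc, hpS, hSe, fun x hx => hSa hx hp, ?_⟩
  intro hpP
  exact (hSK hpS).2 (by
    simp only [hV, mem_iUnion]
    exact ⟨p, hpP, mem_ball_self hr0⟩)

theorem compact_tail [TopologicalSpace X] (p : X) (S : ℕ → Set X) (hS : ∀ j, IsCompact (S j))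
    (h : ∀ U ∈ 𝓝 p, ∃ N, ∀ j ≥ N, S j ⊆ U) : IsCompact ({p} ∪ ⋃ j, S j) := by
  rw [isCompact_iff_ultrafilter_le_nhds]
  intro f hf
  by_cases hfp : (f : Filter X) ≤ 𝓝 p
  · exact ⟨p, Or.inl rfl, hfp⟩
  · rw [Filter.not_le] at hfp
    obtain ⟨U, hU, hUf⟩ := hfp
    obtain ⟨N, hN⟩ := h U hU
    have hc : IsCompact (⋃ j ∈ Finset.range N, S j) :=
      (Finset.range N).isCompact_biUnion fun j _ => hS j
    have hmem : (⋃ j ∈ Finset.range N, S j) ∈ f := by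
      have h1 : ({p} ∪ ⋃ j, S j) ∈ f := le_principal_iff.1 hf
      have h2 : Uᶜ ∈ f := Ultrafilter.compl_mem_iff_notMem.2 hUf
      filter_upwards [h1, h2] with x hx hxU
      rcases hx with hx | hx
      · rw [mem_singleton_iff] at hx
        exact absurd (hx ▸ mem_of_mem_nhds hU) hxU
      · obtain ⟨j, hj⟩ := mem_iUnion.1 hx
        simp only [mem_iUnion]
        refine ⟨j, ?_, hj⟩
        rw [Finset.mem_range]
        by_contra hlt
        exact hxU (hN j (not_lt.1 hlt) hj)
    obtain ⟨x, hx, hfx⟩ := (isCompact_iff_ultrafilter_le_nhds.1 hc) f (le_principal_iff.2 hmem)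
    simp only [mem_iUnion] at hx
    obtain ⟨j, _, hj⟩ := hx
    exact ⟨x, Or.inr (mem_iUnion.2 ⟨j, hj⟩), hfx⟩

theorem hul_seq [MetricSpace X] [CompactSpace X] {T : X → X} (hT : Continuous T) (hul : HUL T)
    {τ : ℝ} (hτ0 : 0 < τ) (hτ : ∀ ε : ℝ, 0 < ε → (τ : EReal) < hStar T ε) :
    ∃ (S : ℕ → Set X) (q : ℕ → X) (k : ℕ → ℕ) (p : X), (∀ j, IsCompact (S j)) ∧
      (∀ j, ∀ x ∈ S j, ∀ y ∈ S j, ∀ i, dist (T^[i] x) (T^[i] y) ≤ 2 / ((j : ℝ) + 1)) ∧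
      (∀ j, ∀ x ∈ S j, ∀ i ≤ j, dist (T^[i] x) (T^[i] p) ≤ 3 / ((j : ℝ) + 1)) ∧
      (∀ j, subEnt T (S j) = ((τ * (1 - 1 / ((k j : ℝ) + 2)) : ℝ) : EReal)) ∧
      (∀ j, j ≤ k j) ∧ (∀ j, ∀ x, AccPt x (𝓟 (S j)) → x = q j) ∧ Function.Injective q := by
  classical
  obtain ⟨f, hf1, hf2⟩ := exists_seq_of_forall_finset_exists
    (fun s : Set X × X × ℕ => (∃ z, s.1 ⊆ Phi T (1 / ((s.2.2 : ℝ) + 1)) z) ∧ IsCompact s.1 ∧ s.2.1 ∈ s.1 ∧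
      subEnt T s.1 = ((τ * (1 - 1 / ((s.2.2 : ℝ) + 2)) : ℝ) : EReal) ∧
      (∀ x, AccPt x (𝓟 s.1) → x = s.2.1))
    (fun s s' => s.2.1 ≠ s'.2.1 ∧ s.2.2 < s'.2.2) (by
      intro F _
      set k := F.sup (fun s => s.2.2) + 1 with hk
      have h1 : (0 : ℝ) < 1 / ((k : ℝ) + 2) := by positivity
      have h2 : 1 / ((k : ℝ) + 2) < 1 := by
        rw [div_lt_one (by positivity)]
        have : (0 : ℝ) ≤ k := Nat.cast_nonneg _
        linarith
      obtain ⟨S, p, a1, a2, a3, a4, a5, a6⟩ := hul_step hT hul hτ (F.image fun s => s.2.1)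
        (ε := 1 / ((k : ℝ) + 1)) (c := τ * (1 - 1 / ((k : ℝ) + 2))) (by positivity)
        (mul_pos hτ0 (by linarith)) (by nlinarith)
      refine ⟨(S, p, k), ⟨a1, a2, a3, a4, a5⟩, fun s hs => ⟨?_, ?_⟩⟩
      · intro h
        exact a6 (Finset.mem_image.2 ⟨s, hs, h⟩)
      · have : s.2.2 ≤ F.sup (fun s => s.2.2) := Finset.le_sup (f := fun s : Set X × X × ℕ => s.2.2) hs
        change s.2.2 < k
        omega)
  have hkm : StrictMono fun n => (f n).2.2 := fun m n h => (hf2 m n h).2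
  obtain ⟨p, φ, hφ, hlim⟩ := CompactSpace.tendsto_subseq fun n => (f n).2.1
  have hev : ∀ j : ℕ, ∀ᶠ n in atTop, ∀ i ≤ j, dist (T^[i] (f (φ n)).2.1) (T^[i] p) ≤ 1 / ((j : ℝ) + 1) := by
    intro j
    have : ∀ i : ℕ, ∀ᶠ n in atTop, dist (T^[i] (f (φ n)).2.1) (T^[i] p) ≤ 1 / ((j : ℝ) + 1) := by
      intro i
      have h1 : Tendsto (fun n => T^[i] (f (φ n)).2.1) atTop (𝓝 (T^[i] p)) :=
        ((hT.iterate i).tendsto p).comp hlim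
      filter_upwards [(Metric.tendsto_nhds.1 h1) (1 / ((j : ℝ) + 1)) (by positivity)] with n hn using hn.le
    have h2 := (Filter.eventually_all_finset (l := atTop) (Finset.range (j + 1))
      (p := fun i n => dist (T^[i] (f (φ n)).2.1) (T^[i] p) ≤ 1 / ((j : ℝ) + 1))).2 fun i _ => this i
    filter_upwards [h2] with n hn i hi
    exact hn i (by rw [Finset.mem_range]; omega)
  obtain ⟨ψ, hψ, hψ2⟩ := Filter.extraction_forall_of_eventually' fun j => eventually_atTop.1 (hev j)
  have hkj : ∀ j, j ≤ (f (φ (ψ j))).2.2 := fun j => ((hkm.comp hφ).comp hψ).id_le j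
  have hkj' : ∀ j : ℕ, 1 / (((f (φ (ψ j))).2.2 : ℝ) + 1) ≤ 1 / ((j : ℝ) + 1) := fun j =>
    Nat.one_div_le_one_div (hkj j)
  have hd2 : ∀ j, ∀ x ∈ (f (φ (ψ j))).1, ∀ y ∈ (f (φ (ψ j))).1, ∀ i,
      dist (T^[i] x) (T^[i] y) ≤ 2 / ((j : ℝ) + 1) := by
    intro j x hx y hy i
    obtain ⟨⟨z, hz⟩, -⟩ := hf1 (φ (ψ j))
    have h1 := hz hx i
    have h2 := hz hy i
    have h3 := dist_triangle_left (T^[i] x) (T^[i] y) (T^[i] z)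
    have h4 := hkj' j
    have : 2 / ((j : ℝ) + 1) = 1 / ((j : ℝ) + 1) + 1 / ((j : ℝ) + 1) := by ring
    linarith
  refine ⟨fun j => (f (φ (ψ j))).1, fun j => (f (φ (ψ j))).2.1, fun j => (f (φ (ψ j))).2.2, p,
    fun j => (hf1 _).2.1, hd2, ?_, fun j => (hf1 _).2.2.2.1, hkj, fun j => (hf1 _).2.2.2.2, ?_⟩
  · intro j x hx i hi
    have h1 := hd2 j x hx _ (hf1 (φ (ψ j))).2.2.1 i
    have h2 := hψ2 j i hi
    have h3 := dist_triangle (T^[i] x) (T^[i] (f (φ (ψ j))).2.1) (T^[i] p)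
    have : 3 / ((j : ℝ) + 1) = 2 / ((j : ℝ) + 1) + 1 / ((j : ℝ) + 1) := by ring
    linarith
  · intro j j' hjj
    by_contra hne
    rcases lt_or_gt_of_ne hne with h | h
    · exact (hf2 _ _ (hφ (hψ h))).1 hjj
    · exact (hf2 _ _ (hφ (hψ h))).1 hjj.symm

theorem hul_ahe [MetricSpace X] [CompactSpace X] [Nonempty X] {T : X → X} (hT : Continuous T)
    (hul : HUL T) : AsympHExpansive T := by
  classical
  rw [ahe_iff hT]
  by_contra hcon
  push Not at hcon
  obtain ⟨τ, hτ0, hτ⟩ := hcon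
  obtain ⟨S, q, k, p, hSc, hS2, hS3, hSe, hk, hSa, hq⟩ := hul_seq hT hul hτ0 hτ
  set K : Set X := {p} ∪ ⋃ j, S j with hK
  have hdec : ∀ c : ℝ, 0 < c → ∃ N : ℕ, ∀ j ≥ N, 6 / ((j : ℝ) + 1) < c := by
    intro c hc
    obtain ⟨N, hN⟩ := exists_nat_gt (6 / c)
    refine ⟨N, fun j hj => ?_⟩
    have hj' : (N : ℝ) ≤ j := by exact_mod_cast hj
    rw [div_lt_iff₀ (by positivity)]
    rw [div_lt_iff₀ hc] at hN
    nlinarith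
  have hKc : IsCompact K := by
    refine compact_tail p S hSc fun U hU => ?_
    obtain ⟨r, hr, hrU⟩ := Metric.mem_nhds_iff.1 hU
    obtain ⟨N, hN⟩ := hdec r hr
    refine ⟨N, fun j hj x hx => hrU ?_⟩
    have h1 := hS3 j x hx 0 (Nat.zero_le _)
    have h2 := hN j hj
    have h3 : 3 / ((j : ℝ) + 1) ≤ 6 / ((j : ℝ) + 1) := by gcongr; norm_num
    simp only [Function.iterate_zero, id] at h1
    rw [mem_ball]; linarith
  have hKe : (τ : EReal) ≤ subEnt T K := by
    by_contra hlt
    push Not at hlt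
    obtain ⟨a, ha1, ha2⟩ := EReal.lt_iff_exists_real_btwn.1 hlt
    have ha2 : a < τ := by exact_mod_cast ha2
    obtain ⟨j, hj⟩ := hdec ((τ - a) / τ) (div_pos (by linarith) hτ0)
    have h1 : subEnt T (S j) ≤ subEnt T K :=
      subEnt_mono hT (fun x hx => Or.inr (mem_iUnion.2 ⟨j, hx⟩))
    have h2 := h1.trans ha1.le
    rw [hSe] at h2
    have h2 : τ * (1 - 1 / ((k j : ℝ) + 2)) ≤ a := by exact_mod_cast h2
    have h3 := hj j le_rfl
    have h4 : 1 / ((k j : ℝ) + 2) ≤ 6 / ((j : ℝ) + 1) := by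
      have : (j : ℝ) ≤ k j := by exact_mod_cast hk j
      rw [div_le_div_iff₀ (by positivity) (by positivity)]
      linarith
    have h5 : 1 / ((k j : ℝ) + 2) < (τ - a) / τ := by linarith
    rw [lt_div_iff₀ hτ0] at h5
    linarith
  obtain ⟨L, hLK, hLne, hLc, hLe, hLa⟩ := hul K ⟨p, Or.inl rfl⟩ hKc τ (by exact_mod_cast hτ0.le) hKe
  have hfin : ∃ j0, ∀ j, j ≠ j0 → (L ∩ S j).Finite := by
    by_cases h : ∃ j0, (L ∩ S j0).Infinite
    · obtain ⟨j0, h0⟩ := h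
      refine ⟨j0, fun j hj => ?_⟩
      by_contra hinf
      have key : ∀ j, (L ∩ S j).Infinite → AccPt (q j) (𝓟 L) := by
        intro j hj
        obtain ⟨x, _, hx⟩ := Set.Infinite.exists_accPt_of_subset_isCompact hj (hLc.inter (hSc j)) le_rfl
        have h1 : x = q j := hSa j x (hx.mono (principal_mono.2 inter_subset_right))
        rw [← h1]
        exact hx.mono (principal_mono.2 inter_subset_left)
      exact hj (hq (hLa (key j hinf) (key j0 h0)))
    · push Not at h
      exact ⟨0, fun j _ => h j⟩
  obtain ⟨j0, hj0⟩ := hfin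
  have hpos : (0 : ℝ) < 1 / ((k j0 : ℝ) + 2) := by positivity
  have hlt1 : 1 / ((k j0 : ℝ) + 2) < 1 := by
    rw [div_lt_one (by positivity)]
    have : (0 : ℝ) ≤ k j0 := Nat.cast_nonneg _
    linarith
  have hfinal : subEnt T L ≤ ((τ * (1 - 1 / ((k j0 : ℝ) + 2)) : ℝ) : EReal) := by
    rw [subEnt_le_iff hT]
    intro δ hδ b hb
    have hb0 : 0 < b := lt_trans (mul_pos hτ0 (by linarith)) hb
    obtain ⟨N, hN⟩ := hdec δ hδ
    have g1 : GB T δ (S j0) b := (subEnt_le_iff hT).1 (hSe j0).le δ hδ b hb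
    have g2 : GB T δ ({p} ∪ ⋃ j ∈ (Finset.range N).filter (· ≠ j0), L ∩ S j) b := by
      refine GB_finite ?_ hb0.le
      refine (finite_singleton p).union ?_
      refine Set.Finite.biUnion (Finset.finite_toSet _) fun j hj => ?_
      exact hj0 j (Finset.mem_filter.1 hj).2
    have g3 : GB T δ {x | ∃ j ≥ N, x ∈ S j} b := by
      refine ⟨max 1 (1 / b), fun n E hE hsep => ?_⟩
      have : ∀ x, ∃ j, x ∈ E → (N ≤ j ∧ x ∈ S j) := by
        intro x
        by_cases hx : x ∈ E
        · obtain ⟨j, hj, h⟩ := hE hx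
          exact ⟨j, fun _ => ⟨hj, h⟩⟩
        · exact ⟨0, fun h => absurd h hx⟩
      choose J hJ using this
      have hcard := sep_card_le hsep (Finset.range (n + 1)) (fun x => min (J x) n)
        (fun x _ => by rw [Finset.mem_range]; have := min_le_right (J x) n; omega) (by
          intro x hx y hy hxy i hi
          obtain ⟨a1, a2⟩ := hJ x hx
          obtain ⟨b1, b2⟩ := hJ y hy
          by_cases hJn : J x < n
          · have hJe : J x = J y := by
              rw [min_eq_left hJn.le] at hxy
              rcases min_choice (J y) n with h | h <;> omega
            rw [← hJe] at b2
            have h1 := hS2 _ x a2 y b2 i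
            have h2 := hN _ a1
            have h3 : 2 / ((J x : ℝ) + 1) ≤ 6 / ((J x : ℝ) + 1) := by gcongr; norm_num
            linarith
          · have hJy : n ≤ J y := by
              rw [min_eq_right (not_lt.1 hJn)] at hxy
              rw [hxy]; exact min_le_left _ _
            have h1 := hS3 _ x a2 i (by omega)
            have h2 := hS3 _ y b2 i (by omega)
            have h3 := hN _ a1
            have h4 := hN _ b1
            have h5 := dist_triangle_right (T^[i] x) (T^[i] y) (T^[i] p)
            have h6 : 6 / ((J x : ℝ) + 1) = 2 * (3 / ((J x : ℝ) + 1)) := by ring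
            have h7 : 6 / ((J y : ℝ) + 1) = 2 * (3 / ((J y : ℝ) + 1)) := by ring
            linarith)
      rw [Finset.card_range] at hcard
      have hcard' : (E.card : ℝ) ≤ n + 1 := by exact_mod_cast hcard
      have h1 := Real.add_one_le_exp (b * n)
      have h2 : (n : ℝ) + 1 ≤ max 1 (1 / b) * (b * n + 1) := by
        have e1 : (1 : ℝ) ≤ max 1 (1 / b) := le_max_left _ _
        have e2 : 1 / b ≤ max 1 (1 / b) := le_max_right _ _
        have e3 : 1 / b * (b * n) = n := by field_simp
        have e4 : 1 / b * (b * n) ≤ max 1 (1 / b) * (b * n) := by gcongr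
        linarith
      refine hcard'.trans (h2.trans ?_)
      gcongr
    refine ((g1.union g2).union g3).mono le_rfl ?_
    intro x hx
    rcases hLK hx with h | h
    · exact Or.inl (Or.inr (Or.inl h))
    · obtain ⟨j, hj⟩ := mem_iUnion.1 h
      by_cases hjj : j = j0
      · exact Or.inl (Or.inl (hjj ▸ hj))
      by_cases hjN : j < N
      · refine Or.inl (Or.inr (Or.inr ?_))
        simp only [mem_iUnion]
        exact ⟨j, Finset.mem_filter.2 ⟨Finset.mem_range.2 hjN, hjj⟩, hx, hj⟩
      · exact Or.inr ⟨j, not_lt.1 hjN, hj⟩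
  rw [hLe] at hfinal
  have : τ ≤ τ * (1 - 1 / ((k j0 : ℝ) + 2)) := by exact_mod_cast hfinal
  nlinarith

theorem notGB_large [PseudoMetricSpace X] [CompactSpace X] {T : X → X} (hT : Continuous T)
    {ε : ℝ} (hε : 0 < ε) {K : Set X} {b : ℝ} (h : ¬ GB T ε K b) (k : ℕ) :
    ∃ n ≥ k, ∃ E : Finset X, (↑E : Set X) ⊆ K ∧ IsSep T n ε (↑E : Set X) ∧
      Real.exp (b * n) < E.card := by
  obtain ⟨N, hN⟩ := sep_bdd hT k hε
  unfold GB at h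
  push Not at h
  obtain ⟨n, E, hEK, hE, hc⟩ := h (1 + N * Real.exp (|b| * k))
  refine ⟨n, ?_, E, hEK, hE, ?_⟩
  · by_contra hlt
    push Not at hlt
    have h1 : (E.card : ℝ) ≤ N := by exact_mod_cast hN E (hE.mono_n hlt.le)
    have h2 : 1 ≤ Real.exp (|b| * k) * Real.exp (b * n) := by
      rw [← Real.exp_add]
      apply Real.one_le_exp
      have e1 : -|b| * n ≤ b * n := by gcongr; exact neg_abs_le b
      have e2 : |b| * n ≤ |b| * k := by gcongr
      linarith
    have h3 : 0 < Real.exp (b * n) := Real.exp_pos _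
    have h4 : (N : ℝ) * 1 ≤ N * (Real.exp (|b| * k) * Real.exp (b * n)) := by gcongr
    nlinarith
  · refine lt_of_le_of_lt ?_ hc
    have : (0 : ℝ) ≤ N * Real.exp (|b| * k) := by positivity
    have h3 : 0 < Real.exp (b * n) := Real.exp_pos _
    nlinarith

theorem compact_tail_acc [TopologicalSpace X] [T2Space X] (p : X) (S : ℕ → Set X)
    (hS : ∀ j, (S j).Finite)
    (h : ∀ U ∈ 𝓝 p, ∃ N, ∀ j ≥ N, S j ⊆ U) {x : X} (hx : AccPt x (𝓟 ({p} ∪ ⋃ j, S j))) : x = p := by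
  by_contra hne
  obtain ⟨V, U, hV, hU, hxV, hpU, hd⟩ := t2_separation hne
  obtain ⟨N, hN⟩ := h U (hU.mem_nhds hpU)
  have h1 := hx.nhds_inter (hV.mem_nhds hxV)
  refine Set.Infinite.of_accPt h1 (Set.Finite.subset ((Finset.range N).finite_toSet.biUnion fun j _ => hS j) ?_)
  rintro y ⟨hyV, hy | hy⟩
  · rw [mem_singleton_iff] at hy
    exact (Set.disjoint_left.1 hd hyV (hy ▸ hpU)).elim
  · obtain ⟨j, hj⟩ := mem_iUnion.1 hy
    simp only [mem_iUnion]
    refine ⟨j, ?_, hj⟩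
    rw [Finset.mem_coe, Finset.mem_range]
    by_contra hlt
    exact Set.disjoint_left.1 hd hyV (hN j (not_lt.1 hlt) hj)

theorem ahe_extract [MetricSpace X] [CompactSpace X] [Nonempty X] {T : X → X} (hT : Continuous T)
    (hA : AsympHExpansive T) {S : Set X} {h : ℝ} (hh : 0 < h) (hS : subEnt T S = (h : EReal)) :
    ∃ L ⊆ closure S, L.Nonempty ∧ IsCompact L ∧ subEnt T L = (h : EReal) ∧
      {x | AccPt x (𝓟 L)}.Subsingleton := by
  classical
  rw [ahe_iff hT] at hA
  have hz : ∃ z ∈ closure S, ∀ r > 0, (h : EReal) ≤ subEnt T (S ∩ ball z r) := by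
    by_contra hcon
    push Not at hcon
    have hcl : IsCompact (closure S) := isClosed_closure.isCompact
    have := hcl.induction_on (p := fun A => subEnt T (S ∩ A) < (h : EReal)) ?_ ?_ ?_ ?_
    · rw [inter_eq_self_of_subset_left subset_closure, hS] at this
      exact lt_irrefl _ this
    · simp only [inter_empty]
      rw [subEnt_empty hT]; exact EReal.bot_lt_coe h
    · intro A B hAB hB
      exact lt_of_le_of_lt (subEnt_mono hT (inter_subset_inter_right _ hAB)) hB
    · intro A B hA hB
      simp only [inter_union_distrib_left]
      exact lt_of_le_of_lt (subEnt_union_le hT) (max_lt hA hB)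
    · intro x hx
      obtain ⟨r, hr, h1⟩ := hcon x hx
      exact ⟨ball x r, mem_nhdsWithin_of_mem_nhds (ball_mem_nhds x hr), h1⟩
  obtain ⟨z, hzS, hz⟩ := hz
  choose ε hε hεs using fun j : ℕ => hA (1 / (2 * ((j : ℝ) + 1))) (by positivity)
  have hnot : ∀ j k : ℕ, ¬ GB T (ε j) (S ∩ ball z (1 / ((k : ℝ) + 1))) (h - 2 / ((j : ℝ) + 1)) := by
    intro j k hG
    have h1 := hz (1 / ((k : ℝ) + 1)) (by positivity)
    have hj : (0 : ℝ) < 1 / ((j : ℝ) + 1) := by positivity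
    have h2 : subEnt T (S ∩ ball z (1 / ((k : ℝ) + 1))) ≤ ((h - 1 / ((j : ℝ) + 1) : ℝ) : EReal) := by
      rw [subEnt_le_iff hT]
      intro δ hδ b hb
      refine (bowen_ineq hT (hε j) hj ?_ hδ (hεs j) hG).mono_b ?_
      · rw [div_lt_div_iff₀ (by positivity) (by positivity)]
        have : (0 : ℝ) ≤ j := Nat.cast_nonneg _
        linarith
      · have : 2 / ((j : ℝ) + 1) = 1 / ((j : ℝ) + 1) + 1 / ((j : ℝ) + 1) := by ring
        linarith
    have h3 : h ≤ h - 1 / ((j : ℝ) + 1) := by exact_mod_cast h1.trans h2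
    linarith
  choose n hn E hEK hEs hEc using fun j k => notGB_large hT (hε j) (hnot j k) k
  set F : ℕ → Set X := fun k => ⋃ j ∈ Finset.range (k + 1), (↑(E j k) : Set X) with hF
  have hFf : ∀ k, (F k).Finite := fun k =>
    (Finset.range (k + 1)).finite_toSet.biUnion fun j _ => (E j k).finite_toSet
  have hFK : ∀ k, F k ⊆ S ∩ ball z (1 / ((k : ℝ) + 1)) := by
    intro k
    exact iUnion₂_subset fun j _ => hEK j k
  have htail : ∀ U ∈ 𝓝 z, ∃ N, ∀ j ≥ N, F j ⊆ U := by
    intro U hU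
    obtain ⟨r, hr, hrU⟩ := Metric.mem_nhds_iff.1 hU
    obtain ⟨N, hN⟩ := exists_nat_one_div_lt hr
    refine ⟨N, fun j hj x hx => hrU ?_⟩
    have h1 := (hFK j hx).2
    have h2 : 1 / ((j : ℝ) + 1) ≤ 1 / ((N : ℝ) + 1) := Nat.one_div_le_one_div hj
    rw [mem_ball] at h1 ⊢
    linarith
  have hsub : ({z} ∪ ⋃ k, F k) ⊆ {z} ∪ S :=
    union_subset_union_right _ (iUnion_subset fun k => (hFK k).trans inter_subset_left)
  refine ⟨{z} ∪ ⋃ k, F k, ?_, ⟨z, Or.inl rfl⟩, compact_tail z F (fun k => (hFf k).isCompact) htail, ?_, ?_⟩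
  · refine hsub.trans (union_subset ?_ subset_closure)
    exact singleton_subset_iff.2 hzS
  · apply le_antisymm
    · refine (subEnt_mono hT hsub).trans ((subEnt_union_le hT).trans (max_le ?_ hS.le))
      rw [subEnt_singleton hT]; exact_mod_cast hh.le
    · by_contra hlt
      push Not at hlt
      obtain ⟨a, ha1, ha2⟩ := EReal.lt_iff_exists_real_btwn.1 hlt
      have ha2 : a < h := by exact_mod_cast ha2
      obtain ⟨j, hj⟩ := exists_nat_one_div_lt (show (0 : ℝ) < (h - a) / 2 by linarith)
      have hj2 : 2 / ((j : ℝ) + 1) = 1 / ((j : ℝ) + 1) + 1 / ((j : ℝ) + 1) := by ring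
      have hab : a < h - 2 / ((j : ℝ) + 1) := by linarith
      obtain ⟨b, hb1, hb2⟩ := exists_between hab
      obtain ⟨C, hC⟩ := (subEnt_le_iff hT).1 ha1.le (ε j) (hε j) b hb1
      obtain ⟨k0, hk0⟩ := eventually_atTop.1 (exp_eventually (C := C) hb2)
      set k := max k0 j with hk
      have h1 := hC (n j k) (E j k) (fun x hx => Or.inr (mem_iUnion.2 ⟨k, by
        simp only [hF, mem_iUnion]
        refine ⟨j, ?_, hx⟩
        rw [Finset.mem_range]
        have := le_max_right k0 j
        omega⟩)) (hEs j k)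
      have h2 := hk0 (n j k) ((le_max_left _ _).trans (hn j k))
      have h3 := hEc j k
      linarith
  · intro x hx y hy
    rw [compact_tail_acc z F hFf htail hx, compact_tail_acc z F hFf htail hy]

section transfer
variable {X' : Type*} [MetricSpace X'] [CompactSpace X'] [MetricSpace X] [CompactSpace X]
    {T' : X' → X'} {T : X → X} {π : X' → X}

theorem lowerable_iff (hT' : Continuous T') (hT : Continuous T) (hπ : Continuous π)
    (hπs : Function.Surjective π)
    (hc : Function.Semiconj π T' T)
    (hR : ∀ y : X, ∀ ε : ℝ, 0 < ε → ∀ b : ℝ, 0 < b → GB T' ε (π ⁻¹' {y}) b) :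
    Lowerable T' ↔ Lowerable T := by
  have he := subEnt_image hT' hT hπ hc hR
  have hu : subEnt T' univ = subEnt T univ := by rw [he, image_univ_of_surjective hπs]
  constructor
  · intro h a ha ha'
    obtain ⟨K, hK, hKc, hKe⟩ := h a ha (hu ▸ ha')
    exact ⟨π '' K, hK.image π, hKc.image hπ, by rw [← he, hKe]⟩
  · intro h a ha ha'
    obtain ⟨K, hK, hKc, hKe⟩ := h a ha (hu ▸ ha')
    refine ⟨π ⁻¹' K, hK.preimage hπs, (hKc.isClosed.preimage hπ).isCompact, ?_⟩
    rw [he, image_preimage_eq _ hπs, hKe]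

theorem herLowerable_iff (hT' : Continuous T') (hT : Continuous T) (hπ : Continuous π)
    (hπs : Function.Surjective π)
    (hc : Function.Semiconj π T' T)
    (hR : ∀ y : X, ∀ ε : ℝ, 0 < ε → ∀ b : ℝ, 0 < b → GB T' ε (π ⁻¹' {y}) b) :
    HerLowerable T' ↔ HerLowerable T := by
  have he := subEnt_image hT' hT hπ hc hR
  constructor
  · intro h K hK hKc a ha ha'
    obtain ⟨L, hLK, hL, hLc, hLe⟩ := h (π ⁻¹' K) (hK.preimage hπs) (hKc.isClosed.preimage hπ).isCompact a ha
      (by rw [he, image_preimage_eq _ hπs]; exact ha')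
    exact ⟨π '' L, image_subset_iff.2 hLK, hL.image π, hLc.image hπ, by rw [← he, hLe]⟩
  · intro h K hK hKc a ha ha'
    obtain ⟨L, hLK, hL, hLc, hLe⟩ := h (π '' K) (hK.image π) (hKc.image hπ) a ha (by rw [← he]; exact ha')
    have e : π '' (K ∩ π ⁻¹' L) = L := by
      rw [image_inter_preimage]; exact inter_eq_self_of_subset_right hLK
    refine ⟨K ∩ π ⁻¹' L, inter_subset_left, ?_, hKc.inter_right (hLc.isClosed.preimage hπ), ?_⟩
    · rw [← image_nonempty (f := π), e]; exact hL
    · rw [he, e, hLe]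

theorem accPt_image (hπ : Continuous π) {L : Set X'} {x : X}
    (hx : AccPt x (𝓟 (π '' L))) : ∃ x', π x' = x ∧ AccPt x' (𝓟 L) := by
  rw [accPt_principal_iff_clusterPt, ← mem_closure_iff_clusterPt] at hx
  have h1 : π '' L \ {x} = π '' (L \ π ⁻¹' {x}) := by
    ext y
    constructor
    · rintro ⟨⟨w, hw, rfl⟩, h⟩
      exact ⟨w, ⟨hw, h⟩, rfl⟩
    · rintro ⟨w, ⟨hw, h⟩, rfl⟩
      exact ⟨⟨w, hw, rfl⟩, h⟩
  rw [h1, hπ.isClosedMap.closure_image_eq_of_continuous hπ] at hx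
  obtain ⟨x', hx', hxx⟩ := hx
  refine ⟨x', hxx, ?_⟩
  rw [accPt_principal_iff_clusterPt, ← mem_closure_iff_clusterPt]
  refine closure_mono ?_ hx'
  rintro w ⟨hw, hw'⟩
  refine ⟨hw, fun h => hw' ?_⟩
  rw [mem_singleton_iff] at h
  rw [h]; exact hxx

theorem hul_iff [Nonempty X'] [Nonempty X] (hT' : Continuous T') (hT : Continuous T) (hπ : Continuous π)
    (hπs : Function.Surjective π)
    (hc : Function.Semiconj π T' T)
    (hR : ∀ y : X, ∀ ε : ℝ, 0 < ε → ∀ b : ℝ, 0 < b → GB T' ε (π ⁻¹' {y}) b)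
    (hfin : subEnt T (univ : Set X) < ⊤) :
    HUL T' ↔ HUL T := by
  have he := subEnt_image hT' hT hπ hc hR
  constructor
  · intro h K hK hKc a ha ha'
    obtain ⟨L, hLK, hL, hLc, hLe, hLa⟩ := h (π ⁻¹' K) (hK.preimage hπs) (hKc.isClosed.preimage hπ).isCompact a ha
      (by rw [he, image_preimage_eq _ hπs]; exact ha')
    refine ⟨π '' L, image_subset_iff.2 hLK, hL.image π, hLc.image hπ, by rw [← he, hLe], ?_⟩
    intro x hx y hy
    obtain ⟨x', rfl, hx'⟩ := accPt_image hπ hx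
    obtain ⟨y', rfl, hy'⟩ := accPt_image hπ hy
    rw [hLa hx' hy']
  · intro h K hK hKc a ha ha'
    rcases ha.eq_or_lt with h0 | h0
    · obtain ⟨x, hx⟩ := hK
      refine ⟨{x}, singleton_subset_iff.2 hx, singleton_nonempty x, isCompact_singleton, ?_, ?_⟩
      · rw [subEnt_singleton hT', h0]
      · intro y hy
        exact absurd (finite_singleton x) (Set.Infinite.of_accPt hy)
    · have hA' := ahe_lift hT' hT hπ hc hR (hul_ahe hT h)
      obtain ⟨L, hLK, hL, hLc, hLe, -⟩ := h (π '' K) (hK.image π) (hKc.image hπ) a ha (by rw [← he]; exact ha')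
      have e : π '' (K ∩ π ⁻¹' L) = L := by
        rw [image_inter_preimage]; exact inter_eq_self_of_subset_right hLK
      have hlt : a < ⊤ := by
        rw [← hLe]; exact lt_of_le_of_lt (subEnt_mono hT (subset_univ _)) hfin
      lift a to ℝ using ⟨hlt.ne, (lt_of_lt_of_le EReal.bot_lt_zero ha).ne'⟩
      obtain ⟨M, hMc, hM, hMk, hMe, hMa⟩ := ahe_extract hT' hA' (S := K ∩ π ⁻¹' L) (h := a)
        (by exact_mod_cast h0) (by rw [he, e, hLe])
      refine ⟨M, hMc.trans ?_, hM, hMk, hMe, hMa⟩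
      exact closure_minimal inter_subset_left hKc.isClosed
end transfer

theorem gibbs_term {a s q : ℝ} (ha : 0 ≤ a) (has : a ≤ s) (hq : 0 ≤ q) (h : q = 0 → a = 0) :
    Real.negMulLog a + a * Real.log s ≤ -(a * Real.log q) + (q * s - a) := by
  rcases ha.eq_or_lt with h0 | h0
  · subst h0
    simp only [Real.negMulLog_zero, zero_mul, neg_zero, sub_zero, zero_add, add_zero]
    positivity
  · have hs : 0 < s := lt_of_lt_of_le h0 has
    have hq0 : 0 < q := lt_of_le_of_ne hq fun h1 => h0.ne' (h h1.symm)
    have h1 := Real.log_le_sub_one_of_pos (show 0 < q * s / a by positivity)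
    rw [Real.log_div (by positivity) h0.ne', Real.log_mul hq0.ne' hs.ne'] at h1
    have h2 := mul_le_mul_of_nonneg_left h1 h0.le
    have h3 : a * (q * s / a - 1) = q * s - a := by field_simp
    rw [h3] at h2
    rw [Real.negMulLog]
    linarith

theorem gibbs_fin {ι κ : Type*} [Fintype ι] [Fintype κ] (r q : ι → κ → ℝ) (hr : ∀ i k, 0 ≤ r i k)
    (hq : ∀ i k, 0 ≤ q i k) (hq1 : ∀ k, ∑ i, q i k ≤ 1) (h : ∀ i k, q i k = 0 → r i k = 0) :
    ∑ k, ∑ i, Real.negMulLog (r i k) - ∑ k, Real.negMulLog (∑ i, r i k) ≤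
      -∑ k, ∑ i, r i k * Real.log (q i k) := by
  rw [← Finset.sum_sub_distrib, ← Finset.sum_neg_distrib]
  refine Finset.sum_le_sum fun k _ => ?_
  set s := ∑ i, r i k with hs
  have hs0 : 0 ≤ s := Finset.sum_nonneg fun i _ => hr i k
  have h1 : ∑ i, (Real.negMulLog (r i k) + r i k * Real.log s) ≤
      ∑ i, (-(r i k * Real.log (q i k)) + (q i k * s - r i k)) :=
    Finset.sum_le_sum fun i _ => gibbs_term (hr i k)
      (Finset.single_le_sum (f := fun i => r i k) (fun i _ => hr i k) (Finset.mem_univ i)) (hq i k) (h i k)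
  rw [Finset.sum_add_distrib, Finset.sum_add_distrib, Finset.sum_sub_distrib, ← Finset.sum_mul,
    ← Finset.sum_mul, Finset.sum_neg_distrib, ← hs] at h1
  have h2 := mul_le_mul_of_nonneg_right (hq1 k) hs0
  rw [Real.negMulLog]
  linarith

def PR {Ω ι : Type*} [MeasurableSpace Ω] (μ : Measure Ω) (f : Ω → ι) (i : ι) : ℝ := μ.real (f ⁻¹' {i})

def HH {Ω ι : Type*} [MeasurableSpace Ω] [Fintype ι] (μ : Measure Ω) (f : Ω → ι) : ℝ :=
  ∑ i, Real.negMulLog (PR μ f i)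

def CH {Ω ι κ : Type*} [MeasurableSpace Ω] [Fintype ι] [Fintype κ] (μ : Measure Ω) (f : Ω → ι)
    (g : Ω → κ) : ℝ := HH μ (fun x => (f x, g x)) - HH μ g

def MC {Ω ι : Type*} [MeasurableSpace Ω] (f : Ω → ι) : Prop := ∀ i, MeasurableSet (f ⁻¹' {i})

section codes
variable {Ω Ω' ι κ l : Type*} [MeasurableSpace Ω] [MeasurableSpace Ω'] [Fintype ι] [Fintype κ] [Fintype l]
  {μ : Measure Ω} {f : Ω → ι} {g : Ω → κ} {h : Ω → l}

theorem MC.prod {ι κ : Type*} {f : Ω → ι} {g : Ω → κ} (hf : MC f) (hg : MC g) : MC fun x => (f x, g x) := by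
  rintro ⟨i, k⟩
  have : (fun x => (f x, g x)) ⁻¹' {(i, k)} = f ⁻¹' {i} ∩ g ⁻¹' {k} := by
    ext x; simp
  rw [this]
  exact (hf i).inter (hg k)

theorem MC.pi {α ι : Type*} [Finite α] {f : α → Ω → ι} (hf : ∀ a, MC (f a)) : MC fun x a => f a x := by
  intro w
  have : (fun x a => f a x) ⁻¹' {w} = ⋂ a, f a ⁻¹' {w a} := by
    ext x; simp [funext_iff]
  rw [this]
  exact MeasurableSet.iInter fun a => hf a _

theorem MC.comp_meas {ι : Type*} {f : Ω → ι} (hf : MC f) {s : Ω' → Ω} (hs : Measurable s) : MC fun x => f (s x) :=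
  fun i => hs (hf i)

theorem PR_nonneg {ι : Type*} {f : Ω → ι} (i : ι) : 0 ≤ PR μ f i := measureReal_nonneg

theorem PR_comp [IsFiniteMeasure μ] {κ : Type*} (hf : MC f) (φ : ι → κ) [DecidableEq κ] (k : κ) :
    PR μ (fun x => φ (f x)) k = ∑ i with φ i = k, PR μ f i := by
  unfold PR
  rw [← measureReal_biUnion_finset]
  · congr 1
    ext x; simp
  · intro i _ j _ hij
    refine Set.disjoint_left.2 fun x hx hx' => hij ?_
    simp only [mem_preimage, mem_singleton_iff] at hx hx'
    rw [← hx, ← hx']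
  · exact fun i _ => hf i

theorem PR_sum [IsProbabilityMeasure μ] (hf : MC f) : ∑ i, PR μ f i = 1 := by
  have := PR_comp (μ := μ) hf (fun _ => ()) ()
  simp only [Finset.filter_true] at this
  rw [← this]
  simp [PR]

theorem PR_snd [IsFiniteMeasure μ] (hf : MC f) (hg : MC g) (k : κ) :
    PR μ g k = ∑ i, PR μ (fun x => (f x, g x)) (i, k) := by
  classical
  have := PR_comp (μ := μ) (hf.prod hg) Prod.snd k
  simp only at this
  change PR μ g k = _ at this
  rw [this]
  symm
  refine Finset.sum_bij' (fun i _ => (i, k)) (fun p _ => p.1) ?_ ?_ ?_ ?_ ?_ <;> simp <;> tauto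

theorem PR_fst [IsFiniteMeasure μ] (hf : MC f) (hg : MC g) (i : ι) :
    PR μ f i = ∑ k, PR μ (fun x => (f x, g x)) (i, k) := by
  classical
  have := PR_comp (μ := μ) (hf.prod hg) Prod.fst i
  simp only at this
  change PR μ f i = _ at this
  rw [this]
  symm
  refine Finset.sum_bij' (fun k _ => (i, k)) (fun p _ => p.2) ?_ ?_ ?_ ?_ ?_ <;> simp <;> tauto

theorem PR_le_snd [IsFiniteMeasure μ] (p : ι × κ) :
    PR μ (fun x => (f x, g x)) p ≤ PR μ g p.2 :=
  measureReal_mono (fun x hx => by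
    simp only [mem_preimage, mem_singleton_iff] at hx ⊢
    rw [← hx])

theorem HH_pair_eq : HH μ (fun x => (f x, g x)) =
    ∑ k, ∑ i, Real.negMulLog (PR μ (fun x => (f x, g x)) (i, k)) := by
  unfold HH
  rw [Fintype.sum_prod_type, Finset.sum_comm]

theorem gibbs_meas [IsFiniteMeasure μ] (hf : MC f) (hg : MC g) (q : ι → κ → ℝ)
    (hq : ∀ i k, 0 ≤ q i k) (hq1 : ∀ k, ∑ i, q i k ≤ 1)
    (h : ∀ i k, q i k = 0 → PR μ (fun x => (f x, g x)) (i, k) = 0) :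
    CH μ f g ≤ -∑ k, ∑ i, PR μ (fun x => (f x, g x)) (i, k) * Real.log (q i k) := by
  unfold CH
  rw [HH_pair_eq]
  have e : HH μ g = ∑ k, Real.negMulLog (∑ i, PR μ (fun x => (f x, g x)) (i, k)) := by
    unfold HH
    exact Finset.sum_congr rfl fun k _ => by rw [PR_snd hf hg]
  rw [e]
  exact gibbs_fin (fun i k => PR μ (fun x => (f x, g x)) (i, k)) q (fun i k => PR_nonneg _) hq hq1 h

/-- the conditional entropy as a cross entropy -/
theorem CH_eq [IsFiniteMeasure μ] (hf : MC f) (hg : MC g) :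
    CH μ f g = -∑ k, ∑ i, PR μ (fun x => (f x, g x)) (i, k) *
      Real.log (PR μ (fun x => (f x, g x)) (i, k) / PR μ g k) := by
  unfold CH
  rw [HH_pair_eq]
  unfold HH
  rw [← Finset.sum_sub_distrib, ← Finset.sum_neg_distrib]
  refine Finset.sum_congr rfl fun k _ => ?_
  have e : Real.negMulLog (PR μ g k) = ∑ i, -(PR μ (fun x => (f x, g x)) (i, k) * Real.log (PR μ g k)) := by
    rw [Finset.sum_neg_distrib, ← Finset.sum_mul, ← PR_snd hf hg, Real.negMulLog]; ring
  rw [e, ← Finset.sum_sub_distrib, ← Finset.sum_neg_distrib]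
  refine Finset.sum_congr rfl fun i _ => ?_
  set a := PR μ (fun x => (f x, g x)) (i, k) with ha
  have ha0 : 0 ≤ a := PR_nonneg _
  have hag : a ≤ PR μ g k := PR_le_snd (i, k)
  rcases ha0.eq_or_lt with h0 | h0
  · rw [← h0]; simp
  · rw [Real.log_div h0.ne' (h0.trans_le hag).ne', Real.negMulLog]; ring

theorem ratio_sum_le [IsFiniteMeasure μ] (hf : MC f) (hg : MC g) (k : κ) :
    ∑ i, PR μ (fun x => (f x, g x)) (i, k) / PR μ g k ≤ 1 := by
  rw [← Finset.sum_div, ← PR_snd hf hg]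
  exact div_self_le_one _

/-- strong subadditivity -/
theorem CH_ssa [IsFiniteMeasure μ] (hf : MC f) (hg : MC g) (hh : MC h) :
    CH μ f (fun x => (g x, h x)) ≤ CH μ f h := by
  rw [CH_eq hf hh]
  refine (gibbs_meas hf (hg.prod hh)
    (fun i p => PR μ (fun x => (f x, h x)) (i, p.2) / PR μ h p.2) (fun i p => div_nonneg (PR_nonneg _) (PR_nonneg _))
    (fun p => ratio_sum_le hf hh p.2) ?_).trans (le_of_eq ?_)
  · rintro i ⟨j, k⟩ h0
    have h1 : PR μ (fun x => (f x, (g x, h x))) (i, (j, k)) ≤ PR μ (fun x => (f x, h x)) (i, k) :=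
      measureReal_mono (fun x hx => by
        simp only [mem_preimage, mem_singleton_iff, Prod.mk.injEq] at hx ⊢
        exact ⟨hx.1, hx.2.2⟩)
    have h2 : PR μ (fun x => (f x, h x)) (i, k) ≤ PR μ h k := PR_le_snd (i, k)
    have h3 : PR μ (fun x => (f x, h x)) (i, k) = 0 := by
      rcases div_eq_zero_iff.1 h0 with h4 | h4
      · exact h4
      · exact le_antisymm (h2.trans h4.le) (PR_nonneg _)
    exact le_antisymm (h1.trans h3.le) (PR_nonneg _)
  · congr 1
    rw [Fintype.sum_prod_type, Finset.sum_comm]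
    refine Finset.sum_congr rfl fun k _ => ?_
    rw [Finset.sum_comm]
    refine Finset.sum_congr rfl fun i _ => ?_
    simp only
    rw [← Finset.sum_mul]
    congr 1
    have e := PR_snd (μ := μ) hg (hf.prod hh) (i, k)
    rw [e]
    refine Finset.sum_congr rfl fun j _ => ?_
    unfold PR
    congr 1
    ext x
    simp only [mem_preimage, mem_singleton_iff, Prod.mk.injEq]
    tauto

theorem negMulLog_sum_le {α : Type*} (s : Finset α) (a : α → ℝ) (ha : ∀ i ∈ s, 0 ≤ a i) :
    Real.negMulLog (∑ i ∈ s, a i) ≤ ∑ i ∈ s, Real.negMulLog (a i) := by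
  have : Real.negMulLog (∑ i ∈ s, a i) = ∑ i ∈ s, -(a i * Real.log (∑ j ∈ s, a j)) := by
    rw [Finset.sum_neg_distrib, ← Finset.sum_mul, Real.negMulLog]; ring
  rw [this]
  refine Finset.sum_le_sum fun i hi => ?_
  rcases (ha i hi).eq_or_lt with h0 | h0
  · rw [← h0]; simp
  · have h1 : a i ≤ ∑ j ∈ s, a j := Finset.single_le_sum ha hi
    have h2 := Real.log_le_log h0 h1
    rw [Real.negMulLog]
    nlinarith

theorem HH_comp_le [IsFiniteMeasure μ] (hf : MC f) (φ : ι → κ) : HH μ (fun x => φ (f x)) ≤ HH μ f := by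
  classical
  unfold HH
  have e : ∑ i, Real.negMulLog (PR μ f i) = ∑ k, ∑ i with φ i = k, Real.negMulLog (PR μ f i) :=
    (Finset.sum_fiberwise _ _ _).symm
  rw [e]
  refine Finset.sum_le_sum fun k _ => ?_
  rw [PR_comp hf]
  exact negMulLog_sum_le _ _ fun i _ => PR_nonneg i

theorem HH_mono [IsProbabilityMeasure μ] (hf : MC f) (hgf : ∀ x y, f x = f y → g x = g y) :
    HH μ g ≤ HH μ f := by
  have hne : Nonempty Ω := by
    by_contra hn
    rw [not_nonempty_iff] at hn
    have := measure_univ (μ := μ)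
    rw [Set.univ_eq_empty_iff.2 hn, measure_empty] at this
    exact zero_ne_one this
  haveI : Nonempty κ := hne.map g
  obtain ⟨φ, hφ⟩ := (Function.factorsThrough_iff (f := f) g).1 fun x y hxy => hgf x y hxy
  have : g = fun x => φ (f x) := hφ
  rw [this]
  exact HH_comp_le hf φ

theorem HH_congr [IsProbabilityMeasure μ] (hf : MC f) (hg : MC g) (hgf : ∀ x y, f x = f y ↔ g x = g y) :
    HH μ g = HH μ f :=
  le_antisymm (HH_mono hf fun x y => (hgf x y).1) (HH_mono hg fun x y => (hgf x y).2)

theorem CH_nonneg [IsProbabilityMeasure μ] (hf : MC f) (hg : MC g) : 0 ≤ CH μ f g := by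
  have := HH_mono (μ := μ) (g := g) (hf.prod hg) (fun x y hxy => (Prod.mk.inj hxy).2)
  unfold CH; linarith

theorem CH_anti [IsProbabilityMeasure μ] (hf : MC f) (hg : MC g) (hh : MC h)
    (hgh : ∀ x y, g x = g y → h x = h y) : CH μ f g ≤ CH μ f h := by
  have h1 := CH_ssa (μ := μ) hf hg hh
  have h2 : CH μ f (fun x => (g x, h x)) = CH μ f g := by
    unfold CH
    rw [HH_congr (hf.prod hg) (hf.prod (hg.prod hh)), HH_congr hg (hg.prod hh)]
    · intro x y; simp only [Prod.mk.injEq]; exact ⟨fun e => ⟨e, hgh x y e⟩, fun e => e.1⟩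
    · intro x y; simp only [Prod.mk.injEq]; exact ⟨fun e => ⟨e.1, e.2, hgh x y e.2⟩, fun e => ⟨e.1, e.2.1⟩⟩
  linarith

theorem HH_unit [IsProbabilityMeasure μ] : HH μ (fun _ => ()) = 0 := by
  simp [HH, PR]

theorem HH_pair_le [IsProbabilityMeasure μ] (hf : MC f) (hg : MC g) :
    HH μ (fun x => (f x, g x)) ≤ HH μ f + HH μ g := by
  have hu : MC (fun _ : Ω => ()) := fun i => by simp
  have h1 := CH_anti (μ := μ) hf hg hu (fun _ _ _ => rfl)
  have h2 : HH μ (fun x => (f x, ())) = HH μ f := HH_congr hf (hf.prod hu) (by simp)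
  unfold CH at h1
  rw [h2, HH_unit] at h1
  linarith

theorem HH_le_log_card [IsProbabilityMeasure μ] (hf : MC f) (S : Finset ι)
    (hS : ∀ i, i ∉ S → PR μ f i = 0) : HH μ f ≤ Real.log S.card := by
  classical
  have hu : MC (fun _ : Ω => ()) := fun i => by simp
  have h2 : HH μ (fun x => (f x, ())) = HH μ f := HH_congr hf (hf.prod hu) (by simp)
  have hP : ∀ i, PR μ (fun x => (f x, ())) (i, ()) = PR μ f i := by
    intro i; unfold PR; congr 1; ext x; simp
  have h1 := gibbs_meas (μ := μ) hf hu (fun i _ => if i ∈ S then (1 / S.card : ℝ) else 0)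
    (fun i _ => by split_ifs <;> positivity) (fun _ => by
      rw [Finset.sum_ite_mem, Finset.univ_inter, Finset.sum_const, nsmul_eq_mul, mul_one_div]
      exact div_self_le_one _) (by
      intro i k h0
      change PR μ (fun x => (f x, ())) (i, ()) = 0
      rw [hP]
      by_cases hi : i ∈ S
      · rw [if_pos hi] at h0
        exfalso
        have : S.card ≠ 0 := Finset.card_ne_zero_of_mem hi
        have : (S.card : ℝ) ≠ 0 := by exact_mod_cast this
        exact this (by simpa using h0)
      · exact hS i hi)
  unfold CH at h1
  rw [HH_unit, h2, sub_zero] at h1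
  refine h1.trans (le_of_eq ?_)
  simp only [Finset.univ_unique, Finset.sum_singleton]
  change -∑ i, PR μ (fun x => (f x, ())) (i, ()) * _ = _
  have : ∀ i, PR μ (fun x => (f x, ())) (i, ()) * Real.log (if i ∈ S then (1 / S.card : ℝ) else 0) =
      PR μ f i * (-Real.log S.card) := by
    intro i
    rw [hP]
    by_cases hi : i ∈ S
    · rw [if_pos hi, one_div, Real.log_inv]
    · rw [hS i hi]; ring
  rw [Finset.sum_congr rfl fun i _ => this i, ← Finset.sum_mul, PR_sum hf]
  ring

/-- chain rule plus strong subadditivity -/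
theorem CH_pair_le {ι₁ κ₁ : Type*} [Fintype ι₁] [Fintype κ₁] {f₁ : Ω → ι₁} {g₁ : Ω → κ₁}
    [IsProbabilityMeasure μ] (hf : MC f) (hg : MC g) (hf₁ : MC f₁) (hg₁ : MC g₁) :
    CH μ (fun x => (f x, f₁ x)) (fun x => (g x, g₁ x)) ≤ CH μ f g + CH μ f₁ g₁ := by
  have e : CH μ (fun x => (f x, f₁ x)) (fun x => (g x, g₁ x)) =
      CH μ f (fun x => (g x, g₁ x)) + CH μ f₁ (fun x => (f x, (g x, g₁ x))) := by
    unfold CH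
    have : HH μ (fun x => ((f x, f₁ x), (g x, g₁ x))) = HH μ (fun x => (f₁ x, (f x, (g x, g₁ x)))) :=
      HH_congr (hf₁.prod (hf.prod (hg.prod hg₁))) ((hf.prod hf₁).prod (hg.prod hg₁))
        (fun x y => by simp only [Prod.mk.injEq]; tauto)
    rw [this]; ring
  rw [e]
  refine add_le_add (CH_anti hf (hg.prod hg₁) hg ?_) (CH_anti hf₁ (hf.prod (hg.prod hg₁)) hg₁ ?_)
  · intro x y h; exact (Prod.mk.inj h).1
  · intro x y h; exact (Prod.mk.inj (Prod.mk.inj h).2).2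

/-- concavity of conditional entropy -/
theorem CH_concave {μ : Measure Ω} [IsFiniteMeasure μ] {N : ℕ} {c : ℝ} (hc : 0 < c) (ν : ℕ → Measure Ω)
    [∀ t, IsFiniteMeasure (ν t)]
    (hμ : ∀ A, MeasurableSet A → μ.real A = c * ∑ t ∈ Finset.range N, (ν t).real A)
    (hf : MC f) (hg : MC g) :
    c * ∑ t ∈ Finset.range N, CH (ν t) f g ≤ CH μ f g := by
  have hP : ∀ p, PR μ (fun x => (f x, g x)) p = c * ∑ t ∈ Finset.range N, PR (ν t) (fun x => (f x, g x)) p :=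
    fun p => hμ _ (hf.prod hg p)
  have hz : ∀ t ∈ Finset.range N, ∀ p, PR μ (fun x => (f x, g x)) p = 0 → PR (ν t) (fun x => (f x, g x)) p = 0 := by
    intro t ht p h0
    rw [hP, mul_eq_zero] at h0
    have h1 := h0.resolve_left hc.ne'
    exact (Finset.sum_eq_zero_iff_of_nonneg fun t _ => PR_nonneg p).1 h1 t ht
  have h1 : ∀ t ∈ Finset.range N, CH (ν t) f g ≤ -∑ k, ∑ i, PR (ν t) (fun x => (f x, g x)) (i, k) *
      Real.log (PR μ (fun x => (f x, g x)) (i, k) / PR μ g k) := by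
    intro t ht
    refine gibbs_meas hf hg (fun i k => PR μ (fun x => (f x, g x)) (i, k) / PR μ g k)
      (fun i p => div_nonneg (PR_nonneg _) (PR_nonneg _)) (fun k => ratio_sum_le hf hg k) ?_
    intro i k h0
    apply hz t ht
    have h2 : PR μ (fun x => (f x, g x)) (i, k) ≤ PR μ g k := PR_le_snd (i, k)
    rcases div_eq_zero_iff.1 h0 with h4 | h4
    · exact h4
    · exact le_antisymm (h2.trans h4.le) (PR_nonneg _)
  refine (mul_le_mul_of_nonneg_left (Finset.sum_le_sum h1) hc.le).trans (le_of_eq ?_)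
  rw [CH_eq hf hg, Finset.sum_neg_distrib, mul_neg]
  congr 1
  rw [Finset.sum_comm, Finset.mul_sum]
  refine Finset.sum_congr rfl fun k _ => ?_
  rw [Finset.sum_comm, Finset.mul_sum]
  refine Finset.sum_congr rfl fun i _ => ?_
  rw [← Finset.sum_mul, hP]
  ring

theorem PR_map {s : Ω → Ω'} (hs : Measurable s) {ι : Type*} {f : Ω' → ι} (hf : MC f) (i : ι) :
    PR (μ.map s) f i = PR μ (fun x => f (s x)) i := by
  unfold PR
  rw [map_measureReal_apply hs (hf i)]
  rfl

theorem HH_map {s : Ω → Ω'} (hs : Measurable s) {f : Ω' → ι} (hf : MC f) :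
    HH (μ.map s) f = HH μ (fun x => f (s x)) := by
  unfold HH
  exact Finset.sum_congr rfl fun i _ => by rw [PR_map hs hf]

theorem CH_map {s : Ω → Ω'} (hs : Measurable s) {f : Ω' → ι} {g : Ω' → κ} (hf : MC f) (hg : MC g) :
    CH (μ.map s) f g = CH μ (fun x => f (s x)) (fun x => g (s x)) := by
  unfold CH
  rw [HH_map hs hg, HH_map hs (hf.prod hg)]
end codes

def IT {Ω ι : Type*} (T : Ω → Ω) (f : Ω → ι) (n : ℕ) (x : Ω) : Fin n → ι := fun i => f (T^[i] x)

def fib {Ω ι : Type*} [Fintype ι] (f : Ω → ι) : Finset (Set Ω) :=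
  letI := Classical.decEq (Set Ω)
  Finset.univ.image fun i => f ⁻¹' {i}

theorem IT_succ_iff {Ω ι : Type*} {T : Ω → Ω} {f : Ω → ι} {n : ℕ} {x y : Ω} :
    IT T f (n + 1) x = IT T f (n + 1) y ↔ IT T f n x = IT T f n y ∧ f (T^[n] x) = f (T^[n] y) := by
  unfold IT
  simp only [funext_iff]
  constructor
  · intro h
    exact ⟨fun i => h i.castSucc, h (Fin.last n)⟩
  · rintro ⟨h1, h2⟩ i
    refine Fin.lastCases ?_ (fun i => ?_) i
    · exact h2
    · exact h1 i

theorem fib_dyn {Ω ι : Type*} [Fintype ι] (T : Ω → Ω) (f : Ω → ι) (n : ℕ) :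
    dynCov T (fib f) n = fib (IT T f n) := by
  classical
  induction n with
  | zero =>
    unfold dynCov fib
    ext A
    simp only [Finset.mem_singleton, Finset.mem_image, Finset.mem_univ, true_and]
    constructor
    · rintro rfl
      refine ⟨fun i => i.elim0, ?_⟩
      ext x
      simp only [mem_preimage, mem_singleton_iff, mem_univ, iff_true]
      exact Subsingleton.elim _ _
    · rintro ⟨w, rfl⟩
      ext x
      simp only [mem_preimage, mem_singleton_iff, mem_univ, iff_true]
      exact Subsingleton.elim _ _
  | succ n ih =>
    unfold dynCov covJoin
    rw [ih]
    unfold fib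
    ext A
    simp only [Finset.mem_image, Finset.mem_product, Finset.mem_univ, true_and, Prod.exists]
    constructor
    · rintro ⟨_, _, ⟨⟨w, rfl⟩, ⟨_, ⟨i, rfl⟩, rfl⟩⟩, rfl⟩
      refine ⟨Fin.snoc (α := fun _ => ι) w i, ?_⟩
      ext x
      simp only [mem_preimage, mem_singleton_iff, mem_inter_iff, IT, funext_iff]
      constructor
      · intro h
        refine ⟨fun j => ?_, ?_⟩
        · have := h j.castSucc
          simpa using this
        · have := h (Fin.last n)
          simpa using this
      · rintro ⟨h1, h2⟩ j
        refine Fin.lastCases ?_ (fun j => ?_) j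
        · simpa using h2
        · simpa using h1 j
    · rintro ⟨w, rfl⟩
      refine ⟨_, _, ⟨⟨fun j => w j.castSucc, rfl⟩, ⟨_, ⟨w (Fin.last n), rfl⟩, rfl⟩⟩, ?_⟩
      ext x
      simp only [mem_preimage, mem_singleton_iff, mem_inter_iff, IT, funext_iff]
      constructor
      · rintro ⟨h1, h2⟩ j
        refine Fin.lastCases ?_ (fun j => ?_) j
        · simpa using h2
        · simpa using h1 j
      · intro h
        refine ⟨fun j => ?_, ?_⟩
        · have := h j.castSucc
          simpa using this
        · have := h (Fin.last n)
          simpa using this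

theorem partEnt_fib {Ω ι : Type*} [MeasurableSpace Ω] [Fintype ι] (μ : Measure Ω) (f : Ω → ι) :
    partEnt μ (fib f) = HH μ f := by
  classical
  unfold partEnt HH fib
  have e : ∀ i, Real.negMulLog (PR μ f i) =
      -((μ (f ⁻¹' {i})).toReal * Real.log (μ (f ⁻¹' {i})).toReal) := by
    intro i; simp [PR, Real.negMulLog, Measure.real]
  rw [Finset.sum_congr rfl fun i _ => e i]
  refine Finset.sum_image_of_disjoint (f := fun i => f ⁻¹' {i}) (I := Finset.univ)
    (g := fun A : Set Ω => -((μ A).toReal * Real.log (μ A).toReal)) ?_ ?_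
  · simp
  · intro i _ j _ hij
    refine Set.disjoint_left.2 fun x hx hx' => hij ?_
    simp only [mem_preimage, mem_singleton_iff] at hx hx'
    rw [← hx, ← hx']

theorem fib_part {Ω ι : Type*} [MeasurableSpace Ω] [Fintype ι] {f : Ω → ι} (hf : MC f) :
    IsFinPartition (fib f) := by
  classical
  unfold fib
  refine ⟨?_, ?_, ?_⟩
  · intro A hA
    simp only [Finset.mem_image, Finset.mem_univ, true_and] at hA
    obtain ⟨i, rfl⟩ := hA
    exact hf i
  · refine eq_univ_of_forall fun x => ?_
    refine mem_sUnion.2 ⟨f ⁻¹' {f x}, ?_, by simp⟩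
    simp
  · intro A hA B hB hAB
    simp only [Finset.coe_image, Finset.coe_univ, image_univ, mem_range] at hA hB
    obtain ⟨i, rfl⟩ := hA
    obtain ⟨j, rfl⟩ := hB
    refine Set.disjoint_left.2 fun x hx hx' => hAB ?_
    simp only [mem_preimage, mem_singleton_iff] at hx hx'
    rw [← hx, ← hx']

theorem ks_ge {Ω ι : Type*} [MeasurableSpace Ω] [Fintype ι] {T : Ω → Ω} {μ : Measure Ω} {f : Ω → ι}
    (hf : MC f) {c : ℝ} (h : ∀ n : ℕ, c * (n + 1) ≤ HH μ (IT T f (n + 1))) :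
    (c : EReal) ≤ ksEntropy T μ := by
  unfold ksEntropy
  refine le_trans ?_ (le_iSup₂ (f := fun (P : Finset (Set Ω)) (_ : IsFinPartition P) =>
    ⨅ n : ℕ, ((partEnt μ (dynCov T P (n + 1)) / (n + 1) : ℝ) : EReal)) (fib f) (fib_part hf))
  refine le_iInf fun n => ?_
  rw [fib_dyn, partEnt_fib, EReal.coe_le_coe_iff, le_div_iff₀ (by positivity)]
  exact h n

/-- every finite partition comes from a code -/
theorem part_code {Ω : Type*} [MeasurableSpace Ω] {P : Finset (Set Ω)} (hP : IsFinPartition P) :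
    ∃ c : Ω → {A // A ∈ P}, MC c ∧ fib c = P := by
  classical
  obtain ⟨h1, h2, h3⟩ := hP
  have h4 : ∀ x, ∃ A : {A // A ∈ P}, x ∈ A.1 := by
    intro x
    have : x ∈ ⋃₀ (↑P : Set (Set Ω)) := by rw [h2]; trivial
    obtain ⟨A, hA, hx⟩ := mem_sUnion.1 this
    exact ⟨⟨A, hA⟩, hx⟩
  choose c hc using h4
  have h5 : ∀ A : {A // A ∈ P}, c ⁻¹' {A} = A.1 := by
    intro A
    ext x
    simp only [mem_preimage, mem_singleton_iff]
    constructor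
    · rintro rfl; exact hc x
    · intro hx
      by_contra hne
      exact Set.disjoint_left.1 (h3 (c x).2 A.2 (fun e => hne (Subtype.ext e))) (hc x) hx
  refine ⟨c, fun A => by rw [h5]; exact h1 _ A.2, ?_⟩
  unfold fib
  ext A
  simp [h5]

/-- upper bounds for the entropy, checked on codes -/
theorem ks_le {Ω : Type*} [MeasurableSpace Ω] {T : Ω → Ω} {μ : Measure Ω} {a : EReal}
    (h : ∀ (P : Finset (Set Ω)) (c : Ω → {A // A ∈ P}), MC c →
      ⨅ n : ℕ, ((HH μ (IT T c (n + 1)) / (n + 1) : ℝ) : EReal) ≤ a) : ksEntropy T μ ≤ a := by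
  unfold ksEntropy
  refine iSup₂_le fun P hP => ?_
  obtain ⟨c, hc, hcP⟩ := part_code hP
  have h1 := h P c hc
  have : ∀ n, partEnt μ (dynCov T P (n + 1)) = HH μ (IT T c (n + 1)) := by
    intro n
    conv_lhs => rw [← hcP]
    rw [fib_dyn, partEnt_fib]
  simpa only [this] using h1

theorem MC.post {Ω ι κ : Type*} [MeasurableSpace Ω] {f : Ω → ι} [Finite ι] (hf : MC f) (φ : ι → κ) : MC fun x => φ (f x) := by
  intro k
  have : (fun x => φ (f x)) ⁻¹' {k} = ⋃ i ∈ {i | φ i = k}, f ⁻¹' {i} := by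
    ext x; simp
  rw [this]
  exact MeasurableSet.biUnion (Set.to_countable _) fun i _ => hf i

theorem MC.of_sets {Ω ι : Type*} [MeasurableSpace Ω] [Finite ι] {B : ι → Set Ω} (h : ∀ i, MeasurableSet (B i)) :
    MC (fun x i => x ∈ B i) := by
  refine MC.pi (f := fun i x => x ∈ B i) fun i p => ?_
  by_cases hp : p
  · convert h i using 1
    ext x; simp [hp]
  · convert (h i).compl using 1
    ext x; simp [hp]
def LC {Ω ι : Type*} [MeasurableSpace Ω] [TopologicalSpace Ω] (μ : Measure Ω) (f : Ω → ι) : Prop :=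
  ∀ᵐ x ∂μ, ∀ᶠ y in 𝓝 x, f y = f x

section lc
variable {Ω Ω' ι κ : Type*} [MeasurableSpace Ω] [TopologicalSpace Ω] [MeasurableSpace Ω'] [TopologicalSpace Ω']
  {μ : Measure Ω} {f : Ω → ι} {g : Ω → κ}

theorem LC.prod (hf : LC μ f) (hg : LC μ g) : LC μ fun x => (f x, g x) := by
  filter_upwards [hf, hg] with x h1 h2
  filter_upwards [h1, h2] with y h3 h4
  rw [h3, h4]

theorem LC.pi {α : Type*} [Finite α] {f : α → Ω → ι} (hf : ∀ a, LC μ (f a)) : LC μ fun x a => f a x := by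
  have : ∀ᵐ x ∂μ, ∀ a, ∀ᶠ y in 𝓝 x, f a y = f a x := ae_all_iff.2 hf
  filter_upwards [this] with x h1
  filter_upwards [eventually_all.2 h1] with y h3
  exact funext h3

theorem LC.post (hf : LC μ f) (φ : ι → κ) : LC μ fun x => φ (f x) := by
  filter_upwards [hf] with x h1
  filter_upwards [h1] with y h3
  rw [h3]

theorem LC.comp {f : Ω' → ι} {s : Ω → Ω'} (hs : Continuous s) (hm : Measurable s) (hf : LC (μ.map s) f) :
    LC μ fun x => f (s x) := by
  filter_upwards [ae_of_ae_map hm.aemeasurable hf] with x h1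
  exact hs.continuousAt.eventually h1

theorem LC.of_frontier [Finite ι] {B : ι → Set Ω} (h : ∀ i, μ (frontier (B i)) = 0) :
    LC μ (fun x i => x ∈ B i) := by
  refine LC.pi fun i => ?_
  have : ∀ᵐ x ∂μ, x ∉ frontier (B i) := by
    rw [ae_iff]; simpa using h i
  filter_upwards [this] with x hx
  by_cases hxB : x ∈ B i
  · have : B i ∈ 𝓝 x := by
      rw [← mem_interior_iff_mem_nhds]
      by_contra h2
      exact hx ⟨subset_closure hxB, h2⟩
    filter_upwards [this] with y hy
    simp [hxB, hy]
  · have : (B i)ᶜ ∈ 𝓝 x := by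
      rw [← mem_interior_iff_mem_nhds, interior_compl]
      intro h2
      exact hx ⟨h2, fun h3 => hxB (interior_subset h3)⟩
    filter_upwards [this] with y hy
    have hy' : y ∉ B i := hy
    simp [hxB, hy']

theorem LC.frontier (hf : LC μ f) (i : ι) : μ (frontier (f ⁻¹' {i})) = 0 := by
  refine measure_mono_null ?_ (ae_iff.1 hf)
  intro x hx hx2
  by_cases hxi : f x = i
  · refine hx.2 (mem_interior_iff_mem_nhds.2 ?_)
    filter_upwards [hx2] with y hy
    simp [hy, hxi]
  · have := mem_closure_iff_frequently.1 hx.1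
    refine this ?_
    filter_upwards [hx2] with y hy
    simp [hy, hxi]

theorem HH_tendsto [OpensMeasurableSpace Ω] [HasOuterApproxClosed Ω] [Fintype ι] {α : Type*} {L : Filter α}
    {μ : ProbabilityMeasure Ω} {μs : α → ProbabilityMeasure Ω} (h : Tendsto μs L (𝓝 μ))
    (hf : LC (μ : Measure Ω) f) :
    Tendsto (fun k => HH (μs k : Measure Ω) f) L (𝓝 (HH (μ : Measure Ω) f)) := by
  unfold HH
  refine tendsto_finsetSum _ fun i _ => ?_
  refine (Real.continuous_negMulLog.tendsto _).comp ?_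
  have := ProbabilityMeasure.tendsto_measure_of_null_frontier_of_tendsto' h (hf.frontier i)
  exact (ENNReal.tendsto_toReal (measure_ne_top _ _)).comp this

theorem CH_tendsto [OpensMeasurableSpace Ω] [HasOuterApproxClosed Ω] [Fintype ι] [Fintype κ] {α : Type*}
    {L : Filter α} {μ : ProbabilityMeasure Ω} {μs : α → ProbabilityMeasure Ω} (h : Tendsto μs L (𝓝 μ))
    (hf : LC (μ : Measure Ω) f) (hg : LC (μ : Measure Ω) g) :
    Tendsto (fun k => CH (μs k : Measure Ω) f g) L (𝓝 (CH (μ : Measure Ω) f g)) :=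
  (HH_tendsto h (hf.prod hg)).sub (HH_tendsto h hg)

end lc

theorem exists_sep {ι : Type*} [Finite ι] [MetricSpace X] (C : ι → Set X) (hC : ∀ i, IsCompact (C i))
    (hd : ∀ i j, i ≠ j → Disjoint (C i) (C j)) :
    ∃ δ > 0, ∀ i j, i ≠ j → ∀ x ∈ C i, ∀ y ∈ C j, δ < dist x y := by
  have : ∀ i j, ∀ᶠ δ : ℝ in 𝓝[>] 0, i ≠ j → ∀ x ∈ C i, ∀ y ∈ C j, δ < dist x y := by
    intro i j
    by_cases hij : i = j
    · exact Eventually.of_forall fun δ h => absurd hij h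
    · obtain ⟨r, hr, h⟩ := Metric.exists_pos_forall_lt_edist (hC i) (hC j).isClosed (hd i j hij)
      filter_upwards [Ioo_mem_nhdsGT (show (0:ℝ) < r by exact_mod_cast hr)] with δ hδ _ x hx y hy
      have h1 := h x hx y hy
      rw [edist_nndist, ENNReal.coe_lt_coe] at h1
      have h2 : (r : ℝ) < dist x y := by rw [← coe_nndist]; exact_mod_cast h1
      exact hδ.2.trans h2
  have h2 := eventually_all.2 fun i => eventually_all.2 (this i)
  obtain ⟨δ, h3, h4⟩ := (h2.and self_mem_nhdsWithin).exists
  exact ⟨δ, h4, h3⟩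

theorem approx_code {ι : Type*} [Fintype ι] [MetricSpace X] [CompactSpace X] [MeasurableSpace X] [BorelSpace X]
    (ν : Measure X) [IsProbabilityMeasure ν] {c : X → ι} (hc : MC c) {η : ℝ} (hη : 0 < η) :
    ∃ g : X → Option ι, MC g ∧ LC ν g ∧
      (∃ δ > 0, ∀ x y i j, g x = some i → g y = some j → i ≠ j → δ ≤ dist x y) ∧ CH ν c g ≤ η := by
  classical
  have hX : Nonempty X := nonempty_of_isProbabilityMeasure ν
  have : Nonempty ι := hX.map c
  set N : ℝ := (Fintype.card ι : ℝ) with hN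
  have hN1 : 1 ≤ N := by
    rw [hN]; exact_mod_cast Fintype.card_pos
  set α : ℝ := 1 - Real.exp (-(η / 2)) with hα
  have hα0 : 0 < α := by
    have : Real.exp (-(η / 2)) < 1 := by rw [← Real.exp_zero]; exact Real.exp_lt_exp.2 (by linarith)
    linarith
  have hα1 : α < 1 := by have := Real.exp_pos (-(η / 2)); linarith
  have hA : Real.log (1 - α) = -(η / 2) := by
    rw [hα, sub_sub_cancel, Real.log_exp]
  set L : ℝ := -Real.log (α / N) with hL
  have hαN : 0 < α / N := by positivity
  have hL0 : 0 ≤ L := by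
    have : Real.log (α / N) ≤ 0 := Real.log_nonpos hαN.le (by rw [div_le_one (by linarith)]; linarith)
    linarith
  set θ : ℝ := η / (2 * (N * L + 1)) with hθ
  have hNL : 0 ≤ N * L := by positivity
  have hθ0 : 0 < θ := by positivity
  have hθ2 : N * θ * L ≤ η / 2 := by
    have : N * θ * L = η / 2 * (N * L / (N * L + 1)) := by rw [hθ]; field_simp
    rw [this]
    have h2 : N * L / (N * L + 1) ≤ 1 := by rw [div_le_one (by linarith)]; linarith
    nlinarith
  have hK : ∀ i, ∃ K ⊆ c ⁻¹' {i}, IsCompact K ∧ ν (c ⁻¹' {i} \ K) < ENNReal.ofReal θ := fun i =>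
    (hc i).exists_isCompact_sdiff_lt (measure_ne_top _ _) (by simpa using hθ0)
  choose C hCs hCc hCm using hK
  obtain ⟨δ1, hδ1, hsep⟩ := exists_sep C hCc (fun i j hij => by
    refine Set.disjoint_left.2 fun x hx hx' => hij ?_
    have h1 := hCs i hx
    have h2 := hCs j hx'
    simp only [mem_preimage, mem_singleton_iff] at h1 h2
    rw [← h1, ← h2])
  have hr : ∀ i, ∃ r ∈ Set.Ioo (0:ℝ) (δ1 / 3), ν (frontier (Metric.thickening r (C i))) = 0 := fun i =>
    exists_null_frontier_thickening ν (C i) (by linarith)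
  choose r hr hrf using hr
  set B : ι → Set X := fun i => Metric.thickening (r i) (C i) with hB
  have hBsep : ∀ x y i j, x ∈ B i → y ∈ B j → i ≠ j → δ1 / 3 ≤ dist x y := by
    intro x y i j hx hy hij
    obtain ⟨x', hx', hxx⟩ := Metric.mem_thickening_iff.1 hx
    obtain ⟨y', hy', hyy⟩ := Metric.mem_thickening_iff.1 hy
    have h1 := hsep i j hij x' hx' y' hy'
    have h2 := dist_triangle x' x y'
    have h3 := dist_triangle x y y'
    rw [dist_comm x' x] at h2
    have h4 := (hr i).2
    have h5 := (hr j).2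
    linarith
  set φ : (ι → Prop) → Option ι := fun w => if h : ∃ i, w i then some h.choose else none with hφ
  have hφ1 : ∀ w i, φ w = some i → w i := by
    intro w i h
    by_cases h2 : ∃ i, w i
    · rw [hφ] at h
      simp only [dif_pos h2, Option.some.injEq] at h
      rw [← h]; exact h2.choose_spec
    · rw [hφ] at h
      simp only [dif_neg h2] at h
      exact absurd h (by simp)
  have hφ2 : ∀ w i, w i → ∃ j, φ w = some j := by
    intro w i h
    have h2 : ∃ i, w i := ⟨i, h⟩
    exact ⟨h2.choose, by rw [hφ]; simp only [dif_pos h2]⟩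
  set g : X → Option ι := fun x => φ fun i => x ∈ B i with hg
  have hgC : ∀ i, ∀ x ∈ C i, g x = some i := by
    intro i x hx
    have hxB : x ∈ B i := Metric.self_subset_thickening (hr i).1 _ hx
    obtain ⟨j, hj⟩ := hφ2 (fun i => x ∈ B i) i hxB
    have hxj : x ∈ B j := hφ1 _ j hj
    by_cases hij : i = j
    · rw [hij]; exact hj
    · have := hBsep x x i j hxB hxj hij
      rw [dist_self] at this
      linarith
  have hgM : MC g := (MC.of_sets (B := B) fun i => Metric.isOpen_thickening.measurableSet).post φ
  refine ⟨g, hgM, (LC.of_frontier hrf).post φ,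
    ⟨δ1 / 3, by linarith, fun x y i j hx hy hij => hBsep x y i j (hφ1 _ _ hx) (hφ1 _ _ hy) hij⟩, ?_⟩
  set q : ι → Option ι → ℝ := fun i k => (if k = some i then 1 - α else 0) + α / N with hq
  have hqp : ∀ i k, 0 < q i k := by
    intro i k; simp only [hq]; split_ifs <;> linarith
  have h1 := gibbs_meas (μ := ν) hc hgM q (fun i k => (hqp i k).le) (by
    intro k
    simp only [hq]
    rw [Finset.sum_add_distrib, Finset.sum_const, nsmul_eq_mul, Finset.card_univ, ← hN]
    have e : N * (α / N) = α := by field_simp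
    rw [e]
    cases k with
    | none => simp; linarith
    | some j => simp) (fun i k h => absurd h (hqp i k).ne')
  refine h1.trans ?_
  have h2 : ∀ i k, -Real.log (q i k) ≤ η / 2 + (if k = some i then 0 else L) := by
    intro i k
    by_cases hk : k = some i
    · have : Real.log (1 - α) ≤ Real.log (q i k) :=
        Real.log_le_log (by linarith) (by simp only [hq, if_pos hk]; linarith)
      rw [if_pos hk]; linarith
    · simp only [hq, if_neg hk, zero_add]
      linarith
  have h3 : -∑ k, ∑ i, PR ν (fun x => (c x, g x)) (i, k) * Real.log (q i k) ≤
      ∑ k, ∑ i, (PR ν (fun x => (c x, g x)) (i, k) * (η / 2) +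
        (PR ν (fun x => (c x, g x)) (i, k) - if k = some i then PR ν (fun x => (c x, g x)) (i, k) else 0) * L) := by
    rw [← Finset.sum_neg_distrib]
    refine Finset.sum_le_sum fun k _ => ?_
    rw [← Finset.sum_neg_distrib]
    refine Finset.sum_le_sum fun i _ => ?_
    have h4 := mul_le_mul_of_nonneg_left (h2 i k) (PR_nonneg (μ := ν) (f := fun x => (c x, g x)) (i, k))
    split_ifs at h4 ⊢ <;> linarith
  refine h3.trans ?_
  rw [Finset.sum_comm]
  have h5 : ∀ i, ∑ k, (PR ν (fun x => (c x, g x)) (i, k) * (η / 2) +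
        (PR ν (fun x => (c x, g x)) (i, k) - if k = some i then PR ν (fun x => (c x, g x)) (i, k) else 0) * L)
      ≤ PR ν c i * (η / 2) + θ * L := by
    intro i
    rw [Finset.sum_add_distrib, ← Finset.sum_mul, ← Finset.sum_mul, Finset.sum_sub_distrib, ← PR_fst hc hgM,
      Finset.sum_ite_eq' Finset.univ (some i), if_pos (Finset.mem_univ _)]
    refine add_le_add le_rfl (mul_le_mul_of_nonneg_right ?_ hL0)
    have h6 : ν.real (C i) ≤ PR ν (fun x => (c x, g x)) (i, some i) :=
      measureReal_mono fun x hx => by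
        have e1 : c x = i := hCs i hx
        simp [e1, hgC i x hx]
    have h7 : ν.real (c ⁻¹' {i} \ C i) = ν.real (c ⁻¹' {i}) - ν.real (C i) :=
      measureReal_sdiff (hCs i) (hCc i).measurableSet
    have h8 : ν.real (c ⁻¹' {i} \ C i) ≤ θ := ENNReal.toReal_le_of_le_ofReal hθ0.le (hCm i).le
    have h9 : PR ν c i = ν.real (c ⁻¹' {i}) := rfl
    linarith
  refine (Finset.sum_le_sum fun i _ => h5 i).trans ?_
  rw [Finset.sum_add_distrib, ← Finset.sum_mul, PR_sum hc, Finset.sum_const, nsmul_eq_mul, Finset.card_univ, ← hN]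
  linarith

theorem MC_IT {Ω ι : Type*} [MeasurableSpace Ω] {T : Ω → Ω} (hT : Measurable T) {f : Ω → ι} (hf : MC f) (n : ℕ) :
    MC (IT T f n) :=
  MC.pi (f := fun (i : Fin n) x => f (T^[i] x)) fun i => hf.comp_meas (hT.iterate i)

theorem map_iter {Ω : Type*} [MeasurableSpace Ω] {T : Ω → Ω} (hT : Measurable T) {μ : Measure Ω}
    (h : μ.map T = μ) (n : ℕ) : μ.map T^[n] = μ :=
  ((MeasurePreserving.mk hT h).iterate n).map_eq

theorem CH_congr {Ω ι κ ι₁ κ₁ : Type*} [MeasurableSpace Ω] [Fintype ι] [Fintype κ] [Fintype ι₁] [Fintype κ₁]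
    {μ : Measure Ω} [IsProbabilityMeasure μ] {f : Ω → ι} {g : Ω → κ} {f₁ : Ω → ι₁} {g₁ : Ω → κ₁}
    (hf : MC f) (hg : MC g) (hf₁ : MC f₁) (hg₁ : MC g₁) (h1 : ∀ x y, f x = f y ↔ f₁ x = f₁ y)
    (h2 : ∀ x y, g x = g y ↔ g₁ x = g₁ y) : CH μ f g = CH μ f₁ g₁ := by
  unfold CH
  rw [HH_congr hg hg₁ h2, HH_congr (hf.prod hg) (hf₁.prod hg₁)
    (fun x y => by simp only [Prod.mk.injEq, h1, h2])]

theorem CH_IT {Ω ι κ : Type*} [MeasurableSpace Ω] [Fintype ι] [Fintype κ] {T : Ω → Ω} (hT : Measurable T)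
    {μ : Measure Ω} [IsProbabilityMeasure μ] (hμ : μ.map T = μ) {f : Ω → ι} {g : Ω → κ} (hf : MC f) (hg : MC g)
    (n : ℕ) : CH μ (IT T f n) (IT T g n) ≤ n * CH μ f g := by
  induction n with
  | zero =>
    have : HH μ (fun x => (IT T f 0 x, IT T g 0 x)) = HH μ (IT T g 0) :=
      HH_congr (MC_IT hT hg 0) ((MC_IT hT hf 0).prod (MC_IT hT hg 0)) fun x y =>
        ⟨fun _ => Subsingleton.elim _ _, fun _ => Subsingleton.elim _ _⟩
    unfold CH
    rw [this]; simp
  | succ n ih =>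
    have hfn : MC fun x => f (T^[n] x) := hf.comp_meas (hT.iterate n)
    have hgn : MC fun x => g (T^[n] x) := hg.comp_meas (hT.iterate n)
    have e : CH μ (IT T f (n + 1)) (IT T g (n + 1)) =
        CH μ (fun x => (IT T f n x, f (T^[n] x))) (fun x => (IT T g n x, g (T^[n] x))) :=
      CH_congr (MC_IT hT hf _) (MC_IT hT hg _) ((MC_IT hT hf n).prod hfn) ((MC_IT hT hg n).prod hgn)
        (fun x y => by rw [IT_succ_iff, Prod.mk.injEq]) (fun x y => by rw [IT_succ_iff, Prod.mk.injEq])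
    rw [e]
    refine (CH_pair_le (MC_IT hT hf n) (MC_IT hT hg n) hfn hgn).trans ?_
    have e2 : CH μ (fun x => f (T^[n] x)) (fun x => g (T^[n] x)) = CH μ f g := by
      rw [← CH_map (hT.iterate n) hf hg, map_iter hT hμ]
    rw [e2]
    push_cast
    linarith

theorem HH_IT_le {Ω ι κ : Type*} [MeasurableSpace Ω] [Fintype ι] [Fintype κ] {T : Ω → Ω} (hT : Measurable T)
    {μ : Measure Ω} [IsProbabilityMeasure μ] (hμ : μ.map T = μ) {f : Ω → ι} {g : Ω → κ} (hf : MC f) (hg : MC g)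
    (n : ℕ) : HH μ (IT T f n) ≤ HH μ (IT T g n) + n * CH μ f g := by
  have h1 := CH_IT hT hμ hf hg n
  have h2 : HH μ (IT T f n) ≤ HH μ (fun x => (IT T f n x, IT T g n x)) :=
    HH_mono ((MC_IT hT hf n).prod (MC_IT hT hg n)) fun x y h => (Prod.mk.inj h).1
  have h3 : CH μ (IT T f n) (IT T g n) = HH μ (fun x => (IT T f n x, IT T g n x)) - HH μ (IT T g n) := rfl
  linarith

theorem goodwyn {ι : Type*} [Fintype ι] [MetricSpace X] [CompactSpace X] [MeasurableSpace X] [BorelSpace X]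
    {T : X → X} (hT : Continuous T) {b : ℝ} (hb : ∀ ε > 0, GB T ε univ b)
    (ν : Measure X) [IsProbabilityMeasure ν] {g : X → Option ι} (hg : MC g) {δ : ℝ} (hδ : 0 < δ)
    (hsep : ∀ x y i j, g x = some i → g y = some j → i ≠ j → δ ≤ dist x y) :
    ∃ C : ℝ, ∀ n : ℕ, HH ν (IT T g n) ≤ C + (b + Real.log 2) * n := by
  classical
  have hX : Nonempty X := nonempty_of_isProbabilityMeasure ν
  obtain ⟨C, hC⟩ := hb (δ / 3) (by linarith)
  refine ⟨Real.log C, fun n => ?_⟩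
  set W : Finset (Fin n → Option ι) := Finset.univ.filter fun w => w ∈ Set.range (IT T g n) with hW
  have h1 : HH ν (IT T g n) ≤ Real.log W.card := by
    refine HH_le_log_card (MC_IT hT.measurable hg n) W fun w hw => ?_
    have : IT T g n ⁻¹' {w} = ∅ := by
      ext x
      simp only [mem_preimage, mem_singleton_iff, mem_empty_iff_false, iff_false]
      intro hx
      exact hw (by simp only [hW, Finset.mem_filter, Finset.mem_univ, true_and]; exact ⟨x, hx⟩)
    simp [PR, this]
  have hspan : ∃ E : Finset X, (E.card : ℝ) ≤ C * Real.exp (b * n) ∧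
      ∀ x, ∃ e ∈ E, ∀ i < n, dist (T^[i] x) (T^[i] e) ≤ δ / 3 := by
    obtain ⟨E, -, hE2, hE3⟩ := exists_span (T := T) (n := n) (ε := δ / 3) (K := univ) (by linarith)
      (N := C * Real.exp (b * n)) (fun E hE hs => hC n E hE hs)
    exact ⟨E, hE2, fun x => hE3 x trivial⟩
  obtain ⟨E, hE1, hE2⟩ := hspan
  have h2 : (W.card : ℝ) ≤ E.card * (2 ^ n : ℝ) := by
    refine count_cover W E (fun w e => ∃ x, IT T g n x = w ∧ ∀ i < n, dist (T^[i] x) (T^[i] e) ≤ δ / 3) ?_ ?_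
    · intro w hw
      simp only [hW, Finset.mem_filter, Finset.mem_univ, true_and] at hw
      obtain ⟨x, hx⟩ := hw
      obtain ⟨e, he, h⟩ := hE2 x
      exact ⟨e, he, x, hx, h⟩
    · intro e he B hB hR
      set S : Fin n → Finset (Option ι) := fun i => B.image fun w => w i with hS
      have h3 : B ⊆ Fintype.piFinset S := by
        intro w hw
        rw [Fintype.mem_piFinset]
        exact fun i => Finset.mem_image_of_mem _ hw
      suffices B.card ≤ 2 ^ n by exact_mod_cast this
      refine (Finset.card_le_card h3).trans ?_
      rw [Fintype.card_piFinset]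
      refine (Finset.prod_le_prod' (g := fun _ => 2) fun i _ => ?_).trans (by simp)
      have h4 : ((S i).erase none).card ≤ 1 := by
        rw [Finset.card_le_one]
        intro u hu v hv
        rw [Finset.mem_erase] at hu hv
        obtain ⟨p, hp⟩ := Option.ne_none_iff_exists'.1 hu.1
        obtain ⟨q, hq⟩ := Option.ne_none_iff_exists'.1 hv.1
        obtain ⟨w, hw, hwu⟩ := Finset.mem_image.1 hu.2
        obtain ⟨w', hw', hwv⟩ := Finset.mem_image.1 hv.2
        obtain ⟨x, hx, hxe⟩ := hR w hw
        obtain ⟨x', hx', hxe'⟩ := hR w' hw'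
        by_contra hne
        have hgx : g (T^[i] x) = some p := by
          rw [← hp, ← hwu, ← hx]; rfl
        have hgx' : g (T^[i] x') = some q := by
          rw [← hq, ← hwv, ← hx']; rfl
        have h5 := hsep _ _ p q hgx hgx' (fun e => hne (by rw [hp, hq, e]))
        have h6 := dist_triangle_right (T^[i] x) (T^[i] x') (T^[i] e)
        have h7 := hxe i i.2
        have h8 := hxe' i i.2
        linarith
      have h5 : (S i).card - 1 ≤ ((S i).erase none).card := Finset.pred_card_le_card_erase
      omega
  have hWpos : 0 < W.card := by
    obtain ⟨x⟩ := hX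
    refine Finset.card_pos.2 ⟨IT T g n x, ?_⟩
    simp only [hW, Finset.mem_filter, Finset.mem_univ, true_and]
    exact ⟨x, rfl⟩
  have h3 : (W.card : ℝ) ≤ C * Real.exp (b * n) * 2 ^ n := by
    exact h2.trans (mul_le_mul_of_nonneg_right hE1 (by positivity))
  have hWp : (0:ℝ) < W.card := by exact_mod_cast hWpos
  have hCp : 0 < C := by
    by_contra hC0
    have : C * Real.exp (b * n) ≤ 0 := mul_nonpos_of_nonpos_of_nonneg (not_lt.1 hC0) (Real.exp_pos _).le
    have := mul_nonpos_of_nonpos_of_nonneg this (show (0:ℝ) ≤ 2 ^ n by positivity)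
    linarith
  have h4 := Real.log_le_log hWp h3
  rw [Real.log_mul (by positivity) (by positivity), Real.log_mul hCp.ne' (by positivity), Real.log_exp,
    Real.log_pow] at h4
  linarith

theorem ks_finite [MetricSpace X] [CompactSpace X] [MeasurableSpace X] [BorelSpace X]
    {T : X → X} (hT : Continuous T) {b : ℝ} (hb : ∀ ε > 0, GB T ε univ b)
    (ν : Measure X) [IsProbabilityMeasure ν] (hν : ν.map T = ν) :
    ksEntropy T ν ≤ ((b + Real.log 2 + 2 : ℝ) : EReal) := by
  refine ks_le fun P c hc => ?_
  obtain ⟨g, hg, -, ⟨δ, hδ, hsep⟩, hCH⟩ := approx_code ν hc one_pos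
  obtain ⟨C, hC⟩ := goodwyn hT hb ν hg hδ hsep
  obtain ⟨n, hn⟩ := exists_nat_ge C
  refine (iInf_le _ n).trans ?_
  rw [EReal.coe_le_coe_iff, div_le_iff₀ (by positivity)]
  have h1 := HH_IT_le hT.measurable hν hc hg (n + 1)
  have h2 := hC (n + 1)
  push_cast at h1 h2
  nlinarith

theorem ks_nonneg {Ω : Type*} [MeasurableSpace Ω] {T : Ω → Ω} (hT : Measurable T) {μ : Measure Ω}
    [IsProbabilityMeasure μ] : 0 ≤ ksEntropy T μ := by
  have hu : MC (fun _ : Ω => ()) := fun i => by simp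
  have := ks_ge (T := T) (μ := μ) hu (c := 0) (fun n => by
    have h1 := CH_nonneg (μ := μ) (MC_IT hT hu (n + 1)) hu
    have h2 : HH μ (fun x => (IT T (fun _ => ()) (n + 1) x, ())) = HH μ (IT T (fun _ => ()) (n + 1)) :=
      HH_congr (MC_IT hT hu _) ((MC_IT hT hu _).prod hu) (by simp)
    unfold CH at h1
    rw [h2, HH_unit] at h1
    linarith)
  simpa using this

theorem exists_unif {Ω : Type*} [MeasurableSpace Ω] [MeasurableSingletonClass Ω] (E : Finset Ω) (hE : E.Nonempty) :
    ∃ σ : Measure Ω, IsProbabilityMeasure σ ∧ (∀ᵐ x ∂σ, x ∈ E) ∧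
      ∀ A, MeasurableSet A → (∀ x ∈ E, ∀ y ∈ E, x ∈ A → y ∈ A → x = y) → σ.real A ≤ 1 / E.card := by
  classical
  have hN : (E.card : ℝ≥0∞) ≠ 0 := by exact_mod_cast hE.card_pos.ne'
  have hN2 : (E.card : ℝ≥0∞) ≠ ⊤ := by simp
  set σ : Measure Ω := (E.card : ℝ≥0∞)⁻¹ • ∑ x ∈ E, Measure.dirac x with hσ
  have hval : ∀ A, MeasurableSet A → σ A = (E.card : ℝ≥0∞)⁻¹ * ((E.filter fun x => x ∈ A).card : ℝ≥0∞) := by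
    intro A hA
    rw [hσ, Measure.smul_apply, Measure.finsetSum_apply, smul_eq_mul]
    congr 1
    rw [Finset.sum_congr rfl fun x _ => Measure.dirac_apply' x hA]
    simp [Set.indicator_apply]
  refine ⟨σ, ⟨?_⟩, ?_, ?_⟩
  · rw [hval _ MeasurableSet.univ]
    simp [ENNReal.inv_mul_cancel hN hN2]
  · rw [ae_iff]
    have : {x | x ∉ E} = (↑E : Set Ω)ᶜ := by ext x; simp
    rw [this, hval _ E.measurableSet.compl]
    simp
  · intro A hA h
    have h1 : (E.filter fun x => x ∈ A).card ≤ 1 := by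
      rw [Finset.card_le_one]
      intro x hx y hy
      rw [Finset.mem_filter] at hx hy
      exact h x hx.1 y hy.1 hx.2 hy.2
    have h2 : σ A ≤ (E.card : ℝ≥0∞)⁻¹ := by
      rw [hval A hA]
      calc _ ≤ (E.card : ℝ≥0∞)⁻¹ * 1 := by gcongr; exact_mod_cast h1
        _ = _ := mul_one _
    have h3 := ENNReal.toReal_mono (ENNReal.inv_ne_top.2 hN) h2
    rw [ENNReal.toReal_inv, ENNReal.toReal_natCast] at h3
    rw [one_div]
    exact h3

theorem HH_ge {Ω ι : Type*} [MeasurableSpace Ω] [Fintype ι] {μ : Measure Ω} [IsProbabilityMeasure μ] {f : Ω → ι}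
    (hf : MC f) {N : ℝ} (hN : 0 < N) (h : ∀ i, PR μ f i ≤ 1 / N) : Real.log N ≤ HH μ f := by
  have : Real.log N = ∑ i, PR μ f i * Real.log N := by rw [← Finset.sum_mul, PR_sum hf, one_mul]
  rw [this]
  unfold HH
  refine Finset.sum_le_sum fun i _ => ?_
  rcases (PR_nonneg (μ := μ) (f := f) i).eq_or_lt with h0 | h0
  · rw [← h0]; simp
  · have h1 := Real.log_le_log h0 (h i)
    rw [one_div, Real.log_inv] at h1
    rw [Real.negMulLog]
    nlinarith

theorem IT_add_iff {Ω ι : Type*} {T : Ω → Ω} {f : Ω → ι} {t m : ℕ} {x y : Ω}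
    (h1 : IT T f t x = IT T f t y) (h2 : IT T f m (T^[t] x) = IT T f m (T^[t] y)) :
    IT T f (t + m) x = IT T f (t + m) y := by
  funext i
  by_cases hi : (i : ℕ) < t
  · exact congrFun h1 ⟨i, hi⟩
  · have h3 := congrFun h2 ⟨i - t, by omega⟩
    simp only [IT, ← Function.iterate_add_apply] at h3 ⊢
    have : (i : ℕ) - t + t = i := by omega
    rwa [this] at h3

theorem window {Ω ι : Type*} [MeasurableSpace Ω] [Fintype ι] {T : Ω → Ω} (hT : Measurable T)
    {σ : Measure Ω} [IsProbabilityMeasure σ] {f : Ω → ι} (hf : MC f) (m n : ℕ) :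
    m * (HH σ (IT T f n) - HH σ (IT T f m)) ≤
      ∑ t ∈ Finset.range n, HH σ (fun x => IT T f m (T^[t] x)) := by
  set D : ℕ → ℝ := fun t => HH σ (IT T f t) with hD
  have h1 : ∀ t, D (t + m) ≤ D t + HH σ (fun x => IT T f m (T^[t] x)) := by
    intro t
    have hm : MC fun x => IT T f m (T^[t] x) := (MC_IT hT hf m).comp_meas (hT.iterate t)
    refine le_trans ?_ (HH_pair_le (MC_IT hT hf t) hm)
    refine HH_mono ((MC_IT hT hf t).prod hm) fun x y h => ?_
    obtain ⟨h1, h2⟩ := Prod.mk.inj h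
    exact IT_add_iff h1 h2
  have hmono : ∀ a b, a ≤ b → D a ≤ D b := by
    intro a b hab
    refine HH_mono (MC_IT hT hf b) fun x y h => ?_
    funext i
    exact congrFun h ⟨i, lt_of_lt_of_le i.2 hab⟩
  have h2 : ∑ t ∈ Finset.range n, D (t + m) ≤ ∑ t ∈ Finset.range n, D t +
      ∑ t ∈ Finset.range n, HH σ (fun x => IT T f m (T^[t] x)) := by
    rw [← Finset.sum_add_distrib]
    exact Finset.sum_le_sum fun t _ => h1 t
  have h3 := Finset.sum_range_add D n m
  have h4 := Finset.sum_range_add D m n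
  rw [add_comm m n] at h4
  have h5 : ∑ t ∈ Finset.range n, D (m + t) = ∑ t ∈ Finset.range n, D (t + m) :=
    Finset.sum_congr rfl fun t _ => by rw [add_comm]
  have h6 : (m : ℝ) * D n ≤ ∑ t ∈ Finset.range m, D (n + t) := by
    have : ∑ t ∈ Finset.range m, D n ≤ ∑ t ∈ Finset.range m, D (n + t) :=
      Finset.sum_le_sum fun t _ => hmono _ _ (by omega)
    simpa using this
  have h7 : ∑ t ∈ Finset.range m, D t ≤ m * D m := by
    have : ∑ t ∈ Finset.range m, D t ≤ ∑ t ∈ Finset.range m, D m :=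
      Finset.sum_le_sum fun t ht => hmono _ _ (Finset.mem_range.1 ht).le
    simpa using this
  have h8 : (m : ℝ) * (D n - D m) = m * D n - m * D m := by ring
  change (m : ℝ) * (D n - D m) ≤ _
  linarith

theorem HH_const {Ω ι : Type*} [MeasurableSpace Ω] [Fintype ι] {μ : Measure Ω} [IsProbabilityMeasure μ] {f : Ω → ι}
    (hf : MC f) (i₀ : ι) (h : ∀ᵐ x ∂μ, f x = i₀) : HH μ f ≤ 0 := by
  have := HH_le_log_card (μ := μ) hf {i₀} (by
    intro i hi
    have hi' : i ≠ i₀ := by simpa using hi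
    unfold PR
    rw [measureReal_eq_zero_iff]
    refine measure_mono_null ?_ (ae_iff.1 h)
    intro x hx
    have hx' : f x = i := hx
    simp [hx', hi'])
  simpa using this

theorem exists_avg {Ω : Type*} [MeasurableSpace Ω] [TopologicalSpace Ω] [BorelSpace Ω]
    {T : Ω → Ω} (hT : Continuous T) (σ : Measure Ω) [IsProbabilityMeasure σ]
    {n : ℕ} (hn : 0 < n) :
    ∃ μ : ProbabilityMeasure Ω,
      (∀ A, MeasurableSet A → (μ : Measure Ω).real A =
        (1 / (n : ℝ)) * ∑ t ∈ Finset.range n, (σ.map T^[t]).real A) ∧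
      ∀ φ : BoundedContinuousFunction Ω ℝ,
        |∫ x, φ (T x) ∂(μ : Measure Ω) - ∫ x, φ x ∂(μ : Measure Ω)| ≤ 2 * ‖φ‖ / n := by
  have hTm : Measurable T := hT.measurable
  have hN : (n : ℝ≥0∞) ≠ 0 := by exact_mod_cast hn.ne'
  have hN2 : (n : ℝ≥0∞) ≠ ⊤ := by simp
  have hp : ∀ t, IsProbabilityMeasure (σ.map T^[t]) := fun t =>
    Measure.isProbabilityMeasure_map (hTm.iterate t).aemeasurable
  set μ : Measure Ω := (n : ℝ≥0∞)⁻¹ • ∑ t ∈ Finset.range n, σ.map T^[t] with hμ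
  have hμp : IsProbabilityMeasure μ := by
    refine ⟨?_⟩
    rw [hμ, Measure.smul_apply, Measure.finsetSum_apply]
    simp [ENNReal.inv_mul_cancel hN hN2]
  have hreal : ∀ A, μ.real A = (1 / (n : ℝ)) * ∑ t ∈ Finset.range n, (σ.map T^[t]).real A := by
    intro A
    unfold Measure.real
    rw [hμ, Measure.smul_apply, Measure.finsetSum_apply, smul_eq_mul, ENNReal.toReal_mul, ENNReal.toReal_inv,
      ENNReal.toReal_natCast, ENNReal.toReal_sum fun t _ => measure_ne_top _ _, one_div]
  have hint : ∀ φ : BoundedContinuousFunction Ω ℝ, ∫ x, φ x ∂μ =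
      (n : ℝ)⁻¹ * ∑ t ∈ Finset.range n, ∫ x, φ (T^[t] x) ∂σ := by
    intro φ
    rw [hμ, integral_smul_measure, integral_finsetSum_measure fun t _ => φ.integrable _]
    rw [smul_eq_mul, ENNReal.toReal_inv, ENNReal.toReal_natCast]
    congr 1
    refine Finset.sum_congr rfl fun t _ => ?_
    rw [integral_map (hTm.iterate t).aemeasurable φ.continuous.measurable.aestronglyMeasurable]
  refine ⟨⟨μ, hμp⟩, fun A _ => hreal A, fun φ => ?_⟩
  change |∫ x, φ (T x) ∂μ - ∫ x, φ x ∂μ| ≤ _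
  have h1 : ∫ x, φ (T x) ∂μ = (n : ℝ)⁻¹ * ∑ t ∈ Finset.range n, ∫ x, φ (T^[t + 1] x) ∂σ := by
    have := hint (φ.compContinuous ⟨T, hT⟩)
    simp only [BoundedContinuousFunction.compContinuous_apply, ContinuousMap.coe_mk] at this
    rw [this]
    simp only [Function.iterate_succ_apply']
  rw [h1, hint φ, ← mul_sub, ← Finset.sum_sub_distrib,
    Finset.sum_range_sub (fun t => ∫ x, φ (T^[t] x) ∂σ), abs_mul, abs_of_nonneg (by positivity : (0:ℝ) ≤ (n : ℝ)⁻¹)]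
  have hb : ∀ t, |∫ x, φ (T^[t] x) ∂σ| ≤ ‖φ‖ := by
    intro t
    have h3 := norm_integral_le_of_norm_le_const (μ := σ) (f := fun x => φ (T^[t] x)) (C := ‖φ‖)
      (Eventually.of_forall fun x => φ.norm_coe_le_norm _)
    simpa using h3
  have h4 : |∫ x, φ (T^[n] x) ∂σ - ∫ x, φ (T^[0] x) ∂σ| ≤ 2 * ‖φ‖ := by
    refine (abs_sub _ _).trans ?_
    have := hb n
    have := hb 0
    linarith
  rw [div_eq_inv_mul]
  exact mul_le_mul_of_nonneg_left h4 (by positivity)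

theorem exists_ballcode {X : Type*} [MetricSpace X] [CompactSpace X] [MeasurableSpace X] [BorelSpace X]
    (μ : Measure X) [IsProbabilityMeasure μ] {ε : ℝ} (hε : 0 < ε) :
    ∃ (ι : Type) (_ : Fintype ι) (f : X → ι), MC f ∧ LC μ f ∧ ∀ x y, f x = f y → dist x y ≤ ε := by
  classical
  have hr : ∀ x, ∃ r ∈ Set.Ioo (0:ℝ) (ε / 2), μ (frontier (Metric.thickening r {x})) = 0 := fun x =>
    exists_null_frontier_thickening μ {x} (by linarith)
  choose r hr hrf using hr
  obtain ⟨t, ht⟩ := isCompact_univ.elim_finite_subcover (fun x => Metric.thickening (r x) {x})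
    (fun x => Metric.isOpen_thickening) (fun x _ => mem_iUnion.2
      ⟨x, Metric.self_subset_thickening (hr x).1 _ rfl⟩)
  let e := t.equivFin.symm
  refine ⟨Fin t.card → Prop, inferInstance, fun x i => x ∈ Metric.thickening (r (e i)) {(e i : X)},
    MC.of_sets (B := fun i => Metric.thickening (r (e i)) {(e i : X)}) fun i => Metric.isOpen_thickening.measurableSet,
    LC.of_frontier (B := fun i => Metric.thickening (r (e i)) {(e i : X)}) fun i => hrf _, ?_⟩
  intro x y hxy
  obtain ⟨z, hz, hxz⟩ := mem_iUnion₂.1 (ht (mem_univ x))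
  have h1 := congrFun hxy (t.equivFin ⟨z, hz⟩)
  have h2 : (e (t.equivFin ⟨z, hz⟩)) = ⟨z, hz⟩ := by simp [e]
  simp only [h2, eq_iff_iff] at h1
  have h3 := h1.1 hxz
  rw [Metric.thickening_singleton, Metric.mem_ball] at h3 hxz
  have := (hr z).2
  have := dist_triangle_right x y z
  linarith

theorem LC_IT {Ω ι : Type*} [MeasurableSpace Ω] [TopologicalSpace Ω] [BorelSpace Ω] {T : Ω → Ω} (hT : Continuous T)
    {μ : Measure Ω} (hμ : μ.map T = μ) {f : Ω → ι} (hf : LC μ f) (n : ℕ) : LC μ (IT T f n) :=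
  LC.pi (f := fun (i : Fin n) x => f (T^[i] x)) fun i => LC.comp (hT.iterate i) (hT.measurable.iterate i)
    (by rw [map_iter hT.measurable hμ]; exact hf)

theorem IT_semiconj {Ω Ω' κ : Type*} {T' : Ω → Ω} {T : Ω' → Ω'} {π : Ω → Ω'} (hc : Function.Semiconj π T' T)
    (g : Ω' → κ) (m : ℕ) (x : Ω) : IT T' (fun x => g (π x)) m x = IT T g m (π x) := by
  funext i
  simp only [IT]
  rw [(hc.iterate_right i).eq]

theorem key_measure {X' : Type*} {X : Type*}
    [MetricSpace X'] [CompactSpace X'] [MeasurableSpace X'] [BorelSpace X']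
    [MetricSpace X] [CompactSpace X] [MeasurableSpace X] [BorelSpace X]
    {T' : X' → X'} {T : X → X} {π : X' → X} (hT' : Continuous T') (hπ : Continuous π)
    (hT : Continuous T) (hc : Function.Semiconj π T' T) {y : X} {ε : ℝ} (hε : 0 < ε) {b : ℝ}
    (hGB : ¬ GB T' ε (π ⁻¹' {y}) b) :
    ∃ μ : Measure X', IsProbabilityMeasure μ ∧ μ.map T' = μ ∧
      ∃ (ι : Type) (_ : Fintype ι) (f : X' → ι), MC f ∧
      ∀ (P : Finset (Set X)) (g : X → Option {A // A ∈ P}), MC g → LC (μ.map π) g → ∀ m : ℕ,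
        m * b + HH (μ.map π) (IT T g m) ≤ HH μ (IT T' (fun x => (f x, g (π x))) m) := by
  have hTm : Measurable T' := hT'.measurable
  have hlarge := fun k : ℕ => notGB_large hT' hε hGB (k + 1)
  choose n hn E hEK hEsep hEcard using hlarge
  have hnpos : ∀ k, 0 < n k := fun k => by have := hn k; omega
  have hEpos : ∀ k, 0 < ((E k).card : ℝ) := fun k => (Real.exp_pos _).trans (hEcard k)
  have hEne : ∀ k, (E k).Nonempty := fun k => Finset.card_pos.1 (by exact_mod_cast hEpos k)
  choose σ hσp hσE hσA using fun k => exists_unif (E k) (hEne k)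
  choose μs hμs hμinv using fun k => exists_avg hT' (σ k) (hnpos k)
  -- a limit point
  obtain ⟨μ, -, hμ⟩ := isCompact_univ.ultrafilter_le_nhds ((Filter.hyperfilter ℕ).map μs) (by simp)
  have hlim : Tendsto μs (Filter.hyperfilter ℕ : Filter ℕ) (𝓝 μ) := hμ
  have hU : (Filter.hyperfilter ℕ : Filter ℕ) ≤ atTop := Nat.hyperfilter_le_atTop
  have hn1 : Tendsto (fun k => (n k : ℝ)) atTop atTop := by
    refine tendsto_natCast_atTop_atTop.comp (tendsto_atTop_mono (fun k => ?_) tendsto_id)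
    have := hn k
    simp only [id]; omega
  have hinv : (μ : Measure X').map T' = μ := by
    have := Measure.isProbabilityMeasure_map (μ := (μ : Measure X')) hTm.aemeasurable
    refine ext_of_forall_integral_eq_of_IsFiniteMeasure fun φ => ?_
    rw [integral_map hTm.aemeasurable φ.continuous.measurable.aestronglyMeasurable]
    have h1 := (ProbabilityMeasure.tendsto_iff_forall_integral_tendsto.1 hlim) φ
    have h2 := (ProbabilityMeasure.tendsto_iff_forall_integral_tendsto.1 hlim) (φ.compContinuous ⟨T', hT'⟩)
    simp only [BoundedContinuousFunction.compContinuous_apply, ContinuousMap.coe_mk] at h2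
    have h3 := h2.sub h1
    have h4 : Tendsto (fun k => ∫ x, φ (T' x) ∂(μs k : Measure X') - ∫ x, φ x ∂(μs k : Measure X'))
        (Filter.hyperfilter ℕ : Filter ℕ) (𝓝 0) := by
      refine squeeze_zero_norm (fun k => hμinv k φ) ?_
      exact (tendsto_const_nhds.div_atTop hn1).mono_left hU
    exact sub_eq_zero.1 (tendsto_nhds_unique h3 h4)
  refine ⟨μ, inferInstance, hinv, ?_⟩
  obtain ⟨ι, hι, f, hf, hfL, hfd⟩ := exists_ballcode (μ : Measure X') hε
  refine ⟨ι, hι, f, hf, fun P g hg hgL m => ?_⟩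
  have hG : MC fun x => g (π x) := hg.comp_meas hπ.measurable
  have hGL : LC (μ : Measure X') fun x => g (π x) := LC.comp hπ hπ.measurable hgL
  set G : X' → Option {A // A ∈ P} := fun x => g (π x) with hGdef
  have hfm := MC_IT hTm hf m
  have hGm := MC_IT hTm hG m
  have e1 : HH (μ : Measure X') (IT T' (fun x => (f x, G x)) m) =
      HH (μ : Measure X') (fun x => (IT T' f m x, IT T' G m x)) :=
    HH_congr (hfm.prod hGm) (MC_IT hTm (hf.prod hG) m) fun x y => by
      simp only [IT, Prod.mk.injEq, funext_iff]
      exact ⟨fun h i => ⟨h.1 i, h.2 i⟩, fun h => ⟨fun i => (h i).1, fun i => (h i).2⟩⟩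
  have hgm : MC (IT T g m) := by
    exact MC_IT hT.measurable hg m
  have e2 : HH ((μ : Measure X').map π) (IT T g m) = HH (μ : Measure X') (IT T' G m) := by
    rw [HH_map hπ.measurable hgm]
    congr 1
    funext x
    exact (IT_semiconj hc g m x).symm
  have e3 : HH (μ : Measure X') (fun x => (IT T' f m x, IT T' G m x)) =
      CH (μ : Measure X') (IT T' f m) (IT T' G m) + HH (μ : Measure X') (IT T' G m) := by
    unfold CH; ring
  rw [e1, e2, e3]
  suffices (m : ℝ) * b ≤ CH (μ : Measure X') (IT T' f m) (IT T' G m) by linarith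
  have hCHlim := CH_tendsto hlim (LC_IT hT' hinv hfL m) (LC_IT hT' hinv hGL m)
  set K : ℝ := Real.log (Fintype.card (Fin m → ι)) with hK
  have hlow : ∀ k, (m : ℝ) * b - m * K / n k ≤ CH (μs k : Measure X') (IT T' f m) (IT T' G m) := by
    intro k
    have hσk := hσp k
    have hnk : (0:ℝ) < n k := by exact_mod_cast hnpos k
    refine le_trans ?_ (CH_concave (c := 1 / (n k : ℝ)) (N := n k) (by positivity) (fun t => (σ k).map T'^[t])
      (hμs k) hfm hGm)
    have hD : b * n k ≤ HH (σ k) (IT T' f (n k)) := by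
      have h1 := HH_ge (μ := σ k) (MC_IT hTm hf (n k)) (hEpos k) (fun w => by
        refine hσA k _ (MC_IT hTm hf (n k) w) fun x hx z hz hxw hzw => ?_
        by_contra hne
        obtain ⟨i, hi, hd⟩ := hEsep k hx hz hne
        have h2 : IT T' f (n k) x = IT T' f (n k) z := by
          have h3 : IT T' f (n k) x = w := hxw
          have h4 : IT T' f (n k) z = w := hzw
          rw [h3, h4]
        have h5 := hfd _ _ (congrFun h2 ⟨i, hi⟩)
        exact absurd h5 (not_le.2 hd))
      have h2 := Real.log_le_log (Real.exp_pos _) (hEcard k).le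
      rw [Real.log_exp] at h2
      linarith
    have hDm : HH (σ k) (IT T' f m) ≤ K := by
      have := HH_le_log_card (μ := σ k) hfm Finset.univ (by simp)
      rwa [Finset.card_univ] at this
    have hw := window (σ := σ k) hTm hf m (n k)
    have hterm : ∀ t, HH (σ k) (fun x => IT T' f m (T'^[t] x)) ≤
        CH ((σ k).map T'^[t]) (IT T' f m) (IT T' G m) := by
      intro t
      have hfmt : MC fun x => IT T' f m (T'^[t] x) := hfm.comp_meas (hTm.iterate t)
      have hGmt : MC fun x => IT T' G m (T'^[t] x) := hGm.comp_meas (hTm.iterate t)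
      rw [CH_map (hTm.iterate t) hfm hGm]
      have h1 : HH (σ k) (fun x => IT T' G m (T'^[t] x)) ≤ 0 := by
        refine HH_const hGmt (IT T g m (T^[t] y)) ?_
        filter_upwards [hσE k] with x hx
        have hxy : π x = y := hEK k hx
        rw [hGdef, IT_semiconj hc g m, (hc.iterate_right t).eq, hxy]
      have h2 : HH (σ k) (fun x => IT T' f m (T'^[t] x)) ≤
          HH (σ k) (fun x => (IT T' f m (T'^[t] x), IT T' G m (T'^[t] x))) :=
        HH_mono (hfmt.prod hGmt) fun x z h => (Prod.mk.inj h).1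
      unfold CH
      linarith
    have hsum := Finset.sum_le_sum fun t (_ : t ∈ Finset.range (n k)) => hterm t
    have h9 : (m : ℝ) * (b * n k - K) ≤ ∑ t ∈ Finset.range (n k), CH ((σ k).map T'^[t]) (IT T' f m) (IT T' G m) := by
      refine le_trans (mul_le_mul_of_nonneg_left ?_ (Nat.cast_nonneg m)) (hw.trans hsum)
      linarith
    have h10 := mul_le_mul_of_nonneg_left h9 (by positivity : (0:ℝ) ≤ 1 / (n k : ℝ))
    refine le_trans (le_of_eq ?_) h10
    field_simp
  have hlowlim : Tendsto (fun k => (m : ℝ) * b - m * K / n k) (Filter.hyperfilter ℕ : Filter ℕ) (𝓝 (m * b - 0)) :=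
    tendsto_const_nhds.sub ((tendsto_const_nhds.div_atTop hn1).mono_left hU)
  rw [sub_zero] at hlowlim
  exact le_of_tendsto_of_tendsto' hlowlim hCHlim hlow

theorem zero_fiber {X' : Type*} {X : Type*}
    [MetricSpace X'] [CompactSpace X'] [MeasurableSpace X'] [BorelSpace X']
    [MetricSpace X] [CompactSpace X] [MeasurableSpace X] [BorelSpace X]
    {T' : X' → X'} {T : X → X} {π : X' → X} (hT' : Continuous T') (hT : Continuous T) (hπ : Continuous π)
    (hc : Function.Semiconj π T' T) (hpr : IsPrincipal T' T π) (hfin : subEnt T (univ : Set X) < ⊤)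
    (y : X) (ε : ℝ) (hε : 0 < ε) (b : ℝ) (hb : 0 < b) : GB T' ε (π ⁻¹' {y}) b := by
  by_contra hGB
  obtain ⟨μ, hμp, hμinv, ι, hι, f, hf, hkey⟩ := key_measure hT' hπ hT hc hε hGB
  have hν : IsProbabilityMeasure (μ.map π) := Measure.isProbabilityMeasure_map hπ.measurable.aemeasurable
  have hνinv : (μ.map π).map T = μ.map π := by
    rw [Measure.map_map hT.measurable hπ.measurable, ← hc.comp_eq, ← Measure.map_map hπ.measurable hT'.measurable,
      hμinv]
  have heq := hpr μ hμp hμinv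
  obtain ⟨a, ha⟩ : ∃ a : ℝ, subEnt T (univ : Set X) ≤ (a : EReal) := by
    obtain ⟨a, ha, -⟩ := EReal.lt_iff_exists_real_btwn.1 hfin
    exact ⟨a, ha.le⟩
  have hfinite := ks_finite hT (b := a + 1) (fun ε hε => (subEnt_le_iff hT).1 ha ε hε (a + 1) (by linarith))
    (μ.map π) hνinv
  have hnn := ks_nonneg hT.measurable (μ := μ.map π)
  obtain ⟨h, hh⟩ : ∃ h : ℝ, ksEntropy T (μ.map π) = (h : EReal) := by
    refine ⟨(ksEntropy T (μ.map π)).toReal, (EReal.coe_toReal ?_ ?_).symm⟩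
    · exact (hfinite.trans_lt (EReal.coe_lt_top _)).ne
    · exact (lt_of_lt_of_le (by simp) hnn).ne'
  rw [hh] at heq
  have hle : ksEntropy T (μ.map π) ≤ ((h - b / 2 : ℝ) : EReal) := by
    refine ks_le fun P c hcM => ?_
    by_contra hcon
    rw [not_le] at hcon
    obtain ⟨g, hg, hgL, -, hCH⟩ := approx_code (μ.map π) hcM (η := b / 4) (by linarith)
    have h1 : ((h + b / 4 : ℝ) : EReal) ≤ ksEntropy T' μ := by
      refine ks_ge (hf.prod (hg.comp_meas hπ.measurable)) fun n => ?_
      have h2 := hcon.le.trans (iInf_le _ n)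
      rw [EReal.coe_le_coe_iff, le_div_iff₀ (by positivity)] at h2
      have h3 := HH_IT_le hT.measurable hνinv hcM hg (n + 1)
      have h4 := hkey P g hg hgL (n + 1)
      push_cast at h3 h4
      have h5 := mul_le_mul_of_nonneg_left hCH (by positivity : (0:ℝ) ≤ (n : ℝ) + 1)
      nlinarith
    rw [heq, EReal.coe_le_coe_iff] at h1
    linarith
  rw [hh, EReal.coe_le_coe_iff] at hle
  linarith

/-- A principal factor map `π : (X',T') → (X,T)` between TDSs with
`h_top(T,X) < ∞` preserves asymptotic `h`-expansiveness, lowerability, hereditary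
lowerability and the HUL property. -/
theorem principal_extension_preserves {X' X : Type*}
    [MetricSpace X'] [CompactSpace X'] [MeasurableSpace X'] [BorelSpace X']
    [MetricSpace X] [CompactSpace X] [MeasurableSpace X] [BorelSpace X]
    (T' : X' ≃ₜ X') (T : X ≃ₜ X) (π : X' → X) (hπc : Continuous π)
    (hπs : Function.Surjective π) (hcomm : π ∘ ⇑T' = ⇑T ∘ π)
    (hpr : IsPrincipal (⇑T') (⇑T) π) (hfin : subEnt (⇑T) (univ : Set X) < ⊤) :
    (AsympHExpansive (⇑T') ↔ AsympHExpansive (⇑T)) ∧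
    (Lowerable (⇑T') ↔ Lowerable (⇑T)) ∧
    (HerLowerable (⇑T') ↔ HerLowerable (⇑T)) ∧
    (HUL (⇑T') ↔ HUL (⇑T)) := by
  have hT' : Continuous (⇑T') := T'.continuous
  have hT : Continuous (⇑T) := T.continuous
  have hc : Function.Semiconj π T' T := fun x => congrFun hcomm x
  have hR : ∀ y : X, ∀ ε : ℝ, 0 < ε → ∀ b : ℝ, 0 < b → GB (⇑T') ε (π ⁻¹' {y}) b :=
    fun y ε hε b hb => zero_fiber hT' hT hπc hc hpr hfin y ε hε b hb
  rcases isEmpty_or_nonempty X' with hX' | hX'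
  · have hX : IsEmpty X := ⟨fun x => by obtain ⟨x', -⟩ := hπs x; exact hX'.elim x'⟩
    refine ⟨?_, lowerable_iff hT' hT hπc hπs hc hR, herLowerable_iff hT' hT hπc hπs hc hR, ?_⟩
    · unfold AsympHExpansive hStar
      simp only [iSup_of_empty]
    · exact ⟨fun _ K hK => hX.elim hK.some, fun _ K hK => hX'.elim hK.some⟩
  · have hX : Nonempty X := hX'.map π
    exact ⟨⟨ahe_proj hT' hT hπc hπs hc hR, ahe_lift hT' hT hπc hc hR⟩, lowerable_iff hT' hT hπc hπs hc hR,
      herLowerable_iff hT' hT hπc hπs hc hR, hul_iff hT' hT hπc hπs hc hR hfin⟩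
end
end

section
/- Let (X,T) be a topological dynamical system and K ⊆ X a compact subset with h(T,K) > 0. Then there exists a countably infinite compact subset K_∞ ⊆ K such that h(T,K_∞) = 0. -/
open Filter Set Metric MeasureTheory
open scoped ENNReal Topology

noncomputable section

variable {X Y : Type*}

theorem subEnt_le_zero_aux {X : Type*} [MetricSpace X] (T : X → X) (K : Set X)
    (h : ∀ ε : ℝ, 0 < ε → ∃ C : ℕ, ∀ n : ℕ, ∀ E : Finset X, (E : Set X) ⊆ K →
      IsSep T n ε (E : Set X) → E.card ≤ n + C) : subEnt T K ≤ 0 := by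
  refine iSup₂_le fun ε hε => ?_
  obtain ⟨C, hC⟩ := h ε hε
  have hlim : Tendsto (fun n : ℕ => ((Real.log ((n : ℝ) + (C + 1)) / n : ℝ) : EReal)) atTop
      (𝓝 ((0 : ℝ) : EReal)) := by
    refine (continuous_coe_real_ereal.tendsto 0).comp ?_
    have h1 : Tendsto (fun x : ℝ => Real.log x / (1 * x + (-(C + 1) : ℝ))) atTop (𝓝 0) := by
      simpa using Real.tendsto_pow_log_div_mul_add_atTop 1 (-(C + 1) : ℝ) 1 one_ne_zero
    have h2 : Tendsto (fun n : ℕ => (n : ℝ) + (C + 1)) atTop atTop :=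
      tendsto_atTop_add_const_right _ _ tendsto_natCast_atTop_atTop
    refine (h1.comp h2).congr fun n => ?_
    simp only [Function.comp]
    congr 1
    ring
  have : sepEnt T ε K ≤ ((0 : ℝ) : EReal) := by
    rw [← hlim.limsup_eq]
    refine limsup_le_limsup (Eventually.of_forall fun n => ?_)
    have hb : sepMaxCard T n ε K ≤ ENNReal.ofReal ((n : ℝ) + (C + 1)) := by
      refine iSup₂_le fun E hE => ?_
      have := hC n E hE.1 hE.2
      rw [← ENNReal.ofReal_natCast]
      apply ENNReal.ofReal_le_ofReal
      have : (E.card : ℝ) ≤ n + C := by exact_mod_cast this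
      linarith
    have hl := ENNReal.log_monotone hb
    rw [ENNReal.log_ofReal_of_pos (by positivity)] at hl
    refine (EReal.div_le_div_right_of_nonneg (by positivity) hl).trans (le_of_eq ?_)
    push_cast
    rfl
  simpa using this

theorem subEnt_nonneg_aux {X : Type*} [MetricSpace X] (T : X → X) (K : Set X)
    (h : K.Nonempty) : 0 ≤ subEnt T K := by
  obtain ⟨x, hx⟩ := h
  refine le_trans ?_ (le_iSup₂ (f := fun (ε : ℝ) (_ : 0 < ε) => sepEnt T ε K) 1 one_pos)
  refine le_limsup_of_frequently_le (Frequently.of_forall fun n => ?_)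
  apply EReal.div_nonneg _ (by positivity)
  have : (1 : ℝ≥0∞) ≤ sepMaxCard T n 1 K := by
    refine le_trans ?_ (le_iSup₂ (f := fun (E : Finset X)
      (_ : ↑E ⊆ K ∧ IsSep T n 1 (↑E : Set X)) => (E.card : ℝ≥0∞)) {x} ⟨by simpa using hx, ?_⟩)
    · simp
    · simp [IsSep]
  simpa using ENNReal.log_monotone this

/-- If `K` is a compact subset with `h(T,K) > 0`, then there is a countably
infinite compact subset `K_∞ ⊆ K` with `h(T,K_∞) = 0`. -/
theorem exists_countable_compact_zero_entropy {X : Type*} [MetricSpace X] [CompactSpace X]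
    (T : X ≃ₜ X) (K : Set X) (hK : IsCompact K) (hpos : 0 < subEnt (⇑T) K) :
    ∃ Kinf : Set X, Kinf ⊆ K ∧ Kinf.Countable ∧ Kinf.Infinite ∧ IsCompact Kinf ∧
      subEnt (⇑T) Kinf = 0 := by
  classical
  have hinf : K.Infinite := by
    intro hfin
    refine absurd hpos (not_lt.2 (subEnt_le_zero_aux _ _ fun ε hε => ⟨hfin.toFinset.card, ?_⟩))
    intro n E hE _
    exact (Finset.card_le_card (fun y hy => by simpa using hE hy)).trans (Nat.le_add_left _ _)
  obtain ⟨x, hxK, hacc⟩ := hinf.exists_accPt_of_subset_isCompact hK subset_rfl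
  rw [accPt_iff_frequently] at hacc
  have hch : ∀ k : ℕ, ∃ y, y ≠ x ∧ y ∈ K ∧
      ∀ i < k + 1, dist ((⇑T)^[i] y) ((⇑T)^[i] x) < 1 / ((k : ℝ) + 1) := by
    intro k
    have hev : ∀ᶠ y in 𝓝 x, ∀ i ∈ Finset.range (k + 1),
        dist ((⇑T)^[i] y) ((⇑T)^[i] x) < 1 / ((k : ℝ) + 1) := by
      rw [Filter.eventually_all_finset]
      intro i _
      have hc : Tendsto ((⇑T)^[i]) (𝓝 x) (𝓝 ((⇑T)^[i] x)) :=
        (T.continuous.iterate i).tendsto x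
      exact (Metric.tendsto_nhds.1 hc) _ (by positivity)
    obtain ⟨y, ⟨h1, h2⟩, h3⟩ := (hacc.and_eventually hev).exists
    exact ⟨y, h1, h2, fun i hi => h3 i (Finset.mem_range.2 hi)⟩
  choose u hne huK hd using hch
  have hu : Tendsto u atTop (𝓝 x) := by
    rw [tendsto_iff_dist_tendsto_zero]
    refine squeeze_zero (fun _ => dist_nonneg) (fun k => ?_) tendsto_one_div_add_atTop_nhds_zero_nat
    simpa using (hd k 0 (Nat.succ_pos k)).le
  refine ⟨insert x (range u), ?_, (countable_range u).insert x, ?_, hu.isCompact_insert_range, ?_⟩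
  · rintro y (rfl | ⟨k, rfl⟩)
    exacts [hxK, huK k]
  · intro hfin
    have hf : (range u).Finite := hfin.subset (subset_insert _ _)
    obtain ⟨k, hk⟩ := hf.isClosed.mem_of_tendsto hu (Eventually.of_forall fun k => mem_range_self k)
    exact hne k hk
  refine le_antisymm (subEnt_le_zero_aux _ _ fun ε hε => ?_) (subEnt_nonneg_aux _ _ ⟨x, by simp⟩)
  obtain ⟨M, hM⟩ := exists_nat_one_div_lt (half_pos hε)
  refine ⟨M + 1, fun n E hE hsep => ?_⟩
  set F : Finset X := (Finset.range (n + M)).image u with hF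
  have key : ∀ y ∈ E \ F, ∀ i < n, dist ((⇑T)^[i] y) ((⇑T)^[i] x) < ε / 2 := by
    intro y hy i hi
    rw [Finset.mem_sdiff] at hy
    rcases hE hy.1 with rfl | ⟨k, rfl⟩
    · simpa using hε
    · have hk : n + M ≤ k := by
        by_contra hlt
        exact hy.2 (Finset.mem_image_of_mem u (Finset.mem_range.2 (not_le.1 hlt)))
      refine (hd k i (by omega)).trans_le (le_trans ?_ hM.le)
      have : (M : ℝ) ≤ k := by exact_mod_cast (by omega : M ≤ k)
      gcongr
  have h1 : (E \ F).card ≤ 1 := by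
    rw [Finset.card_le_one]
    intro a ha b hb
    by_contra hab
    obtain ⟨i, hi, hlt⟩ := hsep (Finset.mem_sdiff.1 ha).1 (Finset.mem_sdiff.1 hb).1 hab
    have := dist_triangle_right ((⇑T)^[i] a) ((⇑T)^[i] b) ((⇑T)^[i] x)
    linarith [key a ha i hi, key b hb i hi]
  have h2 : F.card ≤ n + M := by
    simpa using (Finset.card_image_le (s := Finset.range (n + M)) (f := u))
  have h3 := Finset.card_le_card_sdiff_add_card (s := E) (t := F)
  omega
end
end
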